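/- arXiv:1603.06444 — 5 statements merged into one kernel-verified Lean document; each statement's English description precedes it below -/
import Mathlib

section
/- Let d be a positive integer and a_0, …, a_{d-1} integers, and set N = min{a_0, …, a_{d-1}}. If N ≥ -2, then for every integer n ≥ 5d + 3, the polynomial n·x^d + a_{d-1}·x^{d-1} + ⋯ + a_1·x + a_0 is a Hilbert polynomial. -/
open Polynomial

/-- A polynomial `f ∈ ℚ[x]` is a *Hilbert polynomial* if there exist a field `k`,
a standard graded `k`-algebra `R` (a commutative `ℕ`-graded `k`-algebra with
finite-dimensional graded pieces, generated as a `k`-algebra by its degree-one part)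
and an `N₀` such that `dim_k R_i = f(i)` for all `i ≥ N₀`. -/
def IsHilbertPolynomial (f : Polynomial ℚ) : Prop :=
  ∃ (k : Type) (R : Type) (_ : Field k) (_ : CommRing R) (_ : Algebra k R)
    (𝒜 : ℕ → Submodule k R) (_ : GradedAlgebra 𝒜),
    (∀ i : ℕ, FiniteDimensional k (𝒜 i)) ∧
    Algebra.adjoin k ((𝒜 1 : Submodule k R) : Set R) = ⊤ ∧
    ∃ N₀ : ℕ, ∀ i : ℕ, N₀ ≤ i → (Module.finrank k (𝒜 i) : ℚ) = f.eval (i : ℚ)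


/-- The binomial function `x ↦ C(x+i, i)`. -/
def HB : ℕ → ℚ → ℚ
  | 0 => fun _ => 1
  | (i+1) => fun x => HB i x * (x + i + 1) / (i + 1)

theorem HB_succ (i : ℕ) (x : ℚ) : HB (i+1) x = HB i x * (x + i + 1) / (i + 1) := rfl

theorem HB_shift_mul (i : ℕ) (x : ℚ) : HB i (x+1) * (x+1) = HB i x * (x + i + 1) := by
  induction i with
  | zero => simp [HB]
  | succ i ih =>
    rw [HB_succ, HB_succ]
    have : (i:ℚ) + 1 ≠ 0 := by positivity
    push_cast
    field_simp
    linear_combination (x + i + 2) * ih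

theorem HB_pascal (i : ℕ) (x : ℚ) : HB (i+1) (x+1) = HB (i+1) x + HB i (x+1) := by
  rw [HB_succ, HB_succ]
  have : (i:ℚ) + 1 ≠ 0 := by positivity
  field_simp
  linear_combination HB_shift_mul i x

theorem HB_mul (i : ℕ) (x c : ℚ) :
    (x + c) * HB i x = (i+1) * HB (i+1) x + (c - 1 - i) * HB i x := by
  rw [HB_succ]
  have : (i:ℚ) + 1 ≠ 0 := by positivity
  field_simp
  ring

theorem HB_nat (i n : ℕ) : HB i (n:ℚ) = ((n + i).choose i : ℚ) := by
  induction i with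
  | zero => simp [HB]
  | succ i ih =>
    rw [HB_succ, ih]
    have : (i:ℚ) + 1 ≠ 0 := by positivity
    have h := Nat.add_one_mul_choose_eq (n+i) i
    have h' : ((n + i + 1 : ℕ) : ℚ) * ((n+i).choose i : ℚ)
      = ((n+i+1).choose (i+1) : ℚ) * ((i + 1 : ℕ) : ℚ) := by exact_mod_cast h
    field_simp
    push_cast at h'
    rw [← add_assoc]
    linear_combination h'

theorem HB_prod (d : ℕ) (x : ℚ) :
    (d.factorial : ℚ) * HB d x = ∏ l ∈ Finset.range d, (x + l + 1) := by
  induction d with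
  | zero => simp [HB]
  | succ i ih =>
    rw [Finset.prod_range_succ, ← ih, HB_succ, Nat.factorial_succ]
    have : (i:ℚ) + 1 ≠ 0 := by positivity
    push_cast
    field_simp

/-- Nonnegative integer combinations of `HB i`, `i < D`. -/
def HP (D : ℕ) : AddSubmonoid (ℚ → ℚ) :=
  AddSubmonoid.closure (HB '' {i | i < D})

theorem HP_mono {D E : ℕ} (h : D ≤ E) : HP D ≤ HP E := by
  apply AddSubmonoid.closure_mono
  exact Set.image_mono (fun i hi => lt_of_lt_of_le hi h)

theorem HB_mem {i D : ℕ} (h : i < D) : HB i ∈ HP D :=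
  AddSubmonoid.subset_closure ⟨i, h, rfl⟩

theorem HP_mul {D : ℕ} {f : ℚ → ℚ} (hf : f ∈ HP D) (c : ℕ) (hc : D ≤ c) :
    (fun x => (x + c) * f x) ∈ HP (D+1) := by
  induction hf using AddSubmonoid.closure_induction with
  | mem f hf =>
    obtain ⟨i, hi, rfl⟩ := hf
    have hi' : i < D := hi
    have h : (fun x => (x + c) * HB i x) = (i+1) • HB (i+1) + (c - 1 - i) • HB i := by
      funext x
      simp only [Pi.add_apply, Pi.smul_apply]
      simp only [nsmul_eq_mul]
      rw [HB_mul]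
      congr 2
      · push_cast; ring
      · rw [Nat.cast_sub (by omega), Nat.cast_sub (by omega)]; simp
    rw [h]
    exact add_mem (nsmul_mem (HB_mem (by omega)) _) (nsmul_mem (HB_mem (by omega)) _)
  | zero =>
    convert (HP (D+1)).zero_mem using 1
    funext x; simp
  | add f g _ _ hf hg =>
    convert add_mem hf hg using 1
    funext x; simp [mul_add]

theorem HB_shift_mem (i D : ℕ) (h : i < D) : (fun x => HB i (x+1)) ∈ HP D := by
  induction i with
  | zero => exact HB_mem h
  | succ i ih =>
    convert add_mem (HB_mem h) (ih (by omega)) using 1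
    funext x; simp [HB_pascal]

theorem HP_shift {D : ℕ} {f : ℚ → ℚ} (hf : f ∈ HP D) : (fun x => f (x+1)) ∈ HP D := by
  induction hf using AddSubmonoid.closure_induction with
  | mem f hf =>
    obtain ⟨i, hi, rfl⟩ := hf
    exact HB_shift_mem i D hi
  | zero => exact (HP D).zero_mem
  | add f g _ _ hf hg => exact add_mem hf hg

theorem HP_shift_nat {D : ℕ} {f : ℚ → ℚ} (hf : f ∈ HP D) (s : ℕ) :
    (fun x => f (x+s)) ∈ HP D := by
  induction s with
  | zero => simpa using hf
  | succ s ih =>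
    convert HP_shift ih using 1
    funext x; push_cast; ring_nf

theorem HB_diff1 (D : ℕ) : (fun x => HB D (x+1) - HB D x) ∈ HP D := by
  cases D with
  | zero => convert (HP 0).zero_mem using 1; funext x; simp [HB]
  | succ D =>
    convert HB_shift_mem D (D+1) (by omega) using 1
    funext x; simp [HB_pascal]

theorem HB_diff (D s t : ℕ) : (fun x => HB D (x+(s+t:ℕ)) - HB D (x+s)) ∈ HP D := by
  induction t with
  | zero => convert (HP D).zero_mem using 1; funext x; simp
  | succ t ih =>
    convert add_mem ih (HP_shift_nat (HB_diff1 D) (s+t)) using 1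
    funext x
    simp only [Pi.add_apply]
    push_cast
    ring_nf

theorem HP_split {D : ℕ} {f : ℚ → ℚ} (hf : f ∈ HP (D+1)) :
    ∃ m : ℕ, ∃ g ∈ HP D, f = m • HB D + g := by
  induction hf using AddSubmonoid.closure_induction with
  | mem f hf =>
    obtain ⟨i, hi, rfl⟩ := hf
    rcases (Nat.lt_succ_iff_lt_or_eq.mp hi) with h | h
    · exact ⟨0, _, HB_mem h, by simp⟩
    · subst h; exact ⟨1, 0, zero_mem _, by simp⟩
  | zero => exact ⟨0, 0, zero_mem _, by simp⟩
  | add f g _ _ hf hg =>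
    obtain ⟨m, a, ha, rfl⟩ := hf
    obtain ⟨m', a', ha', rfl⟩ := hg
    exact ⟨m+m', a+a', add_mem ha ha', by rw [add_smul]; abel⟩

section cone
variable {d m : ℕ}

theorem HP_pow (i : ℕ) (h : i ≤ m) : (fun x : ℚ => (x+m)^i) ∈ HP (i+1) := by
  induction i with
  | zero =>
    convert HB_mem (Nat.zero_lt_one) using 1
    funext x; simp [HB]
  | succ i ih =>
    convert HP_mul (ih (by omega)) m h using 1
    funext x; ring

theorem HP_pow_diff (i j : ℕ) (h : i + j + 1 ≤ m) :
    (fun x : ℚ => (x+m)^(i+j) - (x+m)^i) ∈ HP (i+j+1) := by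
  induction j with
  | zero => convert (HP _).zero_mem using 1; funext x; simp
  | succ j ih =>
    have h1 := HP_mul (HP_pow (m := m) (i+j) (by omega)) (m-1) (by omega)
    change _ ∈ HP (i+j+1+1)
    convert add_mem (HP_mono (Nat.le_succ _) (ih (by omega))) h1 using 1
    funext x
    simp only [Pi.add_apply]
    rw [Nat.cast_sub (by omega)]
    push_cast
    ring

theorem HP_prod (l : ℕ) (h : l * l + l ≤ m) :
    (fun x : ℚ => (l+1) * (x+m)^l - ∏ i ∈ Finset.range l, (x + m + i + 1)) ∈ HP (l+1) := by
  induction l with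
  | zero => convert (HP _).zero_mem using 1; funext x; simp
  | succ l ih =>
    have e : (l+1)*(l+1) + (l+1) = l*l+l + (2*l+2) := by ring
    have h1 := HP_mul (ih (by omega)) (m+l+1) (by omega)
    have h2 := HP_mul (HP_pow (m := m) l (by omega)) (m-(l+1)*(l+1)) (by omega)
    convert add_mem h1 h2 using 1
    funext x
    simp only [Pi.add_apply]
    rw [Nat.cast_sub (by omega), Finset.prod_range_succ]
    push_cast
    ring

end cone
theorem fact_ineq (d : ℕ) : d * d + d ≤ 3 * d.factorial := by
  induction d with
  | zero => simp
  | succ d ih =>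
    rw [Nat.factorial_succ]
    rcases Nat.lt_or_ge d 2 with h | h
    · interval_cases d <;> simp [Nat.factorial]
    · nlinarith

theorem HP_main (d : ℕ) (hd : 0 < d) (a : Fin d → ℤ) (ha : ∀ i, -2 ≤ a i) (n : ℤ)
    (hn : 5 * (d : ℤ) + 3 ≤ n) (m : ℕ) (hm : m = 3 * d.factorial) :
    (fun x : ℚ => n * (x+m)^d + ∑ i : Fin d, (a i : ℚ) * (x+m)^(i:ℕ)
      - ∑ s ∈ Finset.range m, HB d (x + m - s)) ∈ HP (d+1) := by
  have hmd : d * d + d ≤ m := hm ▸ fact_ineq d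
  have hmd' : d + 1 ≤ m := by nlinarith
  obtain ⟨b, hb⟩ := Int.eq_ofNat_of_zero_le (sub_nonneg.mpr hn)
  have hb' : (n:ℚ) = b + (5 * d + 3) := by
    have : n = b + (5 * d + 3) := by omega
    rw [this]; push_cast; ring
  have hc : ∀ i, ∃ c : ℕ, (a i : ℚ) = c - 2 := by
    intro i
    obtain ⟨c, hc⟩ := Int.eq_ofNat_of_zero_le (sub_nonneg.mpr (ha i))
    refine ⟨c, ?_⟩
    have : a i = c - 2 := by omega
    rw [this]; push_cast; ring
  choose c hc using hc
  have h1 := nsmul_mem (HP_pow (m := m) d (by omega)) b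
  have h2 : ∑ i : Fin d, c i • (fun x : ℚ => (x+m)^(i:ℕ)) ∈ HP (d+1) :=
    sum_mem fun i _ => nsmul_mem (HP_mono (by omega) (HP_pow (m := m) i (by omega))) _
  have h3 := nsmul_mem (HP_prod (m := m) d hmd) 3
  have h4 : ∑ i : Fin d, 2 • (fun x : ℚ => (x+m)^d - (x+m)^(i:ℕ)) ∈ HP (d+1) :=
    sum_mem fun i _ => nsmul_mem (by
      have := HP_pow_diff (m := m) (i:ℕ) (d - i) (by omega)
      rwa [show (i:ℕ) + (d - i) = d by omega] at this) _
  have h5 : ∑ s ∈ Finset.range m, (fun x : ℚ => HB d (x + m) - HB d (x + m - s)) ∈ HP (d+1) :=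
    sum_mem fun s hs => HP_mono (Nat.le_succ d) (by
      have hs' := Finset.mem_range.mp hs
      have := HB_diff d (m - s) s
      rw [show m - s + s = m by omega] at this
      convert this using 4
      rw [Nat.cast_sub (by omega)]; ring)
  convert add_mem (add_mem (add_mem (add_mem h1 h2) h3) h4) h5 using 1
  funext x
  have hp := HB_prod d (x + m)
  have hmq : (m:ℚ) = 3 * (d.factorial : ℚ) := by rw [hm]; push_cast; ring
  have hp' : (m:ℚ) * HB d (x+m) = 3 * ∏ l ∈ Finset.range d, (x + m + l + 1) := by
    rw [← hp]; linear_combination HB d (x+m) * hmq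
  simp only [Pi.add_apply, Finset.sum_apply, Pi.smul_apply]
  simp only [nsmul_eq_mul, hc, hb', Finset.sum_sub_distrib, Finset.sum_const, Finset.card_range, Finset.card_univ, Fintype.card_fin,
    sub_mul, mul_sub, hp', ← Finset.mul_sum]
  push_cast
  ring

/-- Points of total degree `i` in `W`. -/
def HS {D : ℕ} (W : Set (Fin D → ℕ)) (i : ℕ) : Set (Fin D → ℕ) := {w | w ∈ W ∧ ∑ j, w j = i}

theorem HS_finite {D : ℕ} (W : Set (Fin D → ℕ)) (i : ℕ) : (HS W i).Finite := by
  apply (Set.finite_Iic (fun _ : Fin D => i)).subset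
  rintro w ⟨_, hw⟩ j
  rw [← hw]
  exact Finset.single_le_sum (fun _ _ => Nat.zero_le _) (Finset.mem_univ j)

/-- The staircase obtained by one step. -/
def HW {D : ℕ} (W : Set (Fin (D+1) → ℕ)) : Set (Fin (D+1) → ℕ) :=
  {w | w 0 = 0 ∨ w - Pi.single 0 1 ∈ W}

theorem HW_lower {D : ℕ} {W : Set (Fin (D+1) → ℕ)} (h : IsLowerSet W) : IsLowerSet (HW W) := by
  intro w v hvw hw
  rcases hw with hw | hw
  · left
    exact Nat.le_zero.mp (hw ▸ hvw 0)
  · right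
    exact h (tsub_le_tsub_right hvw _) hw

theorem HW_count {D : ℕ} (W : Set (Fin (D+1) → ℕ)) (i : ℕ) :
    (HS (HW W) (i+1)).ncard = (HS (Set.univ : Set (Fin D → ℕ)) (i+1)).ncard + (HS W i).ncard := by
  have h : HS (HW W) (i+1) = (fun u : Fin D → ℕ => (Fin.cons 0 u : Fin (D+1) → ℕ)) ''
      (HS Set.univ (i+1)) ∪ (fun u => u + Pi.single 0 1) '' (HS W i) := by
    ext w
    constructor
    · rintro ⟨hw, hs⟩
      by_cases h0 : w 0 = 0
      · left
        refine ⟨Fin.tail w, ⟨trivial, ?_⟩, ?_⟩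
        · rw [Fin.sum_univ_succ, h0, zero_add] at hs
          exact hs
        · show Fin.cons 0 (Fin.tail w) = w
          rw [← h0]; exact Fin.cons_self_tail w
      · right
        have e : w - Pi.single 0 1 + Pi.single 0 1 = w := by
          apply tsub_add_cancel_of_le
          intro j
          refine Fin.cases ?_ (fun j => ?_) j
          · simp; omega
          · simp
        refine ⟨w - Pi.single 0 1, ⟨hw.resolve_left h0, ?_⟩, e⟩
        rw [← e] at hs
        simp only [Pi.add_apply, Finset.sum_add_distrib, Finset.sum_pi_single', Finset.mem_univ,
          if_true] at hs
        simpa using hs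
    · rintro (⟨u, ⟨_, hu⟩, rfl⟩ | ⟨u, ⟨huW, hu⟩, rfl⟩)
      · refine ⟨Or.inl rfl, ?_⟩
        simp only [Fin.sum_univ_succ, Fin.cons_zero, Fin.cons_succ, zero_add]
        exact hu
      · refine ⟨Or.inr ?_, ?_⟩
        · simpa using huW
        · simp [Finset.sum_add_distrib, hu]
  rw [h, Set.ncard_union_eq ?_ ((HS_finite _ _).image _) ((HS_finite _ _).image _), Set.ncard_image_of_injective, Set.ncard_image_of_injective]
  · exact add_left_injective _
  · intro u v huv
    exact Fin.cons_right_injective (α := fun _ => ℕ) 0 huv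
  · rw [Set.disjoint_left]
    rintro _ ⟨u, _, rfl⟩ ⟨v, _, hv⟩
    have := congrFun hv 0
    simp at this

theorem HW_univ (D : ℕ) : HW (Set.univ : Set (Fin (D+1) → ℕ)) = Set.univ := by
  ext; simp [HW]

theorem HS_univ (D i : ℕ) :
    (HS (Set.univ : Set (Fin (D+1) → ℕ)) i).ncard = (i + D).choose D := by
  induction D generalizing i with
  | zero =>
    have : HS (Set.univ : Set (Fin (0+1) → ℕ)) i = {fun _ => i} := by
      ext w
      constructor
      · rintro ⟨_, hw⟩
        funext j
        fin_cases j
        simpa using hw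
      · rintro rfl
        exact ⟨trivial, by simp⟩
    rw [this]; simp
  | succ D ih =>
    induction i with
    | zero =>
      have : HS (Set.univ : Set (Fin (D+1+1) → ℕ)) 0 = {0} := by
        ext w
        simp [HS, funext_iff]
      rw [this]; simp
    | succ i ih2 =>
      rw [← HW_univ, HW_count, ih, ih2, show i + 1 + (D+1) = (i + 1 + D) + 1 by ring,
        Nat.choose_succ_succ, show i + (D + 1) = i + 1 + D by ring]

/-- `f` is eventually the counting function of a staircase in `ℕ^D`. -/
def HReal (D : ℕ) (f : ℚ → ℚ) : Prop :=
  ∃ W : Set (Fin D → ℕ), IsLowerSet W ∧ ∃ N₀ : ℕ, ∀ i : ℕ, N₀ ≤ i → ((HS W i).ncard : ℚ) = f i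

theorem HReal_step {D : ℕ} {f : ℚ → ℚ} (h : HReal (D+2) f) :
    HReal (D+2) (fun x => HB D x + f (x - 1)) := by
  obtain ⟨W, hW, N, hN⟩ := h
  refine ⟨HW W, HW_lower hW, N+1, fun i hi => ?_⟩
  obtain ⟨i, rfl⟩ : ∃ j, i = j + 1 := ⟨i - 1, by omega⟩
  rw [HW_count, HS_univ, Nat.cast_add, hN i (by omega), ← HB_nat]
  push_cast
  simp

theorem HReal_steps {D : ℕ} {f : ℚ → ℚ} (h : HReal (D+2) f) (m : ℕ) :
    HReal (D+2) (fun x => f (x - m) + ∑ s ∈ Finset.range m, HB D (x - s)) := by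
  induction m with
  | zero => simpa using h
  | succ m ih =>
    convert HReal_step ih using 1
    funext x
    rw [Finset.sum_range_succ']
    have : ∀ s : ℕ, x - ((s + 1 : ℕ) : ℚ) = x - 1 - s := by intro s; push_cast; ring
    simp only [this]
    simp
    ring

theorem HReal_up {D : ℕ} {f : ℚ → ℚ} (h : HReal D f) : HReal (D+1) f := by
  obtain ⟨W, hW, N, hN⟩ := h
  refine ⟨{w | w 0 = 0 ∧ Fin.tail w ∈ W}, ?_, N, fun i hi => ?_⟩
  · rintro w v hvw ⟨h0, ht⟩
    refine ⟨?_, hW (fun j => hvw j.succ) ht⟩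
    exact Nat.le_zero.mp ((hvw 0).trans h0.le)
  · rw [← hN i hi]
    congr 1
    have : HS {w : Fin (D+1) → ℕ | w 0 = 0 ∧ Fin.tail w ∈ W} i
        = (fun u : Fin D → ℕ => (Fin.cons 0 u : Fin (D+1) → ℕ)) '' (HS W i) := by
      ext w
      constructor
      · rintro ⟨⟨h0, ht⟩, hs⟩
        refine ⟨Fin.tail w, ⟨ht, ?_⟩, ?_⟩
        · rw [Fin.sum_univ_succ, h0, zero_add] at hs
          exact hs
        · show Fin.cons 0 (Fin.tail w) = w
          rw [← h0]; exact Fin.cons_self_tail w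
      · rintro ⟨u, ⟨huW, hu⟩, rfl⟩
        refine ⟨⟨rfl, by simpa using huW⟩, ?_⟩
        simp only [Fin.sum_univ_succ, Fin.cons_zero, Fin.cons_succ, zero_add]
        exact hu
    rw [this, Set.ncard_image_of_injective]
    intro u v huv
    exact Fin.cons_right_injective (α := fun _ => ℕ) 0 huv

theorem HReal_HP (D : ℕ) : ∀ f ∈ HP D, HReal (D+1) f := by
  induction D with
  | zero =>
    intro f hf
    have : f = 0 := by simpa [HP] using hf
    subst this
    refine ⟨∅, isLowerSet_empty, 0, fun i _ => ?_⟩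
    simp [HS]
  | succ D ih =>
    intro f hf
    obtain ⟨m, g, hg, rfl⟩ := HP_split hf
    clear hf
    induction m generalizing g with
    | zero => simpa using HReal_up (ih g hg)
    | succ m ihm =>
      have h1 : (fun x => g (x+1)) + m • (fun x => HB D (x+1) - HB D x) ∈ HP D :=
        add_mem (HP_shift hg) (nsmul_mem (HB_diff1 D) _)
      convert HReal_step (ihm _ h1) using 1
      funext x
      simp
      ring

section ring
open MvPolynomial
variable {D : ℕ} (W : Set (Fin D → ℕ)) (hW : IsLowerSet W)

theorem HU_upper {D : ℕ} {W : Set (Fin D → ℕ)} (hW : IsLowerSet W) :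
    IsUpperSet {w : Fin D →₀ ℕ | ⇑w ∉ W} := by
  intro v w hvw hv hw
  exact hv (hW hvw hw)

/-- The MvPolynomial.monomial ideal. -/
noncomputable def HI {D : ℕ} {W : Set (Fin D → ℕ)} (hW : IsLowerSet W) :
    Ideal (MvPolynomial (Fin D) ℚ) :=
  restrictSupportIdeal ℚ {w : Fin D →₀ ℕ | ⇑w ∉ W} (HU_upper hW)

variable {W}

theorem mem_HI (p : MvPolynomial (Fin D) ℚ) :
    p ∈ HI hW ↔ ∀ w ∈ p.support, ⇑w ∉ W := Iff.rfl

/-- The quotient map. -/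
noncomputable def Hq : MvPolynomial (Fin D) ℚ →ₐ[ℚ] (MvPolynomial (Fin D) ℚ ⧸ HI hW) :=
  Ideal.Quotient.mkₐ ℚ (HI hW)

theorem Hq_surj : Function.Surjective (Hq hW) := Ideal.Quotient.mkₐ_surjective _ _

theorem Hq_zero (p : MvPolynomial (Fin D) ℚ) : Hq hW p = 0 ↔ p ∈ HI hW :=
  Ideal.Quotient.eq_zero_iff_mem

/-- The grading. -/
noncomputable def HA (i : ℕ) : Submodule ℚ (MvPolynomial (Fin D) ℚ ⧸ HI hW) :=
  (homogeneousSubmodule (Fin D) ℚ i).map (Hq hW).toLinearMap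

theorem Hq_mem {i : ℕ} {p : MvPolynomial (Fin D) ℚ} (hp : p ∈ homogeneousSubmodule (Fin D) ℚ i) :
    Hq hW p ∈ HA hW i := ⟨p, hp, rfl⟩

theorem HA_gradedMonoid : SetLike.GradedMonoid (HA hW) where
  one_mem := ⟨1, isHomogeneous_one _ _, map_one (Hq hW)⟩
  mul_mem := by
    rintro i j _ _ ⟨p, hp, rfl⟩ ⟨q, hq, rfl⟩
    exact ⟨p * q, IsHomogeneous.mul hp hq, map_mul (Hq hW) p q⟩

/-- The map on graded pieces. -/
noncomputable def HL (i : ℕ) : homogeneousSubmodule (Fin D) ℚ i →ₗ[ℚ] HA hW i :=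
  ((Hq hW).toLinearMap.restrict (fun _ hp => Hq_mem hW hp))

attribute [local instance] MvPolynomial.gradedAlgebra

open DirectSum in
/-- The decomposition before passing to the quotient. -/
noncomputable def Hpsi : MvPolynomial (Fin D) ℚ →ₗ[ℚ] ⨁ i, HA hW i :=
  (DirectSum.lmap (HL hW)) ∘ₗ
    (DirectSum.decomposeLinearEquiv (homogeneousSubmodule (Fin D) ℚ)).toLinearMap

theorem Hpsi_mem {i : ℕ} {p : MvPolynomial (Fin D) ℚ}
    (hp : p ∈ homogeneousSubmodule (Fin D) ℚ i) :
    Hpsi hW p = DirectSum.of (fun i => HA hW i) i ⟨Hq hW p, Hq_mem hW hp⟩ := by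
  simp only [Hpsi, LinearMap.comp_apply, LinearEquiv.coe_coe, DirectSum.decomposeLinearEquiv_apply]
  rw [DirectSum.decompose_of_mem _ hp]
  exact DirectSum.lmap_lof (HL hW) i ⟨p, hp⟩

theorem Hpsi_ker (p : MvPolynomial (Fin D) ℚ) (hp : p ∈ HI hW) : Hpsi hW p = 0 := by
  rw [p.as_sum, map_sum]
  apply Finset.sum_eq_zero
  intro w hw
  have hm : MvPolynomial.monomial w (MvPolynomial.coeff w p) ∈ homogeneousSubmodule (Fin D) ℚ w.degree :=
    isHomogeneous_monomial _ rfl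
  rw [Hpsi_mem hW hm]
  have : Hq hW (MvPolynomial.monomial w (MvPolynomial.coeff w p)) = 0 := by
    rw [mem_HI] at hp
    rw [Hq_zero, mem_HI]
    intro v hv
    have := MvPolynomial.support_monomial_subset hv
    simp at this
    subst this
    exact hp _ hw
  rw [show (⟨_, Hq_mem hW hm⟩ : HA hW w.degree) = 0 from Subtype.ext this, map_zero]

theorem Hpsi_congr (p q : MvPolynomial (Fin D) ℚ) (h : Hq hW p = Hq hW q) :
    Hpsi hW p = Hpsi hW q := by
  have h1 : p - q ∈ HI hW := by rw [← Hq_zero, map_sub, h, sub_self]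
  have h2 := Hpsi_ker hW _ h1
  calc Hpsi hW p = Hpsi hW ((p - q) + q) := by rw [sub_add_cancel]
    _ = Hpsi hW q := by rw [map_add, h2, zero_add]

open DirectSum in
/-- The decomposition map. -/
noncomputable def Hdec : (MvPolynomial (Fin D) ℚ ⧸ HI hW) →ₗ[ℚ] ⨁ i, HA hW i where
  toFun x := Hpsi hW (Function.surjInv (Hq_surj hW) x)
  map_add' x y := by
    rw [← map_add]
    apply Hpsi_congr
    simp only [map_add, Function.surjInv_eq]
  map_smul' c x := by
    rw [RingHom.id_apply, ← map_smul]
    apply Hpsi_congr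
    simp only [map_smul, Function.surjInv_eq]

theorem Hdec_q (p : MvPolynomial (Fin D) ℚ) : Hdec hW (Hq hW p) = Hpsi hW p :=
  Hpsi_congr hW _ _ (Function.surjInv_eq (Hq_surj hW) _)

theorem Hdec_mem (i : ℕ) (x : HA hW i) :
    Hdec hW x = DirectSum.of (fun i => HA hW i) i x := by
  obtain ⟨_, p, hp, rfl⟩ := x
  exact (Hdec_q hW p).trans (Hpsi_mem hW hp)

/-- The graded algebra. -/
@[reducible] noncomputable def HGA : GradedAlgebra (HA hW) :=
  letI := HA_gradedMonoid hW
  letI : DirectSum.Decomposition (HA hW) := DirectSum.Decomposition.ofLinearMap (HA hW) (Hdec hW)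
    (by
      refine LinearMap.ext fun x => ?_
      obtain ⟨p, rfl⟩ := Hq_surj hW x
      simp only [LinearMap.comp_apply, Hdec_q, LinearMap.id_apply]
      induction p using MvPolynomial.induction_on' with
      | monomial w c =>
        have hm : MvPolynomial.monomial w c ∈ homogeneousSubmodule (Fin D) ℚ w.degree :=
          isHomogeneous_monomial _ rfl
        rw [Hpsi_mem hW hm]
        exact DirectSum.coeLinearMap_of _ _ _
      | add p q hp hq => simp only [map_add, hp, hq])
    (by
      ext i x : 2
      simp only [LinearMap.comp_apply, LinearMap.id_apply]
      rw [DirectSum.lof_eq_of, DirectSum.coeLinearMap_of, Hdec_mem])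
  { }

theorem HA_adjoin : Algebra.adjoin ℚ ((HA hW 1 : Submodule ℚ (MvPolynomial (Fin D) ℚ ⧸ HI hW)) :
    Set (MvPolynomial (Fin D) ℚ ⧸ HI hW)) = ⊤ := by
  rw [eq_top_iff]
  have h : (⊤ : Subalgebra ℚ (MvPolynomial (Fin D) ℚ ⧸ HI hW))
      = (Algebra.adjoin ℚ (Set.range (MvPolynomial.X : Fin D → MvPolynomial (Fin D) ℚ))).map (Hq hW) := by
    rw [adjoin_range_X, Algebra.map_top]
    exact ((AlgHom.range_eq_top _).mpr (Hq_surj hW)).symm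
  rw [h, AlgHom.map_adjoin]
  apply Algebra.adjoin_mono
  rintro _ ⟨_, ⟨j, rfl⟩, rfl⟩
  exact Hq_mem hW (isHomogeneous_X _ _)

/-- Standard monomials of degree `i`. -/
def HSf (W : Set (Fin D → ℕ)) (i : ℕ) : Set (Fin D →₀ ℕ) := {w | ⇑w ∈ HS W i}

theorem HSf_ncard (W : Set (Fin D → ℕ)) (i : ℕ) : (HSf W i).ncard = (HS W i).ncard := by
  have : HS W i = (fun w : Fin D →₀ ℕ => (⇑w : Fin D → ℕ)) '' HSf W i := by
    ext w
    constructor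
    · intro hw
      exact ⟨Finsupp.equivFunOnFinite.symm w, hw, rfl⟩
    · rintro ⟨u, hu, rfl⟩
      exact hu
  rw [this, Set.ncard_image_of_injective _ DFunLike.coe_injective]

theorem HSf_finite (W : Set (Fin D → ℕ)) (i : ℕ) : (HSf W i).Finite :=
  (HS_finite W i).preimage (DFunLike.coe_injective.injOn)

theorem HA_eq (i : ℕ) : HA hW i = LinearMap.range
    ((Hq hW).toLinearMap ∘ₗ (restrictSupport ℚ (HSf W i)).subtype) := by
  apply le_antisymm
  · rintro _ ⟨p, hp, rfl⟩
    have hp' : p.IsHomogeneous i := hp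
    rw [p.as_sum, map_sum]
    refine sum_mem fun w hw => ?_
    by_cases h : ⇑w ∈ W
    · refine ⟨⟨MvPolynomial.monomial w (MvPolynomial.coeff w p), ?_⟩, rfl⟩
      rw [monomial_mem_restrictSupport]
      left
      refine ⟨h, ?_⟩
      have := hp' (mem_support_iff.mp hw)
      rw [← Finsupp.degree_eq_sum, Finsupp.degree_eq_weight_one]
      exact this
    · have : (Hq hW).toLinearMap (MvPolynomial.monomial w (MvPolynomial.coeff w p)) = 0 := by
        refine (Hq_zero hW _).mpr ?_
        rw [mem_HI]
        intro v hv
        have := MvPolynomial.support_monomial_subset hv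
        simp at this
        subst this
        exact h
      rw [this]; exact zero_mem _
  · rintro _ ⟨⟨p, hp⟩, rfl⟩
    refine Hq_mem hW ?_
    show p.IsHomogeneous i
    intro w hw
    have := hp (mem_support_iff.mpr hw)
    have h2 := this.2
    rw [← Finsupp.degree_eq_sum, Finsupp.degree_eq_weight_one] at h2
    exact h2

theorem H_inj (i : ℕ) : Function.Injective
    ((Hq hW).toLinearMap ∘ₗ (restrictSupport ℚ (HSf W i)).subtype) := by
  rw [← LinearMap.ker_eq_bot, LinearMap.ker_eq_bot']
  rintro ⟨p, hp⟩ h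
  have h' : p ∈ HI hW := (Hq_zero hW p).mp h
  rw [mem_HI] at h'
  have : p = 0 := by
    rw [← MvPolynomial.support_eq_empty, Finset.eq_empty_iff_forall_notMem]
    intro w hw
    exact h' _ hw (hp hw).1
  simpa using this

/-- The linear equivalence with the span of standard monomials. -/
noncomputable def HE (i : ℕ) : restrictSupport ℚ (HSf W i) ≃ₗ[ℚ] HA hW i :=
  (LinearEquiv.ofInjective _ (H_inj hW i)).trans (LinearEquiv.ofEq _ _ (HA_eq hW i).symm)

theorem HA_finrank (i : ℕ) : Module.finrank ℚ (HA hW i) = (HS W i).ncard := by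
  rw [← (HE hW i).finrank_eq, Module.finrank_eq_nat_card_basis (basisRestrictSupport ℚ (HSf W i)),
    ← HSf_ncard]
  rfl

theorem HA_finite (i : ℕ) : FiniteDimensional ℚ (HA hW i) := by
  have : Finite (HSf W i) := HSf_finite W i
  have : FiniteDimensional ℚ (restrictSupport ℚ (HSf W i)) :=
    Module.Finite.of_basis (basisRestrictSupport ℚ (HSf W i))
  exact Module.Finite.equiv (HE hW i)

end ring

theorem HReal_hilbert {D : ℕ} {f : Polynomial ℚ} (h : HReal D (fun x => f.eval x)) :
    IsHilbertPolynomial f := by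
  obtain ⟨W, hW, N, hN⟩ := h
  refine ⟨ℚ, MvPolynomial (Fin D) ℚ ⧸ HI hW, inferInstance, inferInstance, inferInstance, HA hW,
    HGA hW, HA_finite hW, HA_adjoin hW, N, fun i hi => ?_⟩
  rw [HA_finrank]
  exact hN i hi

theorem sign_patterns_stmt0 (d : ℕ) (hd : 0 < d) (a : Fin d → ℤ) (N : ℤ)
    (hN : IsLeast (Set.range a) N) (hN2 : -2 ≤ N) (n : ℤ) (hn : 5 * (d : ℤ) + 3 ≤ n) :
    IsHilbertPolynomial (Polynomial.C (n : ℚ) * Polynomial.X ^ d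
      + ∑ i : Fin d, Polynomial.C ((a i : ℚ)) * Polynomial.X ^ (i : ℕ)) := by
  have ha : ∀ i, -2 ≤ a i := fun i => hN2.trans (hN.2 ⟨i, rfl⟩)
  have h1 := HReal_steps (HReal_HP _ _ (HP_main d hd a ha n hn _ rfl)) (3 * d.factorial)
  apply HReal_hilbert (D := d + 2)
  convert h1 using 1
  funext x
  simp [Polynomial.eval_finsetSum]
end

section
/- Let d be a positive integer and a_0, …, a_{d-1} integers, and set N = min{a_0, …, a_{d-1}}. If N < -2, then for every integer n ≥ -10·d·⌊N/5⌋ + 3, the polynomial n·x^d + a_{d-1}·x^{d-1} + ⋯ + a_1·x + a_0 is a Hilbert polynomial. -/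
open Polynomial

/-- Sinkless version: graded commutative monoid generated in degree one, with counting function
eventually equal to `p`. -/
def GM0 (p : Polynomial ℤ) : Prop :=
  ∃ (A : Type) (_ : AddCommMonoid A) (S : AddSubmonoid A) (deg : A →+ ℕ),
    (∀ m ∈ S, deg m = 0 → m = 0) ∧
    (∀ m ∈ S, 1 ≤ deg m → ∃ b ∈ S, ∃ c ∈ S, deg b = 1 ∧ m = b + c) ∧
    (∀ i, {x | x ∈ S ∧ deg x = i}.Finite) ∧
    ∃ N₀ : ℕ, ∀ i, N₀ ≤ i → ({x | x ∈ S ∧ deg x = i}.ncard : ℤ) = p.eval (i : ℤ)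

/-- Version with a sink `z` in degree one; the multiples of the sink are not counted. -/
def GMZ (p : Polynomial ℤ) : Prop :=
  ∃ (A : Type) (_ : AddCommMonoid A) (S : AddSubmonoid A) (deg : A →+ ℕ) (z : A),
    z ∈ S ∧ deg z = 1 ∧ (∀ m ∈ S, m + z = (deg m + 1) • z) ∧
    (∀ m ∈ S, deg m = 0 → m = 0) ∧
    (∀ m ∈ S, 1 ≤ deg m → ∃ b ∈ S, ∃ c ∈ S, deg b = 1 ∧ m = b + c) ∧
    (∀ i, {x | x ∈ S ∧ deg x = i}.Finite) ∧
    ∃ N₀ : ℕ, ∀ i, N₀ ≤ i → ({x | x ∈ S ∧ deg x = i}.ncard : ℤ) = p.eval (i : ℤ) + 1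

theorem GMZ.toGM0 {p : Polynomial ℤ} (h : GMZ p) : GM0 (p + 1) := by
  obtain ⟨A, iA, S, deg, z, hz, hz1, hzs, h0, hg, hf, N₀, hN⟩ := h
  refine ⟨A, iA, S, deg, h0, hg, hf, N₀, fun i hi => ?_⟩
  rw [hN i hi]; simp

theorem GM0.toGMZ {p : Polynomial ℤ} (h : GM0 p) : GMZ p := by
  obtain ⟨A, iA, S, deg, h0, hg, hf, N₀, hN⟩ := h
  let T : AddSubmonoid (WithTop A × ℕ) :=
    { carrier := {x | (∃ a ∈ S, x.1 = (a : WithTop A) ∧ deg a = x.2) ∨ (x.1 = ⊤ ∧ 1 ≤ x.2)}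
      zero_mem' := Or.inl ⟨0, S.zero_mem, rfl, by simp⟩
      add_mem' := by
        rintro ⟨x, i⟩ ⟨y, j⟩ (⟨a, ha, h1, h2⟩ | ⟨h1, h2⟩) (⟨b, hb, h3, h4⟩ | ⟨h3, h4⟩)
        all_goals simp only at h1 h2 h3 h4; subst h1 h3
        · exact Or.inl ⟨a + b, S.add_mem ha hb, by simp, by simp [h2, h4]⟩
        · exact Or.inr ⟨by simp, by simp; omega⟩
        · exact Or.inr ⟨by simp, by simp; omega⟩
        · exact Or.inr ⟨by simp, by simp; omega⟩ }
  have memT : ∀ x i, (x, i) ∈ T ↔ (∃ a ∈ S, x = (a : WithTop A) ∧ deg a = i) ∨ (x = ⊤ ∧ 1 ≤ i) :=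
    fun x i => Iff.rfl
  have hset : ∀ i, 1 ≤ i → {x | x ∈ T ∧ AddMonoidHom.snd (WithTop A) ℕ x = i} =
      insert ((⊤ : WithTop A), i) ((fun a : A => ((a : WithTop A), i)) '' {x | x ∈ S ∧ deg x = i}) := by
    intro i hi
    ext ⟨x, j⟩
    simp only [Set.mem_ofPred_eq, memT, AddMonoidHom.coe_snd, Set.mem_insert_iff, Set.mem_image,
      Prod.mk.injEq]
    constructor
    · rintro ⟨⟨a, ha, rfl, h2⟩ | ⟨rfl, h2⟩, rfl⟩
      · exact Or.inr ⟨a, ⟨ha, h2⟩, rfl, rfl⟩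
      · exact Or.inl ⟨rfl, rfl⟩
    · rintro (⟨rfl, rfl⟩ | ⟨a, ⟨ha, h2⟩, rfl, rfl⟩)
      · exact ⟨Or.inr ⟨rfl, hi⟩, rfl⟩
      · exact ⟨Or.inl ⟨a, ha, rfl, h2⟩, rfl⟩
  have hz0 : ∀ m ∈ T, AddMonoidHom.snd (WithTop A) ℕ m = 0 → m = 0 := by
    rintro ⟨x, j⟩ hm hj
    simp only [AddMonoidHom.coe_snd] at hj
    subst hj
    rcases (memT _ _).1 hm with ⟨a, ha, rfl, h2⟩ | ⟨_, h2⟩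
    · rw [h0 a ha h2]; rfl
    · omega
  have htop : ∀ n : ℕ, (n + 1) • (⊤ : WithTop A) = ⊤ := by
    intro n; rw [succ_nsmul]; simp
  refine ⟨WithTop A × ℕ, inferInstance, T, AddMonoidHom.snd _ _, (⊤, 1), ?_, rfl, ?_, hz0, ?_, ?_,
    N₀ + 1, ?_⟩
  · exact Or.inr ⟨rfl, le_rfl⟩
  · rintro ⟨x, j⟩ hm
    ext1
    · simp [htop]
    · simp
  · rintro ⟨x, j⟩ hm hj
    simp only [AddMonoidHom.coe_snd] at hj
    rcases (memT _ _).1 hm with ⟨a, ha, rfl, h2⟩ | ⟨rfl, h2⟩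
    · obtain ⟨b, hb, c, hc, hb1, rfl⟩ := hg a ha (by omega)
      refine ⟨(b, 1), Or.inl ⟨b, hb, rfl, hb1⟩, (c, deg c), Or.inl ⟨c, hc, rfl, rfl⟩, rfl, ?_⟩
      simp at h2
      simp [← h2, hb1]
    · by_cases h1 : j = 1
      · exact ⟨(⊤, 1), Or.inr ⟨rfl, le_rfl⟩, 0, T.zero_mem, rfl, by simp [h1]⟩
      · exact ⟨(⊤, 1), Or.inr ⟨rfl, le_rfl⟩, (⊤, j - 1), Or.inr ⟨rfl, by simp; omega⟩, rfl,
          by simp; omega⟩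
  · intro i
    rcases Nat.eq_zero_or_pos i with rfl | hi
    · exact (Set.finite_singleton (0 : WithTop A × ℕ)).subset fun m hm => hz0 m hm.1 hm.2
    · rw [hset i hi]
      exact ((hf i).image _).insert _
  · intro i hi
    rw [hset i (by omega), Set.ncard_insert_of_notMem _ ((hf i).image _), Set.ncard_image_of_injective]
    · push_cast; rw [hN i (by omega)]
    · intro a b hab; simpa using hab
    · simp

theorem GMZ.add {p q : Polynomial ℤ} (hp : GMZ p) (hq : GMZ q) : GMZ (p + q) := by
  obtain ⟨A, iA, S, deg, z, hz, hz1, hzs, h0, hg, hf, N₀, hN⟩ := hp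
  obtain ⟨A', iA', S', deg', z', hz', hz1', hzs', h0', hg', hf', N₀', hN'⟩ := hq
  have absorb : ∀ a ∈ S, ∀ j, a + (j + 1) • z = (deg a + (j + 1)) • z := by
    intro a ha j
    rw [succ_nsmul', ← add_assoc, hzs a ha, ← add_nsmul]; congr 1; omega
  have absorb' : ∀ a ∈ S', ∀ j, a + (j + 1) • z' = (deg' a + (j + 1)) • z' := by
    intro a ha j
    rw [succ_nsmul', ← add_assoc, hzs' a ha, ← add_nsmul]; congr 1; omega
  let T : AddSubmonoid (A × A') :=
    { carrier := {x | x.1 ∈ S ∧ x.2 ∈ S' ∧ deg x.1 = deg' x.2 ∧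
        (x.2 = (deg' x.2) • z' ∨ x.1 = (deg x.1) • z)}
      zero_mem' := ⟨S.zero_mem, S'.zero_mem, by simp, by simp⟩
      add_mem' := by
        rintro ⟨a, b⟩ ⟨c, e⟩ ⟨ha, hb, hab, h1⟩ ⟨hc, he, hce, h2⟩
        simp only at ha hb hab h1 hc he hce h2
        refine ⟨S.add_mem ha hc, S'.add_mem hb he, by simp [hab, hce], ?_⟩
        simp only [Prod.fst_add, Prod.snd_add, map_add]
        rcases h1 with h1 | h1 <;> rcases h2 with h2 | h2
        · left; rw [add_nsmul, ← h1, ← h2]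
        · rcases hk : deg c with _ | k
          · left
            rw [h0' e he (by omega)]; simpa using h1
          · right
            rw [hk] at h2
            rw [h2]; exact absorb a ha k
        · rcases hk : deg a with _ | k
          · left
            rw [h0' b hb (by omega)]; simpa using h2
          · right
            rw [hk] at h1
            rw [h1, add_comm, add_comm (k + 1)]; exact absorb c hc k
        · right; rw [add_nsmul, ← h1, ← h2] }
  have memT : ∀ a b, (a, b) ∈ T ↔ a ∈ S ∧ b ∈ S' ∧ deg a = deg' b ∧
        (b = (deg' b) • z' ∨ a = (deg a) • z) := fun a b => Iff.rfl
  let D : A × A' →+ ℕ := deg.comp (AddMonoidHom.fst A A')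
  have hD : ∀ a b, D (a, b) = deg a := fun a b => rfl
  have dz : ∀ i, deg (i • z) = i := by intro i; simp [hz1]
  have dz' : ∀ i, deg' (i • z') = i := by intro i; simp [hz1']
  have hset : ∀ i, {x | x ∈ T ∧ D x = i} =
      (fun a => (a, i • z')) '' {x | x ∈ S ∧ deg x = i} ∪
      (fun b => (i • z, b)) '' {x | x ∈ S' ∧ deg' x = i} := by
    intro i
    ext ⟨a, b⟩
    simp only [Set.mem_ofPred_eq, memT, hD, Set.mem_union, Set.mem_image, Prod.mk.injEq]
    constructor
    · rintro ⟨⟨ha, hb, hab, h | h⟩, rfl⟩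
      · left; exact ⟨a, ⟨ha, rfl⟩, rfl, by rw [hab]; exact h.symm⟩
      · right; exact ⟨b, ⟨hb, hab.symm⟩, h.symm, rfl⟩
    · rintro (⟨a, ⟨ha, rfl⟩, rfl, rfl⟩ | ⟨b, ⟨hb, rfl⟩, rfl, rfl⟩)
      · exact ⟨⟨ha, S'.nsmul_mem hz' _, (dz' _).symm, Or.inl (by rw [dz'])⟩, rfl⟩
      · exact ⟨⟨S.nsmul_mem hz _, hb, dz _, Or.inr (by rw [dz])⟩, dz _⟩
  have hinter : ∀ i, ((fun a => (a, i • z')) '' {x | x ∈ S ∧ deg x = i}) ∩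
      ((fun b => (i • z, b)) '' {x | x ∈ S' ∧ deg' x = i}) = {(i • z, i • z')} := by
    intro i
    ext ⟨a, b⟩
    simp only [Set.mem_ofPred_eq, Set.mem_inter_iff, Set.mem_image, Prod.mk.injEq,
      Set.mem_singleton_iff]
    constructor
    · rintro ⟨⟨a, _, rfl, rfl⟩, ⟨b, _, rfl, rfl⟩⟩
      exact ⟨rfl, rfl⟩
    · rintro ⟨rfl, rfl⟩
      exact ⟨⟨_, ⟨S.nsmul_mem hz _, dz _⟩, rfl, rfl⟩, ⟨_, ⟨S'.nsmul_mem hz' _, dz' _⟩, rfl, rfl⟩⟩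
  refine ⟨A × A', inferInstance, T, D, (z, z'), ?_, hz1, ?_, ?_, ?_, ?_, N₀ + N₀', ?_⟩
  · exact ⟨hz, hz', by rw [hz1, hz1'], Or.inl (by simp [hz1'])⟩
  · rintro ⟨a, b⟩ ⟨ha, hb, hab, _⟩
    simp only at ha hb hab
    ext1
    · simp only [Prod.mk_add_mk, hD, Prod.smul_mk]; exact hzs a ha
    · simp only [Prod.mk_add_mk, hD, Prod.smul_mk, hab]; exact hzs' b hb
  · rintro ⟨a, b⟩ ⟨ha, hb, hab, _⟩ hd
    rw [hD] at hd
    simp only at ha hb hab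
    rw [h0 a ha hd, h0' b hb (by omega)]; rfl
  · rintro ⟨a, b⟩ ⟨ha, hb, hab, h⟩ hd
    rw [hD] at hd
    simp only at ha hb hab h
    rcases h with h | h
    · obtain ⟨u, hu, v, hv, hu1, rfl⟩ := hg a ha hd
      refine ⟨(u, z'), ⟨hu, hz', by simp [hu1, hz1'], Or.inl (by simp [hz1'])⟩, (v, deg v • z'),
        ⟨hv, S'.nsmul_mem hz' _, (dz' _).symm, Or.inl (by simp [dz'])⟩, hu1, ?_⟩
      rw [Prod.mk_add_mk, ← succ_nsmul', Prod.mk.injEq]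
      refine ⟨rfl, ?_⟩
      rw [h, ← hab, map_add, hu1, add_comm]
    · obtain ⟨u, hu, v, hv, hu1, rfl⟩ := hg' b hb (by omega)
      refine ⟨(z, u), ⟨hz, hu, by simp [hu1, hz1], Or.inr (by simp [hz1])⟩, (deg' v • z, v),
        ⟨S.nsmul_mem hz _, hv, dz _, Or.inr (by simp [dz])⟩, hz1, ?_⟩
      rw [Prod.mk_add_mk, ← succ_nsmul', Prod.mk.injEq]
      refine ⟨?_, rfl⟩
      rw [h, hab, map_add, hu1, add_comm]
  · intro i
    rw [hset]
    exact ((hf i).image _).union ((hf' i).image _)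
  · intro i hi
    have key := Set.ncard_union_add_ncard_inter _ _ ((hf i).image (fun a => (a, i • z')))
      ((hf' i).image (fun b => (i • z, b)))
    rw [← hset, hinter, Set.ncard_singleton, Set.ncard_image_of_injective _ (by
      intro a b hab; simpa using hab), Set.ncard_image_of_injective _ (by
      intro a b hab; simpa using hab)] at key
    have h1 := hN i (by omega)
    have h2 := hN' i (by omega)
    rw [Polynomial.eval_add]
    have key' := congrArg (Nat.cast : ℕ → ℤ) key
    simp only [Nat.cast_add, Nat.cast_one] at key'
    rw [h1, h2] at key'
    linarith

theorem GMZ.zero : GMZ 0 := by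
  refine ⟨ℕ, inferInstance, ⊤, AddMonoidHom.id ℕ, 1, trivial, rfl, ?_, ?_, ?_, ?_, 0, ?_⟩
  · intro m _; simp
  · intro m _ h; exact h
  · intro m _ h; exact ⟨1, trivial, m - 1, trivial, rfl, by simp at h; omega⟩
  · intro i; simp
  · intro i _; simp

theorem GMZ.one : GMZ 1 := by
  apply GM0.toGMZ
  have := GMZ.zero.toGM0
  simpa using this

theorem GMZ.const (c : ℕ) : GMZ (Polynomial.C (c : ℤ)) := by
  induction c with
  | zero => simpa using GMZ.zero
  | succ c ih => simpa using ih.add GMZ.one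

theorem GM0.isHilbert {p : Polynomial ℤ} (h : GM0 p) :
    IsHilbertPolynomial (p.map (Int.castRingHom ℚ)) := by
  obtain ⟨A, iA, S, deg, h0, hg, hf, N₀, hN⟩ := h
  let D : S →+ ℕ := deg.comp S.subtype
  have hbij : ∀ i, ((↑) '' (D ⁻¹' {i}) : Set A) = {x | x ∈ S ∧ deg x = i} := by
    intro i
    ext x
    simp [D, and_comm]
  have hfin : ∀ i, (D ⁻¹' {i}).Finite := by
    intro i
    refine Set.Finite.of_finite_image (f := ((↑) : S → A)) ?_ Subtype.val_injective.injOn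
    rw [hbij]; exact hf i
  have hcard : ∀ i, Nat.card (D ⁻¹' {i}) = {x | x ∈ S ∧ deg x = i}.ncard := by
    intro i
    rw [← hbij, Set.ncard_image_of_injective _ Subtype.val_injective]; rfl
  have e : ∀ i, AddMonoidAlgebra.gradeBy ℚ D i ≃ₗ[ℚ] ((D ⁻¹' {i} : Set S) →₀ ℚ) := fun i =>
    (LinearEquiv.ofEq _ (AddMonoidAlgebra.supported ℚ ℚ (D ⁻¹' {i})) (by ext x; rfl)).trans
      (AddMonoidAlgebra.supportedEquivFinsupp (R := ℚ) (S := ℚ) (D ⁻¹' {i}))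
  refine ⟨ℚ, AddMonoidAlgebra ℚ S, inferInstance, inferInstance, inferInstance,
    AddMonoidAlgebra.gradeBy ℚ D, inferInstance, ?_, ?_, N₀, ?_⟩
  · intro i
    have := (hfin i).to_subtype
    exact Module.Finite.equiv (e i).symm
  · have key : ∀ n : ℕ, ∀ m : S, D m = n → (AddMonoidAlgebra.single m (1 : ℚ)) ∈
        Algebra.adjoin ℚ ((AddMonoidAlgebra.gradeBy ℚ D 1 :
          Submodule ℚ (AddMonoidAlgebra ℚ S)) : Set (AddMonoidAlgebra ℚ S)) := by
      intro n
      induction n with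
      | zero =>
        intro m hm
        have : m = 0 := Subtype.ext (h0 m.1 m.2 hm)
        rw [this, ← AddMonoidAlgebra.one_def]
        exact one_mem _
      | succ n ih =>
        intro m hm
        have hm' : deg m.1 = n + 1 := hm
        obtain ⟨b, hb, c, hc, hb1, hbc⟩ := hg m.1 m.2 (by omega)
        have h2 : m = ⟨b, hb⟩ + ⟨c, hc⟩ := Subtype.ext hbc
        have hcn : deg c = n := by
          rw [hbc, map_add, hb1] at hm'; omega
        have h3 : AddMonoidAlgebra.single m (1 : ℚ) =
            AddMonoidAlgebra.single (⟨b, hb⟩ : S) (1 : ℚ) * AddMonoidAlgebra.single ⟨c, hc⟩ 1 := by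
          rw [AddMonoidAlgebra.single_mul_single, h2, one_mul]
        rw [h3]
        refine mul_mem (Algebra.subset_adjoin ?_) (ih _ hcn)
        have := AddMonoidAlgebra.single_mem_gradeBy D (⟨b, hb⟩ : S) (1 : ℚ)
        have hb2 : D (⟨b, hb⟩ : S) = 1 := hb1
        rw [hb2] at this
        exact this
    rw [eq_top_iff]
    intro x _
    induction x using AddMonoidAlgebra.induction_on with
    | of m => exact key _ m rfl
    | add f g hf hg => exact add_mem (hf trivial) (hg trivial)
    | smul r f hf => exact Subalgebra.smul_mem _ (hf trivial) r
  · intro i hi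
    have := (hfin i).to_subtype
    have := Fintype.ofFinite (D ⁻¹' {i} : Set S)
    rw [(e i).finrank_eq, Module.finrank_finsupp_self, ← Nat.card_eq_fintype_card, hcard]
    have := hN i hi
    have h4 : ((({x | x ∈ S ∧ deg x = i}.ncard : ℤ)) : ℚ) = ((p.eval (i : ℤ) : ℤ) : ℚ) := by
      rw [this]
    rw [Int.cast_natCast] at h4
    rw [h4, Polynomial.eval_natCast_map]
    simp

theorem curve_count (n i : ℕ) [NeZero n] (hi : n ≤ i) :
    ((((Finset.univ : Finset (ZMod n)) ×ˢ Finset.range (i + 1)).filter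
      (fun x => x.1.val ≤ x.2)).card : ℤ) * 2 = 2 * n * i - n * (n - 3) := by
  rw [Finset.card_filter, Finset.sum_product]
  have h1 : ∀ r : ZMod n, (∑ e ∈ Finset.range (i + 1), if r.val ≤ e then 1 else 0)
      = i + 1 - r.val := by
    intro r
    rw [← Finset.card_filter]
    have : (Finset.range (i + 1)).filter (fun e => r.val ≤ e) = Finset.Ico r.val (i + 1) := by
      ext e; simp; omega
    rw [this, Nat.card_Ico]
  simp only [h1]
  have h2 : ∑ r : ZMod n, (i + 1 - r.val) = ∑ r ∈ Finset.range n, (i + 1 - r) := by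
    obtain ⟨m, rfl⟩ : ∃ m, n = m + 1 := ⟨n - 1, by have := NeZero.pos n; omega⟩
    exact Fin.sum_univ_eq_sum_range (fun r => i + 1 - r) (m + 1)
  rw [h2]
  have h3 : ∀ m : ℕ, m ≤ i → ((∑ r ∈ Finset.range m, (i + 1 - r) : ℕ) : ℤ) * 2
      = 2 * m * i - m * (m - 3) := by
    intro m hm
    induction m with
    | zero => simp
    | succ m ih =>
      rw [Finset.sum_range_succ, Nat.cast_add, add_mul, ih (by omega), Nat.cast_sub (by omega)]
      push_cast; ring
  exact h3 n hi

theorem GM0.base (k n : ℕ) (hn : 2 ≤ n) (c : ℤ) (hc : c * 2 = n * (n - 3)) :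
    GM0 ((X + 1) ^ k * (C (n : ℤ) * X - C c)) := by
  have : NeZero n := ⟨by omega⟩
  have : Fact (1 < n) := ⟨hn⟩
  let S : AddSubmonoid (ℕ × (Fin k → ℕ) × ZMod n × ℕ) :=
    { carrier := {x | (∀ j, x.2.1 j ≤ x.1) ∧ x.2.2.2 ≤ x.1 ∧ x.2.2.1.val ≤ x.2.2.2}
      zero_mem' := by simp
      add_mem' := by
        rintro ⟨i, v, r, e⟩ ⟨i', v', r', e'⟩ ⟨h1, h2, h3⟩ ⟨h1', h2', h3'⟩
        simp only at h1 h2 h3 h1' h2' h3'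
        refine ⟨fun j => ?_, ?_, ?_⟩
        · exact add_le_add (h1 j) (h1' j)
        · exact add_le_add h2 h2'
        · exact (ZMod.val_add_le r r').trans (add_le_add h3 h3') }
  have memS : ∀ i v r e, (i, v, r, e) ∈ S ↔ (∀ j, v j ≤ i) ∧ e ≤ i ∧ r.val ≤ e :=
    fun i v r e => Iff.rfl
  have hset : ∀ i, {x | x ∈ S ∧ AddMonoidHom.fst ℕ ((Fin k → ℕ) × ZMod n × ℕ) x = i} =
      ((({i} : Finset ℕ) ×ˢ (Fintype.piFinset (fun _ : Fin k => Finset.range (i + 1))) ×ˢ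
        (((Finset.univ : Finset (ZMod n)) ×ˢ Finset.range (i + 1)).filter
          (fun x => x.1.val ≤ x.2)) : Finset (ℕ × (Fin k → ℕ) × ZMod n × ℕ)) :
          Set (ℕ × (Fin k → ℕ) × ZMod n × ℕ)) := by
    intro i
    ext ⟨j, v, r, e⟩
    simp only [Set.mem_ofPred_eq, memS, AddMonoidHom.coe_fst, Finset.mem_coe, Finset.mem_product,
      Finset.mem_singleton, Fintype.mem_piFinset, Finset.mem_range, Finset.mem_filter,
      Finset.mem_univ, true_and, Nat.lt_succ_iff]
    constructor
    · rintro ⟨⟨h1, h2, h3⟩, rfl⟩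
      exact ⟨rfl, h1, h2, h3⟩
    · rintro ⟨rfl, h1, h2, h3⟩
      exact ⟨⟨h1, h2, h3⟩, rfl⟩
  refine ⟨_, inferInstance, S, AddMonoidHom.fst _ _, ?_, ?_, ?_, n, ?_⟩
  · rintro ⟨i, v, r, e⟩ ⟨h1, h2, h3⟩ h
    simp only [AddMonoidHom.coe_fst] at h h1 h2 h3
    subst h
    have he : e = 0 := by omega
    have hr : r = 0 := (ZMod.val_eq_zero r).1 (by omega)
    have hv : v = 0 := by ext j; have := h1 j; simp; omega
    rw [he, hr, hv]; rfl
  · rintro ⟨i, v, r, e⟩ ⟨h1, h2, h3⟩ h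
    simp only [AddMonoidHom.coe_fst] at h h1 h2 h3
    by_cases hr : r = 0
    · refine ⟨(1, fun j => if v j = 0 then 0 else 1, 0, if e = 0 then 0 else 1), ?_,
        (i - 1, fun j => v j - 1, 0, e - 1), ?_, rfl, ?_⟩
      · refine (memS _ _ _ _).2 ⟨fun j => ?_, ?_, ?_⟩
        · split_ifs <;> simp
        · split_ifs <;> simp
        · simp
      · refine (memS _ _ _ _).2 ⟨fun j => ?_, ?_, ?_⟩
        · exact Nat.sub_le_sub_right (h1 j) 1
        · omega
        · simp
      · simp only [Prod.mk_add_mk, Prod.mk.injEq, hr, add_zero, true_and]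
        refine ⟨by omega, ?_, by split_ifs <;> omega⟩
        ext j
        simp only [Pi.add_apply]
        split_ifs <;> omega
    · have hr' : r.val ≠ 0 := fun h => hr ((ZMod.val_eq_zero r).1 h)
      have h1v : (1 : ZMod n).val = 1 := ZMod.val_one n
      refine ⟨(1, fun j => if v j = 0 then 0 else 1, 1, 1), ?_,
        (i - 1, fun j => v j - 1, r - 1, e - 1), ?_, rfl, ?_⟩
      · refine (memS _ _ _ _).2 ⟨fun j => ?_, ?_, ?_⟩
        · split_ifs <;> simp
        · simp
        · rw [h1v]
      · refine (memS _ _ _ _).2 ⟨fun j => ?_, ?_, ?_⟩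
        · exact Nat.sub_le_sub_right (h1 j) 1
        · omega
        · rw [ZMod.val_sub (by omega), h1v]; omega
      · simp only [Prod.mk_add_mk, Prod.mk.injEq]
        refine ⟨by omega, ?_, by ring, by omega⟩
        ext j
        simp only [Pi.add_apply]
        split_ifs <;> omega
  · intro i
    rw [hset]; exact Finset.finite_toSet _
  · intro i hi
    rw [hset, Set.ncard_coe_finset, Finset.card_product, Finset.card_product,
      Fintype.card_piFinset]
    have := curve_count n i hi
    simp only [Finset.card_singleton, Finset.card_range, Finset.prod_const, Finset.card_univ,
      Fintype.card_fin, one_mul, eval_mul, eval_pow, eval_add, eval_X, eval_one, eval_sub, eval_C]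
    push_cast
    congr 1
    linarith

theorem coeff_base_top (k : ℕ) (n c : ℤ) :
    ((X + 1 : ℤ[X]) ^ k * (C n * X - C c)).coeff (k + 1) = n := by
  have : (X + 1 : ℤ[X]) ^ k * (C n * X - C c) = C n * ((X + 1) ^ k * X) - C c * (X + 1) ^ k := by
    ring
  rw [this, coeff_sub, coeff_C_mul, coeff_C_mul, coeff_mul_X, coeff_X_add_one_pow,
    coeff_X_add_one_pow]
  simp

theorem coeff_base_high (k i : ℕ) (hi : k + 1 < i) (n c : ℤ) :
    ((X + 1 : ℤ[X]) ^ k * (C n * X - C c)).coeff i = 0 := by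
  obtain ⟨i, rfl⟩ : ∃ j, i = j + 1 := ⟨i - 1, by omega⟩
  have : (X + 1 : ℤ[X]) ^ k * (C n * X - C c) = C n * ((X + 1) ^ k * X) - C c * (X + 1) ^ k := by
    ring
  rw [this, coeff_sub, coeff_C_mul, coeff_C_mul, coeff_mul_X, coeff_X_add_one_pow,
    coeff_X_add_one_pow, Nat.choose_eq_zero_of_lt (by omega), Nat.choose_eq_zero_of_lt (by omega)]
  simp

theorem coeff_base_second (k : ℕ) (n c : ℤ) :
    ((X + 1 : ℤ[X]) ^ k * (C n * X - C c)).coeff k = n * k - c := by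
  have : (X + 1 : ℤ[X]) ^ k * (C n * X - C c) = C n * ((X + 1) ^ k * X) - C c * (X + 1) ^ k := by
    ring
  rw [this, coeff_sub, coeff_C_mul, coeff_C_mul]
  cases k with
  | zero => simp
  | succ k =>
    rw [coeff_mul_X, coeff_X_add_one_pow, coeff_X_add_one_pow, Nat.choose_succ_self_right]
    simp

theorem coeff_base_low (k i : ℕ) (hi : i ≤ k) (n c : ℤ) (hn : 0 ≤ n) (hc : n * k ≤ c) :
    ((X + 1 : ℤ[X]) ^ k * (C n * X - C c)).coeff i ≤ 0 := by
  have : (X + 1 : ℤ[X]) ^ k * (C n * X - C c) = C n * ((X + 1) ^ k * X) - C c * (X + 1) ^ k := by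
    ring
  have hc0 : 0 ≤ c := le_trans (by positivity) hc
  rw [this, coeff_sub, coeff_C_mul, coeff_C_mul]
  cases i with
  | zero => simp [coeff_X_add_one_pow, hc0, mul_coeff_zero]
  | succ i =>
    rw [coeff_mul_X, coeff_X_add_one_pow, coeff_X_add_one_pow]
    have h1 := Nat.choose_succ_right_eq k i
    have h2 : k.choose i ≤ k.choose (i + 1) * k := by
      calc k.choose i ≤ k.choose i * (k - i) := Nat.le_mul_of_pos_right _ (by omega)
        _ = k.choose (i + 1) * (i + 1) := h1.symm
        _ ≤ _ := Nat.mul_le_mul_left _ hi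
    have h3 : (k.choose i : ℤ) ≤ k.choose (i + 1) * k := by exact_mod_cast h2
    have h4 := mul_le_mul_of_nonneg_left h3 hn
    have h5 := mul_le_mul_of_nonneg_right hc (Int.natCast_nonneg (k.choose (i + 1)))
    linarith

theorem main_ind (N F : ℤ) (hF : F ≤ -1) (hNF : 5 * F ≤ N) (d : ℕ) :
    ∀ p : ℤ[X], (∀ i, d < i → p.coeff i = 0) → (-10 * (d : ℤ) * F + 3 ≤ p.coeff d) →
      (∀ i, i < d → N ≤ p.coeff i) → GMZ (p - 1) := by
  induction d with
  | zero =>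
    intro p h1 h2 _
    have hp : p = C (p.coeff 0) := by
      ext i
      rcases Nat.eq_zero_or_pos i with rfl | hi
      · simp
      · rw [h1 i hi, coeff_C_of_ne_zero (by omega)]
    have := GMZ.const (p.coeff 0 - 1).toNat
    rw [Int.toNat_of_nonneg (by simp at h2; omega)] at this
    rw [hp]
    simpa using this
  | succ k ih =>
    intro p h1 h2 h3
    set n := p.coeff (k + 1) with hn
    have hkF : (k : ℤ) * F ≤ -k := by nlinarith
    push_cast at h2
    have hn10 : 10 * (k : ℤ) + 13 ≤ n := by nlinarith
    obtain ⟨c, hc⟩ : ∃ c, n * (n - 3) = c + c := by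
      have : Even (n * (n - 3)) := by
        rcases Int.even_or_odd n with h | h
        · exact h.mul_right _
        · exact (h.sub_odd (by decide)).mul_left _
      exact this
    have hcn : n * (k + 1) ≤ c := by nlinarith
    set G : ℤ[X] := (X + 1) ^ k * (C n * X - C c) with hG
    have hGM : GMZ G := by
      have := GM0.base k n.toNat (by omega) c
      rw [Int.toNat_of_nonneg (by omega)] at this
      exact (this (by linarith)).toGMZ
    have hrest : GMZ (p - G - 1) := by
      apply ih
      · intro i hi
        rw [coeff_sub]
        rcases Nat.lt_or_ge (k + 1) i with h | h
        · rw [h1 i h, hG, coeff_base_high k i h]; simp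
        · have : i = k + 1 := by omega
          rw [this, hG, coeff_base_top, ← hn]; simp
      · rw [coeff_sub, hG, coeff_base_second]
        have := h3 k (by omega)
        nlinarith
      · intro i hi
        rw [coeff_sub]
        have := h3 i (by omega)
        have h4 := coeff_base_low k i (by omega) n c (by linarith) (by linarith)
        rw [← hG] at h4
        linarith
    have := hGM.add hrest
    have e : G + (p - G - 1) = p - 1 := by ring
    rwa [e] at this

theorem sign_patterns_stmt1 (d : ℕ) (hd : 0 < d) (a : Fin d → ℤ) (N : ℤ)
    (hN : IsLeast (Set.range a) N) (hN2 : N < -2) (n : ℤ)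
    (hn : -10 * (d : ℤ) * ⌊(N : ℚ) / 5⌋ + 3 ≤ n) :
    IsHilbertPolynomial (Polynomial.C (n : ℚ) * Polynomial.X ^ d
      + ∑ i : Fin d, Polynomial.C ((a i : ℚ)) * Polynomial.X ^ (i : ℕ)) := by
  set F := ⌊(N : ℚ) / 5⌋ with hF
  have hF1 : (F : ℚ) ≤ N / 5 := Int.floor_le _
  have hNF : 5 * F ≤ N := by
    have : (5 * F : ℚ) ≤ N := by linarith
    exact_mod_cast this
  have hFneg : F ≤ -1 := by omega
  let p : ℤ[X] := C n * X ^ d + ∑ i : Fin d, C (a i) * X ^ (i : ℕ)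
  have hco : ∀ j, p.coeff j = (if j = d then n else 0) +
      ∑ i : Fin d, if j = (i : ℕ) then a i else 0 := by
    intro j
    simp only [p, coeff_add, finsetSum_coeff, coeff_C_mul, coeff_X_pow, mul_ite, mul_one, mul_zero]
  have hge : ∀ j, d ≤ j → (∑ i : Fin d, if j = (i : ℕ) then a i else 0) = 0 := by
    intro j hj
    apply Finset.sum_eq_zero
    intro i _
    rw [if_neg]; have := i.2; omega
  have hp := main_ind N F hFneg hNF d p ?_ ?_ ?_
  · have := hp.toGM0.isHilbert
    rw [sub_add_cancel] at this
    convert this using 1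
    simp [p, Polynomial.map_sum]
  · intro i hi
    rw [hco, hge i hi.le, if_neg (by omega), add_zero]
  · rw [hco, hge d le_rfl, if_pos rfl, add_zero]; exact hn
  · intro i hi
    rw [hco, if_neg (by omega), zero_add, Finset.sum_eq_single (⟨i, hi⟩ : Fin d)]
    · rw [if_pos rfl]; exact hN.2 ⟨_, rfl⟩
    · intro b _ hb
      rw [if_neg]; intro h; exact hb (Fin.ext h.symm)
    · simp
end

section
/- For every integer d ≥ 1 and every tuple s = (s_0, …, s_{d-1}) ∈ {-1, 0, 1}^d, there exists a Hilbert polynomial f(x) = Σ_{i=0}^d a_i x^i ∈ ℤ[x] of degree d such that sgn(a_i) = s_i for all i = 0, …, d-1. In other words, all sign patterns of the lower-order coefficients of Hilbert polynomials are possible. -/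
open Polynomial

/-- Combinatorial Hilbert polynomials: those coming from a graded commutative monoid `A`,
generated in degree one, modulo a monoid ideal `Z`. -/
def Comb (f : Polynomial ℚ) : Prop :=
  ∃ (A : Type) (_ : AddCommMonoid A) (deg : A →+ ℕ) (Z : Set A),
    (∀ a b, b ∈ Z → a + b ∈ Z) ∧ (0 ∉ Z) ∧ (∀ a, deg a = 0 → a = 0) ∧
    (∀ n a, deg a = n + 1 → ∃ b c, deg b = 1 ∧ deg c = n ∧ a = b + c) ∧
    (∀ n, {a | deg a = n ∧ a ∉ Z}.Finite) ∧
    ∃ N : ℕ, ∀ n : ℕ, N ≤ n → (({a | deg a = n ∧ a ∉ Z}.ncard : ℕ) : ℚ) = f.eval (n : ℚ)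

/-- The ideal of the monoid algebra spanned by `Z`. -/
def zIdeal {A : Type} [AddCommMonoid A] (Z : Set A) (hZ : ∀ a b, b ∈ Z → a + b ∈ Z) :
    Ideal (AddMonoidAlgebra ℚ A) where
  carrier := {f | ∀ a ∈ f.coeff.support, a ∈ Z}
  add_mem' := by
    classical
    intro f g hf hg a ha
    have := Finsupp.support_add ha
    rcases Finset.mem_union.1 this with h | h
    · exact hf a h
    · exact hg a h
  zero_mem' := by
    intro a ha
    simp at ha
  smul_mem' := by
    classical
    intro f g hg a ha
    have := AddMonoidAlgebra.support_coeff_mul_subset f g ha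
    obtain ⟨b, _, c, hc, rfl⟩ := Finset.mem_add.1 this
    exact hZ b c (hg c hc)

theorem exists_ring {A : Type} [AddCommMonoid A] (Z : Set A)
    (hZ : ∀ a b, b ∈ Z → a + b ∈ Z) :
    ∃ (R : Type) (_ : CommRing R) (_ : Algebra ℚ R) (m : A → R),
      m 0 = 1 ∧ (∀ a b, m (a + b) = m a * m b) ∧ (∀ a ∈ Z, m a = 0) ∧
      ∃ b : Module.Basis {a // a ∉ Z} ℚ R, ∀ a, b a = m a := by
  classical
  let I := zIdeal Z hZ
  let m : A → (AddMonoidAlgebra ℚ A ⧸ I) := fun a =>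
    Ideal.Quotient.mkₐ ℚ I (AddMonoidAlgebra.single a 1)
  have hmZ : ∀ a ∈ Z, m a = 0 := by
    intro a ha
    refine Ideal.Quotient.eq_zero_iff_mem.2 ?_
    intro b hb
    have := Finsupp.support_single_subset hb
    rw [Finset.mem_singleton] at this
    exact this ▸ ha
  have hli : LinearIndependent ℚ (fun a : {a // a ∉ Z} => m a) := by
    rw [linearIndependent_iff']
    intro s g hs i hi
    have h1 : Ideal.Quotient.mkₐ ℚ I (∑ i ∈ s, g i • AddMonoidAlgebra.single (i : A) (1:ℚ)) = 0 := by
      rw [map_sum, ← hs]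
      refine Finset.sum_congr rfl fun j _ => ?_
      rw [map_smul]
    have h2 := Ideal.Quotient.eq_zero_iff_mem.1 h1
    by_contra hne
    refine i.2 (h2 i ?_)
    rw [Finsupp.mem_support_iff, AddMonoidAlgebra.coeff_sum, Finsupp.finsetSum_apply,
      Finset.sum_eq_single i]
    · simpa using hne
    · intro j _ hj
      simp [Subtype.coe_injective.ne hj]
    · exact fun h => absurd hi h
  have hsp : ⊤ ≤ Submodule.span ℚ (Set.range (fun a : {a // a ∉ Z} => m a)) := by
    intro x _
    obtain ⟨y, rfl⟩ := Ideal.Quotient.mkₐ_surjective ℚ I x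
    induction y using AddMonoidAlgebra.induction_linear with
    | zero => simp
    | add f g hf hg => rw [map_add]; exact Submodule.add_mem _ (hf trivial) (hg trivial)
    | single a r =>
      have : Ideal.Quotient.mkₐ ℚ I (AddMonoidAlgebra.single a r) = r • m a := by
        simp only [m]
        rw [← map_smul]
        simp
      rw [this]
      refine Submodule.smul_mem _ _ ?_
      by_cases ha : a ∈ Z
      · rw [hmZ a ha]; exact Submodule.zero_mem _
      · exact Submodule.subset_span ⟨⟨a, ha⟩, rfl⟩
  refine ⟨AddMonoidAlgebra ℚ A ⧸ I, inferInstance, inferInstance, m, ?_, ?_, hmZ,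
    Module.Basis.mk hli hsp, ?_⟩
  · exact map_one (Ideal.Quotient.mkₐ ℚ I)
  · intro a b
    simp only [m]
    rw [← map_mul, AddMonoidAlgebra.single_mul_single, one_mul]
  · intro a; simp

theorem comb_hilbert {f : Polynomial ℚ} (hf : Comb f) : IsHilbertPolynomial f := by
  classical
  obtain ⟨A, _, deg, Z, hZ, h0, hd0, hgen, hfin, N, hN⟩ := hf
  obtain ⟨R, _, _, m, m0, madd, mZ, b, hb⟩ := exists_ring Z hZ
  let 𝒜 : ℕ → Submodule ℚ R := fun i => Submodule.span ℚ (m '' {a | deg a = i})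
  have hmem : ∀ a, m a ∈ 𝒜 (deg a) := fun a => Submodule.subset_span ⟨a, rfl, rfl⟩
  have gm : SetLike.GradedMonoid 𝒜 := by
    refine { one_mem := ?_, mul_mem := ?_ }
    · rw [← m0, ← map_zero deg]; exact hmem 0
    · intro i j x y hx hy
      have := Submodule.mul_mem_mul hx hy
      refine (?_ : 𝒜 i * 𝒜 j ≤ 𝒜 (i + j)) this
      rw [Submodule.span_mul_span, Submodule.span_le]
      rintro _ ⟨_, ⟨a, rfl, rfl⟩, _, ⟨c, rfl, rfl⟩, rfl⟩
      simp only [SetLike.mem_coe]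
      rw [← madd, ← map_add]
      exact hmem _
  let D : R →ₗ[ℚ] (DirectSum ℕ fun i => 𝒜 i) :=
    b.constr ℚ fun a => DirectSum.lof ℚ ℕ (fun i => 𝒜 i) (deg a) ⟨m a, hmem a⟩
  have hD : ∀ i (a : A) (ha : deg a = i) (h : m a ∈ 𝒜 i), D (m a) = DirectSum.lof ℚ ℕ (fun i => 𝒜 i) i ⟨m a, h⟩ := by
    rintro _ a rfl h
    by_cases ha : a ∈ Z
    · have : (⟨m a, h⟩ : 𝒜 (deg a)) = 0 := Subtype.ext (mZ a ha)
      rw [this, mZ a ha, map_zero, map_zero]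
    · have := b.constr_basis ℚ (fun a => DirectSum.lof ℚ ℕ (fun i => 𝒜 i) (deg a) ⟨m a, hmem a⟩) ⟨a, ha⟩
      rw [hb] at this
      exact this
  have hD' : ∀ i (x : R) (h : x ∈ 𝒜 i), D x = DirectSum.lof ℚ ℕ (fun i => 𝒜 i) i ⟨x, h⟩ := by
    intro i x h
    induction h using Submodule.span_induction with
    | mem x hx =>
      obtain ⟨a, ha, rfl⟩ := hx
      exact hD i a ha _
    | zero => rw [map_zero]; symm; exact map_zero (DirectSum.lof ℚ ℕ (fun i => 𝒜 i) i)
    | add x y hx hy h1 h2 => rw [map_add, h1, h2, ← map_add]; rfl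
    | smul r x hx h1 => rw [map_smul, h1, ← map_smul]; rfl
  let dec : DirectSum.Decomposition 𝒜 := DirectSum.Decomposition.ofLinearMap 𝒜 D (by
      refine b.ext fun a => ?_
      rw [LinearMap.comp_apply, hb, hD _ a rfl (hmem a)]
      simp) (by
      ext i x : 2
      rw [LinearMap.comp_apply, LinearMap.comp_apply]
      simp only [DirectSum.coeLinearMap_lof]
      rw [hD' i x x.2]
      rfl)
  let ga : GradedAlgebra 𝒜 := { gm, dec with }
  have hbi : ∀ i, 𝒜 i = Submodule.span ℚ (Set.range fun a : {a | deg a = i ∧ a ∉ Z} => m a) := by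
    intro i
    apply le_antisymm
    · rw [Submodule.span_le]
      rintro _ ⟨a, ha, rfl⟩
      by_cases haZ : a ∈ Z
      · rw [mZ a haZ]; exact Submodule.zero_mem _
      · exact Submodule.subset_span ⟨⟨a, ha, haZ⟩, rfl⟩
    · rw [Submodule.span_le]
      rintro _ ⟨⟨a, ha, haZ⟩, rfl⟩
      exact Submodule.subset_span ⟨a, ha, rfl⟩
  have hli : ∀ i, LinearIndependent ℚ (fun a : {a | deg a = i ∧ a ∉ Z} => m a) := by
    intro i
    have := b.linearIndependent.comp (fun a : {a | deg a = i ∧ a ∉ Z} => (⟨a.1, a.2.2⟩ : {a // a ∉ Z}))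
      (fun x y h => Subtype.ext (Subtype.mk.inj h))
    convert this using 1
    funext a
    simp [hb]
  refine ⟨ℚ, R, inferInstance, inferInstance, inferInstance, 𝒜, ga, ?_, ?_, N, ?_⟩
  · intro i
    have := (hfin i).to_subtype
    rw [hbi]
    exact FiniteDimensional.span_of_finite ℚ (Set.finite_range _)
  · have key : ∀ n a, deg a = n → m a ∈ Algebra.adjoin ℚ ((𝒜 1 : Submodule ℚ R) : Set R) := by
      intro n
      induction n with
      | zero => intro a ha; rw [hd0 a ha, m0]; exact one_mem _
      | succ n ih =>
        intro a ha
        obtain ⟨c, e, hc, he, rfl⟩ := hgen n a ha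
        rw [madd]
        refine mul_mem (Algebra.subset_adjoin ?_) (ih e he)
        rw [← hc]; exact hmem c
    rw [eq_top_iff]
    intro x _
    have hx : x ∈ Submodule.span ℚ (Set.range b) := by rw [b.span_eq]; trivial
    have : Submodule.span ℚ (Set.range b) ≤
        Subalgebra.toSubmodule (Algebra.adjoin ℚ ((𝒜 1 : Submodule ℚ R) : Set R)) := by
      rw [Submodule.span_le]
      rintro _ ⟨a, rfl⟩
      rw [hb]
      exact key _ a rfl
    exact this hx
  · intro i hi
    rw [← hN i hi, hbi, Module.finrank_eq_nat_card_basis (Module.Basis.span (hli i))]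
    rfl

theorem comb_zero : Comb 0 := by
  refine ⟨ℕ, inferInstance, AddMonoidHom.id ℕ, {a | 1 ≤ a}, ?_, ?_, ?_, ?_, ?_, 1, ?_⟩
  · intro a b hb; simp only [Set.mem_ofPred_eq] at *; omega
  · simp
  · simp
  · intro n a ha; exact ⟨1, n, rfl, rfl, by simp at ha; omega⟩
  · intro n; exact (Set.finite_singleton n).subset (fun a ha => ha.1)
  · intro n hn
    have : {a | AddMonoidHom.id ℕ a = n ∧ a ∉ {a : ℕ | 1 ≤ a}} = ∅ := by
      ext a; simp; omega
    rw [this]; simp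

theorem comb_one : Comb 1 := by
  refine ⟨ℕ, inferInstance, AddMonoidHom.id ℕ, ∅, ?_, ?_, ?_, ?_, ?_, 1, ?_⟩
  · simp
  · simp
  · simp
  · intro n a ha; exact ⟨1, n, rfl, rfl, by simp at ha; omega⟩
  · intro n; exact (Set.finite_singleton n).subset (fun a ha => ha.1)
  · intro n hn
    have : {a | AddMonoidHom.id ℕ a = n ∧ a ∉ (∅ : Set ℕ)} = {n} := by
      ext a; simp
    rw [this]; simp

theorem comb_add {f g : Polynomial ℚ} (hf : Comb f) (hg : Comb g) : Comb (f + g) := by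
  obtain ⟨A, _, da, Z, hZ, h0, hd0, hgen, hfin, N, hN⟩ := hf
  obtain ⟨B, _, db, Y, hY, k0, kd0, kgen, kfin, M, hM⟩ := hg
  have key : ∀ n, 1 ≤ n → {p : A × B | da.coprod db p = n ∧
      p ∉ {p : A × B | p.1 ∈ Z ∨ p.2 ∈ Y ∨ (p.1 ≠ 0 ∧ p.2 ≠ 0)}} =
      (fun a => (a, (0 : B))) '' {a | da a = n ∧ a ∉ Z} ∪
      (fun b => ((0 : A), b)) '' {b | db b = n ∧ b ∉ Y} := by
    intro n hn
    ext ⟨a, b⟩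
    simp only [AddMonoidHom.coprod_apply, Set.mem_ofPred_eq, Set.mem_union, Set.mem_image,
      Prod.mk.injEq]
    constructor
    · rintro ⟨h1, h2⟩
      push Not at h2
      obtain ⟨h3, h4, h5⟩ := h2
      by_cases ha : a = 0
      · subst ha
        right
        exact ⟨b, ⟨by simpa using h1, h4⟩, rfl, rfl⟩
      · have := h5 ha
        subst this
        left
        exact ⟨a, ⟨by simpa using h1, h3⟩, rfl, rfl⟩
    · rintro (⟨x, ⟨h1, h2⟩, rfl, rfl⟩ | ⟨x, ⟨h1, h2⟩, rfl, rfl⟩)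
      · simp [h1, h2, k0]
      · simp [h1, h2, h0]
  have z0 : ∀ p : A × B, da.coprod db p = 0 → p = 0 := by
    rintro ⟨a, b⟩ h
    simp only [AddMonoidHom.coprod_apply] at h
    rw [hd0 a (by omega), kd0 b (by omega)]; rfl
  refine ⟨A × B, inferInstance, da.coprod db,
    {p | p.1 ∈ Z ∨ p.2 ∈ Y ∨ (p.1 ≠ 0 ∧ p.2 ≠ 0)}, ?_, ?_, z0, ?_, ?_, N + M + 1, ?_⟩
  · rintro ⟨a, b⟩ ⟨c, e⟩ h
    simp only [Set.mem_ofPred_eq, Prod.mk_add_mk] at *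
    rcases h with h | h | ⟨h1, h2⟩
    · exact Or.inl (hZ _ _ h)
    · exact Or.inr (Or.inl (hY _ _ h))
    · refine Or.inr (Or.inr ⟨fun h => h1 (hd0 _ ?_), fun h => h2 (kd0 _ ?_)⟩)
      · have := congrArg da h
        rw [map_add, map_zero] at this; omega
      · have := congrArg db h
        rw [map_add, map_zero] at this; omega
  · simp [h0, k0]
  · rintro n ⟨a, b⟩ h
    simp only [AddMonoidHom.coprod_apply] at h
    rcases Nat.eq_zero_or_pos (da a) with ha | ha
    · have := hd0 a ha
      subst this
      obtain ⟨x, y, h1, h2, rfl⟩ := kgen n b (by omega)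
      exact ⟨(0, x), (0, y), by simp [h1], by simp [h2], by simp⟩
    · obtain ⟨x, y, h1, h2, rfl⟩ := hgen (da a - 1) a (by omega)
      refine ⟨(x, 0), (y, b), by simp [h1], ?_, by simp⟩
      simp only [AddMonoidHom.coprod_apply]
      rw [map_add] at h
      omega
  · intro n
    rcases Nat.eq_zero_or_pos n with rfl | hn
    · exact (Set.finite_singleton 0).subset (fun p hp => z0 p hp.1)
    · rw [key n hn]
      exact ((hfin n).image _).union ((kfin n).image _)
  · intro n hn
    rw [key n (by omega), Set.ncard_union_eq _ ((hfin n).image _) ((kfin n).image _),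
      Set.ncard_image_of_injective _ (fun x y h => (Prod.mk.inj h).1),
      Set.ncard_image_of_injective _ (fun x y h => (Prod.mk.inj h).2)]
    · rw [Nat.cast_add, hN n (by omega), hM n (by omega), eval_add]
    · rw [Set.disjoint_left]
      rintro _ ⟨a, ⟨h1, _⟩, rfl⟩ ⟨b, ⟨h2, _⟩, h⟩
      have := (Prod.mk.inj h).1
      subst this
      rw [map_zero] at h1
      omega

theorem comb_mul {f g : Polynomial ℚ} (hf : Comb f) (hg : Comb g) : Comb (f * g) := by
  obtain ⟨A, _, da, Z, hZ, h0, hd0, hgen, hfin, N, hN⟩ := hf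
  obtain ⟨B, _, db, Y, hY, k0, kd0, kgen, kfin, M, hM⟩ := hg
  let S : AddSubmonoid (A × B) :=
    (da.comp (AddMonoidHom.fst A B)).eqLocusM (db.comp (AddMonoidHom.snd A B))
  have hS : ∀ p : S, da p.1.1 = db p.1.2 := fun p => p.2
  let dg : S →+ ℕ := (da.comp (AddMonoidHom.fst A B)).comp S.subtype
  have hdg : ∀ p : S, dg p = da p.1.1 := fun p => rfl
  have key : ∀ n, Subtype.val '' {p : S | dg p = n ∧ p ∉ {p : S | p.1.1 ∈ Z ∨ p.1.2 ∈ Y}} =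
      {a | da a = n ∧ a ∉ Z} ×ˢ {b | db b = n ∧ b ∉ Y} := by
    intro n
    ext ⟨a, b⟩
    simp only [Set.mem_image, Set.mem_ofPred_eq, Set.mem_prod]
    constructor
    · rintro ⟨p, ⟨h1, h2⟩, h⟩
      have h3 := hS p
      rw [hdg] at h1
      rw [h] at h1 h2 h3
      push Not at h2
      simp only at *
      exact ⟨⟨h1, h2.1⟩, ⟨by omega, h2.2⟩⟩
    · rintro ⟨⟨h1, h2⟩, h3, h4⟩
      have h5 : da a = db b := by omega
      exact ⟨⟨(a, b), h5⟩, ⟨h1, by simp [h2, h4]⟩, rfl⟩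
  refine ⟨S, inferInstance, dg, {p | p.1.1 ∈ Z ∨ p.1.2 ∈ Y}, ?_, ?_, ?_, ?_, ?_, N + M, ?_⟩
  · rintro p q (h | h)
    · exact Or.inl (hZ _ _ h)
    · exact Or.inr (hY _ _ h)
  · rintro (h | h)
    · exact h0 h
    · exact k0 h
  · intro p hp
    have h1 := hS p
    rw [hdg] at hp
    refine Subtype.ext (Prod.ext (hd0 _ hp) (kd0 _ (by omega)))
  · intro n p hp
    have h1 := hS p
    rw [hdg] at hp
    obtain ⟨x, y, hx, hy, e⟩ := hgen n _ hp
    obtain ⟨x', y', hx', hy', e'⟩ := kgen n p.1.2 (by omega)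
    have i1 : da x = db x' := by omega
    have i2 : da y = db y' := by omega
    exact ⟨⟨(x, x'), i1⟩, ⟨(y, y'), i2⟩, hx, hy, Subtype.ext (Prod.ext e e')⟩
  · intro n
    refine Set.Finite.of_finite_image (f := Subtype.val) ?_ Subtype.val_injective.injOn
    rw [key]
    exact (hfin n).prod (kfin n)
  · intro n hn
    rw [← Set.ncard_image_of_injective _ Subtype.val_injective, key, Set.ncard_prod, Nat.cast_mul,
      hN n (by omega), hM n (by omega), eval_mul]

theorem comb_curve (m : ℕ) (hm : 1 ≤ m) (f : Polynomial ℚ)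
    (hf : ∀ n, m ≤ n → ((∑ c ∈ Finset.range m, (n - c + 1) : ℕ) : ℚ) = f.eval (n : ℚ)) :
    Comb f := by
  let dg : ℕ × ℕ × ℕ →+ ℕ :=
    { toFun := fun p => p.1 + p.2.1 + p.2.2
      map_zero' := rfl
      map_add' := by rintro ⟨a, b, c⟩ ⟨x, y, z⟩; simp; ring }
  have hdg : ∀ a b c, dg (a, b, c) = a + b + c := fun _ _ _ => rfl
  refine ⟨ℕ × ℕ × ℕ, inferInstance, dg, {p | m ≤ p.2.2}, ?_, ?_, ?_, ?_, ?_, m, ?_⟩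
  · rintro ⟨a, b, c⟩ ⟨x, y, z⟩ h
    simp at *; omega
  · simp; omega
  · rintro ⟨a, b, c⟩ h
    rw [hdg] at h
    simp; omega
  · rintro n ⟨a, b, c⟩ h
    rw [hdg] at h
    rcases Nat.eq_zero_or_pos a with rfl | ha
    · rcases Nat.eq_zero_or_pos b with rfl | hb
      · exact ⟨(0, 0, 1), (0, 0, c - 1), rfl, by rw [hdg]; omega, by simp; omega⟩
      · exact ⟨(0, 1, 0), (0, b - 1, c), rfl, by rw [hdg]; omega, by simp; omega⟩
    · exact ⟨(1, 0, 0), (a - 1, b, c), rfl, by rw [hdg]; omega, by simp; omega⟩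
  · intro n
    refine ((Set.finite_Iic n).prod ((Set.finite_Iic n).prod (Set.finite_Iic n))).subset ?_
    rintro ⟨a, b, c⟩ ⟨h, _⟩
    rw [hdg] at h
    simp; omega
  · intro n hn
    rw [← hf n hn]
    let T := (Finset.range m).sigma fun c => Finset.HasAntidiagonal.antidiagonal (n - c)
    let φ : (Σ _ : ℕ, ℕ × ℕ) → ℕ × ℕ × ℕ := fun p => (p.2.1, p.2.2, p.1)
    have hφ : Function.Injective φ := by
      rintro ⟨c, a, b⟩ ⟨z, x, y⟩ h
      simp [φ] at h
      obtain ⟨rfl, rfl, rfl⟩ := h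
      rfl
    have : {p | dg p = n ∧ p ∉ {p : ℕ × ℕ × ℕ | m ≤ p.2.2}} = φ '' (T : Set _) := by
      ext ⟨a, b, c⟩
      simp only [Set.mem_ofPred_eq, hdg, Set.mem_image]
      constructor
      · rintro ⟨h1, h2⟩
        exact ⟨⟨c, a, b⟩, by simp [T]; omega, rfl⟩
      · rintro ⟨⟨z, x, y⟩, h, e⟩
        simp [T] at h
        simp [φ] at e
        omega
    rw [this, Set.ncard_image_of_injective _ hφ, Set.ncard_coe_finset, Finset.card_sigma]
    simp

theorem comb_three : Comb (3 * X) := by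
  refine comb_curve 3 (by norm_num) _ fun n hn => ?_
  obtain ⟨k, rfl⟩ := Nat.exists_eq_add_of_le hn
  have : ∑ c ∈ Finset.range 3, (3 + k - c + 1) = 3 * (3 + k) := by
    simp only [Finset.sum_range_succ, Finset.sum_range_zero]; omega
  rw [this]; simp

theorem comb_five : Comb (5 * X - 5) := by
  refine comb_curve 5 (by norm_num) _ fun n hn => ?_
  obtain ⟨k, rfl⟩ := Nat.exists_eq_add_of_le hn
  have : ∑ c ∈ Finset.range 5, (5 + k - c + 1) = 5 * (4 + k) := by
    simp only [Finset.sum_range_succ, Finset.sum_range_zero]; omega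
  rw [this]; simp; ring

/-- The combinatorial Hilbert polynomials form a semiring. -/
def combSub : Subsemiring (Polynomial ℚ) where
  carrier := {f | Comb f}
  mul_mem' := comb_mul
  one_mem' := comb_one
  add_mem' := comb_add
  zero_mem' := comb_zero

theorem comb_main (d : ℕ) (σ : ℕ → ℤ) (hσ : ∀ j, -1 ≤ σ j) :
    Comb ((5 * 3 ^ d) * (((d : ℚ[X]) + 1) * X ^ d + ∑ j ∈ Finset.range d, ((σ j : ℤ) : ℚ[X]) * X ^ j)) := by
  have tel : ∀ d : ℕ, ∑ j ∈ Finset.range d, (((j + 1 : ℕ) : ℚ[X]) * X ^ (j + 1) - (j : ℚ[X]) * X ^ j)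
      = (d : ℚ[X]) * X ^ d := by
    intro d
    rw [Finset.sum_range_sub (fun j => (j : ℚ[X]) * X ^ j)]
    simp
  have e : ((5 * 3 ^ d) * (((d : ℚ[X]) + 1) * X ^ d + ∑ j ∈ Finset.range d, ((σ j : ℤ) : ℚ[X]) * X ^ j))
      = 5 * (3 * X) ^ d + ∑ j ∈ Finset.range d,
        (((j + 1 : ℕ) : ℚ[X]) * 3 ^ (d - j) * (3 * X) ^ j * (5 * X - 5) +
          5 * 3 ^ (d - j) * ((σ j + 1).toNat : ℚ[X]) * (3 * X) ^ j) := by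
    have hs : ∀ j ∈ Finset.range d,
        (((j + 1 : ℕ) : ℚ[X]) * 3 ^ (d - j) * (3 * X) ^ j * (5 * X - 5) +
          5 * 3 ^ (d - j) * ((σ j + 1).toNat : ℚ[X]) * (3 * X) ^ j) =
        (5 * 3 ^ d) * (((j + 1 : ℕ) : ℚ[X]) * X ^ (j + 1) - (j : ℚ[X]) * X ^ j) +
          (5 * 3 ^ d) * (((σ j : ℤ) : ℚ[X]) * X ^ j) := by
      intro j hj
      have h1 : (3 : ℚ[X]) ^ d = 3 ^ (d - j) * 3 ^ j := by
        rw [← pow_add, Nat.sub_add_cancel (Finset.mem_range.1 hj).le]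
      have h2 : (((σ j + 1).toNat : ℕ) : ℚ[X]) = (σ j : ℚ[X]) + 1 := by
        have h3 : (((σ j + 1).toNat : ℤ)) = σ j + 1 := Int.toNat_of_nonneg (by linarith [hσ j])
        have h4 := congrArg (Int.cast : ℤ → ℚ[X]) h3
        rw [Int.cast_natCast, Int.cast_add, Int.cast_one] at h4
        exact h4
      rw [h1, h2, mul_pow, Nat.cast_add, Nat.cast_one]
      generalize (3 : ℚ[X]) ^ (d - j) = u
      generalize (3 : ℚ[X]) ^ j = v
      generalize ((σ j : ℤ) : ℚ[X]) = w
      ring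
    rw [Finset.sum_congr rfl hs, Finset.sum_add_distrib, ← Finset.mul_sum, ← Finset.mul_sum, tel,
      mul_pow]
    ring
  rw [e]
  change _ ∈ combSub
  have h3 : (3 * X : ℚ[X]) ∈ combSub := comb_three
  have h5 : (5 * X - 5 : ℚ[X]) ∈ combSub := comb_five
  have n3 : (3 : ℚ[X]) ∈ combSub := natCast_mem combSub 3
  have n5 : (5 : ℚ[X]) ∈ combSub := natCast_mem combSub 5
  refine add_mem (mul_mem n5 (pow_mem h3 _)) (sum_mem fun j _ => add_mem ?_ ?_)
  · exact mul_mem (mul_mem (mul_mem (natCast_mem _ _) (pow_mem n3 _)) (pow_mem h3 _)) h5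
  · exact mul_mem (mul_mem (mul_mem n5 (pow_mem n3 _)) (natCast_mem _ _)) (pow_mem h3 _)

theorem sign_patterns_stmt2 (d : ℕ) (hd : 1 ≤ d) (s : Fin d → ℤ)
    (hs : ∀ i, s i = -1 ∨ s i = 0 ∨ s i = 1) :
    ∃ f : Polynomial ℤ, f.natDegree = d ∧
      IsHilbertPolynomial (f.map (Int.castRingHom ℚ)) ∧
      ∀ i : Fin d, Int.sign (f.coeff (i : ℕ)) = s i := by
  let σ : ℕ → ℤ := fun j => if h : j < d then s ⟨j, h⟩ else 0
  have hσ : ∀ j, -1 ≤ σ j := by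
    intro j
    simp only [σ]
    split_ifs with h
    · rcases hs ⟨j, h⟩ with h | h | h <;> rw [h] <;> norm_num
    · norm_num
  let f : ℤ[X] := C (5 * 3 ^ d) * (C ((d : ℤ) + 1) * X ^ d + ∑ j ∈ Finset.range d, C (σ j) * X ^ j)
  have hc : ∀ n, f.coeff n =
      (5 * 3 ^ d) * ((if n = d then (d : ℤ) + 1 else 0) + if n < d then σ n else 0) := by
    intro n
    simp only [f, coeff_C_mul, coeff_add, finsetSum_coeff, coeff_X_pow]
    simp
  refine ⟨f, ?_, ?_, ?_⟩
  · refine natDegree_eq_of_le_of_coeff_ne_zero ?_ ?_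
    · rw [natDegree_le_iff_coeff_eq_zero]
      intro n hn
      rw [hc, if_neg (by omega), if_neg (by omega)]
      simp
    · rw [hc]
      simp
      omega
  · apply comb_hilbert
    have := comb_main d σ hσ
    convert this using 1
    simp [f, Polynomial.map_sum, Polynomial.map_mul]
  · intro i
    rw [hc, if_neg (by have := i.2; omega), if_pos i.2, zero_add, Int.sign_mul,
      Int.sign_eq_one_of_pos (by positivity), one_mul]
    simp only [σ]
    rw [dif_pos i.2]
    rcases hs i with h | h | h <;> simp [h]
end

section
/- Let d be a non-negative integer and t a positive integer, and set f(x) = t·x^d. Then f(x) is a Hilbert polynomial if and only if one of the following holds: (i) d = 0; (ii) d = 1 and t ≥ 3; (iii) d = 2 and t ≥ 3; (iv) d ≥ 3. -/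
open Polynomial

namespace SP

/-- number of exponent vectors of total degree `n` in `S`. -/
noncomputable def cnt {σ : Type} [Fintype σ] (S : Set (σ → ℕ)) (n : ℕ) : ℕ :=
  Set.ncard {a | a ∈ S ∧ ∑ i, a i = n}

lemma finite_deg {σ : Type} [Fintype σ] (n : ℕ) : {a : σ → ℕ | ∑ i, a i = n}.Finite := by
  classical
  apply (Set.finite_Iic (fun _ : σ => n)).subset
  intro a ha i
  simp only [Set.mem_ofPred_eq] at ha
  rw [← ha]
  exact Finset.single_le_sum (f := a) (fun _ _ => Nat.zero_le _) (Finset.mem_univ i)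

lemma finite_cnt {σ : Type} [Fintype σ] (S : Set (σ → ℕ)) (n : ℕ) :
    {a | a ∈ S ∧ ∑ i, a i = n}.Finite :=
  (finite_deg n).subset fun _ h => h.2

section Quot
variable {σ : Type} [Fintype σ] (S : Set (σ → ℕ))

open MvPolynomial

/-- the monomial ideal. -/
noncomputable def monI : Ideal (MvPolynomial σ ℚ) :=
  Ideal.span ((fun a => monomial a (1 : ℚ)) '' {a : σ →₀ ℕ | ⇑a ∉ S})

/-- grading on the quotient. -/
noncomputable def gr (n : ℕ) : Submodule ℚ (MvPolynomial σ ℚ ⧸ monI S) :=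
  (homogeneousSubmodule σ ℚ n).map (Ideal.Quotient.mkₐ ℚ (monI S)).toLinearMap

lemma mk_mem_gr {n : ℕ} {p : MvPolynomial σ ℚ} (hp : p.IsHomogeneous n) :
    Ideal.Quotient.mkₐ ℚ (monI S) p ∈ gr S n :=
  ⟨p, hp, rfl⟩

instance : SetLike.GradedMonoid (gr S) where
  one_mem := by
    have := mk_mem_gr S (isHomogeneous_one σ ℚ)
    simpa using this
  mul_mem := by
    rintro i j _ _ ⟨p, hp, rfl⟩ ⟨q, hq, rfl⟩
    have := mk_mem_gr S (IsHomogeneous.mul hp hq)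
    simpa using this

/-- decomposition on polynomials. -/
noncomputable def dec0 : MvPolynomial σ ℚ →ₐ[ℚ] DirectSum ℕ (fun i => gr S i) :=
  aeval (fun i => DirectSum.of (fun i => gr S i) 1 ⟨_, mk_mem_gr S (isHomogeneous_X ℚ i)⟩)

lemma dec0_monomial (a : σ →₀ ℕ) (n : ℕ) (h : (monomial a (1 : ℚ)).IsHomogeneous n) :
    dec0 S (monomial a 1) = DirectSum.of (fun i => gr S i) n ⟨_, mk_mem_gr S h⟩ := by
  induction a using Finsupp.induction_linear generalizing n with
  | zero =>
    have h0 : n = 0 := by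
      have := h (d := 0) (by simp)
      simpa using this.symm
    subst h0
    have : (monomial 0 (1:ℚ) : MvPolynomial σ ℚ) = 1 := rfl
    simp only [this, map_one]
    rfl
  | add f g hf hg =>
    have h1 : (monomial f (1:ℚ)).IsHomogeneous f.degree := isHomogeneous_monomial _ rfl
    have h2 : (monomial g (1:ℚ)).IsHomogeneous g.degree := isHomogeneous_monomial _ rfl
    have h3 : (monomial (f+g) (1:ℚ)) = monomial f 1 * monomial g 1 := by
      simp [monomial_mul]
    have h4 : n = f.degree + g.degree := by
      have h' : (monomial (f+g) (1:ℚ)).IsHomogeneous (f.degree + g.degree) := by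
        rw [h3]; exact h1.mul h2
      exact h.inj_right h' (by simp)
    subst h4
    simp only [h3, map_mul, hf _ h1, hg _ h2]
    rw [DirectSum.of_mul_of]
    rfl
  | single i e =>
    have h1 : (monomial (Finsupp.single i e) (1:ℚ)) = X i ^ e := by
      rw [MvPolynomial.X_pow_eq_monomial]
    have h4 : n = e := by
      have h' : (monomial (Finsupp.single i e) (1:ℚ)).IsHomogeneous e := by
        rw [h1]; simpa using (isHomogeneous_X ℚ i).pow e
      exact h.inj_right h' (by simp)
    subst h4
    simp only [h1, map_pow]
    rw [dec0, MvPolynomial.aeval_X, DirectSum.ofPow]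
    apply DirectSum.of_eq_of_gradedMonoid_eq
    apply Sigma.subtype_ext
    · change n * 1 = n
      simp
    · change Ideal.Quotient.mk (monI S) (X i) ^ n = _
      simp [GradedMonoid.mk]

lemma homog_mem_span {n : ℕ} {p : MvPolynomial σ ℚ} (hp : p.IsHomogeneous n) :
    p ∈ Submodule.span ℚ ((fun a : σ →₀ ℕ => monomial a (1:ℚ)) '' {a | a.degree = n}) := by
  rw [p.as_sum]
  apply Submodule.sum_mem
  intro a ha
  have : monomial a (coeff a p) = (coeff a p) • monomial a (1:ℚ) := by
    rw [MvPolynomial.smul_monomial]; simp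
  rw [this]
  apply Submodule.smul_mem
  apply Submodule.subset_span
  refine ⟨a, ?_, rfl⟩
  have := hp (mem_support_iff.mp ha)
  rw [Set.mem_ofPred_eq, ← this, Finsupp.degree_eq_weight_one]; rfl

lemma dec0_homog {n : ℕ} {p : MvPolynomial σ ℚ} (hp : p.IsHomogeneous n) :
    dec0 S p = DirectSum.of (fun i => gr S i) n ⟨_, mk_mem_gr S hp⟩ := by
  have key : ∀ h : Ideal.Quotient.mkₐ ℚ (monI S) p ∈ gr S n,
      dec0 S p = DirectSum.of (fun i => gr S i) n ⟨_, h⟩ := by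
    have hsub : ∀ q ∈ Submodule.span ℚ
        ((fun a : σ →₀ ℕ => monomial a (1:ℚ)) '' {a | a.degree = n}),
        Ideal.Quotient.mkₐ ℚ (monI S) q ∈ gr S n := by
      intro q hq
      apply mk_mem_gr
      rw [← mem_homogeneousSubmodule]
      refine Submodule.span_le.mpr ?_ hq
      rintro _ ⟨a, ha, rfl⟩
      exact isHomogeneous_monomial _ ha
    refine Submodule.span_induction (p := fun q _ =>
      ∀ h : Ideal.Quotient.mkₐ ℚ (monI S) q ∈ gr S n,
      dec0 S q = DirectSum.of (fun i => gr S i) n ⟨_, h⟩) ?_ ?_ ?_ ?_ (homog_mem_span hp)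
    · rintro _ ⟨a, ha, rfl⟩ h
      exact dec0_monomial S a n (isHomogeneous_monomial _ ha)
    · intro h
      simp only [map_zero]
      exact (map_zero _).symm
    · intro x y hx hy ihx ihy h
      rw [map_add, ihx (hsub x hx), ihy (hsub y hy), ← map_add]
      congr 1
    · intro c x hx ihx h
      rw [map_smul, ihx (hsub x hx)]
      change c • DirectSum.lof ℚ ℕ (fun i => gr S i) n _ = DirectSum.lof ℚ ℕ (fun i => gr S i) n _
      rw [← map_smul]
      congr 1
  exact key _

lemma dec0_monI : ∀ a ∈ monI S, dec0 S a = 0 := by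
  intro a ha
  have : monI S ≤ RingHom.ker (dec0 S) := by
    refine Ideal.span_le.mpr ?_
    rintro _ ⟨b, hb, rfl⟩
    have h1 : (monomial b (1:ℚ)).IsHomogeneous b.degree := isHomogeneous_monomial _ rfl
    change dec0 S _ = 0
    rw [dec0_monomial S b _ h1]
    rw [← map_zero (DirectSum.of (fun i => gr S i) b.degree)]
    congr 1
    ext
    simp only [Ideal.Quotient.mkₐ_eq_mk, ZeroMemClass.coe_zero]
    rw [Ideal.Quotient.eq_zero_iff_mem]
    exact Ideal.subset_span ⟨b, hb, rfl⟩
  exact this ha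

noncomputable instance instGr : GradedAlgebra (gr S) :=
  GradedAlgebra.ofAlgHom (gr S) (Ideal.Quotient.liftₐ (monI S) (dec0 S) (dec0_monI S))
    (by
      apply Ideal.Quotient.algHom_ext
      apply MvPolynomial.algHom_ext
      intro i
      change DirectSum.coeAlgHom (gr S) (dec0 S (X i)) = _
      rw [dec0, MvPolynomial.aeval_X]
      exact DirectSum.coeAlgHom_of _ _ _)
    (by
      rintro i ⟨_, p, hp, rfl⟩
      exact dec0_homog S hp)

lemma gr_adjoin : Algebra.adjoin ℚ ((gr S 1 : Submodule ℚ _) : Set (MvPolynomial σ ℚ ⧸ monI S)) = ⊤ := by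
  rw [eq_top_iff]
  have h1 : (⊤ : Subalgebra ℚ (MvPolynomial σ ℚ ⧸ monI S)) =
      (⊤ : Subalgebra ℚ (MvPolynomial σ ℚ)).map (Ideal.Quotient.mkₐ ℚ (monI S)) := by
    rw [Algebra.map_top, eq_comm, AlgHom.range_eq_top]
    exact Ideal.Quotient.mkₐ_surjective _ _
  rw [h1, ← MvPolynomial.adjoin_range_X, AlgHom.map_adjoin]
  apply Algebra.adjoin_mono
  rintro _ ⟨_, ⟨i, rfl⟩, rfl⟩
  exact mk_mem_gr S (isHomogeneous_X ℚ i)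

lemma gr_finrank (hS : IsLowerSet S) (n : ℕ) :
    FiniteDimensional ℚ (gr S n) ∧ Module.finrank ℚ (gr S n) = cnt S n := by
  classical
  let T : Set (σ → ℕ) := {a | a ∈ S ∧ ∑ i, a i = n}
  have hT : T.Finite := finite_cnt S n
  have : Fintype T := hT.fintype
  let e : (σ →₀ ℕ) ≃ (σ → ℕ) := Finsupp.equivFunOnFinite
  let b : T → MvPolynomial σ ℚ ⧸ monI S := fun a =>
    Ideal.Quotient.mkₐ ℚ (monI S) (monomial (e.symm a.1) 1)
  have hspan : gr S n = Submodule.span ℚ (Set.range b) := by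
    apply le_antisymm
    · rintro _ ⟨p, hp, rfl⟩
      have := Submodule.mem_map_of_mem (f := (Ideal.Quotient.mkₐ ℚ (monI S)).toLinearMap)
        (homog_mem_span hp)
      rw [Submodule.map_span] at this
      refine Submodule.span_le.mpr ?_ this
      rintro _ ⟨_, ⟨a, ha, rfl⟩, rfl⟩
      by_cases haS : (⇑a) ∈ S
      · apply Submodule.subset_span
        refine ⟨⟨a, haS, ?_⟩, ?_⟩
        · rw [Set.mem_ofPred_eq, Finsupp.degree_eq_sum] at ha
          exact ha
        · have : e.symm (⇑a) = a := e.symm_apply_apply a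
          simp only [b, this]; rfl
      · have : (Ideal.Quotient.mkₐ ℚ (monI S)).toLinearMap (monomial a 1) = 0 := by
          change Ideal.Quotient.mk (monI S) _ = 0
          rw [Ideal.Quotient.eq_zero_iff_mem]
          exact Ideal.subset_span ⟨a, haS, rfl⟩
        simp only [this]
        exact Submodule.zero_mem _
    · rw [Submodule.span_le]
      rintro _ ⟨a, rfl⟩
      apply mk_mem_gr
      apply isHomogeneous_monomial
      rw [Finsupp.degree_eq_sum]
      exact a.2.2
  have hli : LinearIndependent ℚ b := by
    rw [Fintype.linearIndependent_iff]
    intro g hg a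
    have h1 : ∑ a : T, g a • b a =
        Ideal.Quotient.mk (monI S) (∑ a : T, monomial (e.symm a.1) (g a)) := by
      rw [map_sum]
      apply Finset.sum_congr rfl
      intro x _
      simp only [b]
      rw [← map_smul, MvPolynomial.smul_monomial]
      simp
    rw [h1, Ideal.Quotient.eq_zero_iff_mem, monI, mem_ideal_span_monomial_image] at hg
    have hc : coeff (e.symm a.1) (∑ a : T, monomial (e.symm a.1) (g a)) = g a := by
      rw [MvPolynomial.coeff_sum, Finset.sum_eq_single a]
      · simp
      · intro x _ hx
        rw [MvPolynomial.coeff_monomial, if_neg]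
        intro h
        exact hx (Subtype.ext (e.symm.injective h))
      · simp
    by_contra hga
    obtain ⟨s, hs, hle⟩ := hg (e.symm a.1) (by rw [MvPolynomial.mem_support_iff, hc]; exact hga)
    apply hs
    exact hS (show ⇑s ≤ a.1 from hle) a.2.1
  constructor
  · rw [hspan]
    exact FiniteDimensional.span_of_finite ℚ (Set.finite_range b)
  · rw [hspan, finrank_span_eq_card hli, cnt, ← Nat.card_coe_set_eq, Nat.card_eq_fintype_card]

end Quot

/-- realizability of a numerical function as eventual count of a lower set. -/
def HR (f : ℕ → ℚ) : Prop :=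
  ∃ (σ : Type) (_ : Fintype σ) (S : Set (σ → ℕ)), IsLowerSet S ∧
    ∃ N : ℕ, ∀ n, N ≤ n → (cnt S n : ℚ) = f n

lemma hilb_of_HR (f : Polynomial ℚ) (h : HR (fun n => f.eval (n : ℚ))) :
    IsHilbertPolynomial f := by
  obtain ⟨σ, _, S, hS, N, hN⟩ := h
  refine ⟨ℚ, MvPolynomial σ ℚ ⧸ monI S, inferInstance, inferInstance, inferInstance, gr S,
    instGr S, fun i => (gr_finrank S hS i).1, gr_adjoin S, N, fun i hi => ?_⟩
  rw [(gr_finrank S hS i).2]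
  exact hN i hi

end SP

namespace SP

lemma HR.add {f g : ℕ → ℚ} (hf : HR f) (hg : HR g) : HR (fun n => f n + g n) := by
  classical
  obtain ⟨σ, _, S, hS, N, hN⟩ := hf
  obtain ⟨τ, _, T, hT, M, hM⟩ := hg
  refine ⟨σ ⊕ τ, inferInstance,
    {a | ((∀ j, a (Sum.inr j) = 0) ∧ (fun i => a (Sum.inl i)) ∈ S) ∨
      ((∀ i, a (Sum.inl i) = 0) ∧ (fun j => a (Sum.inr j)) ∈ T)}, ?_, N + M + 1, ?_⟩
  · intro a b hba h
    rcases h with ⟨h1, h2⟩ | ⟨h1, h2⟩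
    · exact Or.inl ⟨fun j => Nat.le_zero.mp ((hba _).trans (h1 j).le), hS (fun i => hba _) h2⟩
    · exact Or.inr ⟨fun j => Nat.le_zero.mp ((hba _).trans (h1 j).le), hT (fun i => hba _) h2⟩
  · intro n hn
    beta_reduce
    rw [← hN n (by omega), ← hM n (by omega), ← Nat.cast_add]
    congr 1
    unfold cnt
    have e1 : Function.Injective (fun a : σ → ℕ => (Sum.elim a 0 : σ ⊕ τ → ℕ)) := by
      intro a b h
      funext i
      exact congrFun h (Sum.inl i)
    have e2 : Function.Injective (fun a : τ → ℕ => (Sum.elim 0 a : σ ⊕ τ → ℕ)) := by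
      intro a b h
      funext i
      exact congrFun h (Sum.inr i)
    rw [← Set.ncard_image_of_injective _ e1, ← Set.ncard_image_of_injective _ e2,
      ← Set.ncard_union_eq ?_ ((finite_cnt _ _).image _) ((finite_cnt _ _).image _)]
    · congr 1
      ext a
      simp only [Set.mem_ofPred_eq, Set.mem_union, Set.mem_image, Fintype.sum_sum_type]
      constructor
      · rintro ⟨⟨h1, h2⟩ | ⟨h1, h2⟩, h3⟩
        · left
          refine ⟨_, ⟨h2, by simpa [h1] using h3⟩, ?_⟩
          funext x
          rcases x with x | x <;> simp [h1]
        · right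
          refine ⟨_, ⟨h2, by simpa [h1] using h3⟩, ?_⟩
          funext x
          rcases x with x | x <;> simp [h1]
      · rintro (⟨b, ⟨h1, h2⟩, rfl⟩ | ⟨b, ⟨h1, h2⟩, rfl⟩)
        · exact ⟨Or.inl ⟨by simp, by simpa using h1⟩, by simpa using h2⟩
        · exact ⟨Or.inr ⟨by simp, by simpa using h1⟩, by simpa using h2⟩
    · rw [Set.disjoint_left]
      rintro _ ⟨b, ⟨h1, h2⟩, rfl⟩ ⟨c, ⟨h3, h4⟩, h5⟩
      have : b = 0 := by
        funext i
        exact (congrFun h5 (Sum.inl i)).symm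
      subst this
      simp at h2
      omega

lemma exists_matrix {σ τ : Type} [Fintype σ] [Fintype τ] (n : ℕ) :
    ∀ (p : σ → ℕ) (q : τ → ℕ), ∑ i, p i = n → ∑ j, q j = n →
    ∃ A : σ × τ → ℕ, (∀ i, ∑ j, A (i, j) = p i) ∧ (∀ j, ∑ i, A (i, j) = q j) := by
  classical
  induction n with
  | zero =>
    intro p q hp hq
    refine ⟨0, ?_, ?_⟩
    · intro i
      simp at hp
      simp [hp]
    · intro i
      simp at hq
      simp [hq]
  | succ n ih =>
    intro p q hp hq
    obtain ⟨i, hi⟩ : ∃ i, p i ≠ 0 := by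
      by_contra! h
      simp [h] at hp
    obtain ⟨j, hj⟩ : ∃ i, q i ≠ 0 := by
      by_contra! h
      simp [h] at hq
    have hp' : p = (p - Pi.single i 1) + Pi.single i 1 := by
      funext x
      by_cases hx : x = i
      · subst hx; simp; omega
      · simp [hx]
    have hq' : q = (q - Pi.single j 1) + Pi.single j 1 := by
      funext x
      by_cases hx : x = j
      · subst hx; simp; omega
      · simp [hx]
    obtain ⟨A, h1, h2⟩ := ih (p - Pi.single i 1) (q - Pi.single j 1)
      (by rw [hp'] at hp; simp only [Pi.add_apply, Finset.sum_add_distrib] at hp; simpa using hp)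
      (by rw [hq'] at hq; simp only [Pi.add_apply, Finset.sum_add_distrib] at hq; simpa using hq)
    refine ⟨A + Pi.single (i, j) 1, ?_, ?_⟩
    · intro x
      rw [hp']
      simp only [Pi.add_apply, Finset.sum_add_distrib, h1]
      congr 1
      by_cases hx : x = i
      · subst hx; simp [Pi.single_apply]
      · simp [hx]
    · intro x
      rw [hq']
      simp only [Pi.add_apply, Finset.sum_add_distrib, h2]
      congr 1
      by_cases hx : x = j
      · subst hx; simp [Pi.single_apply]
      · simp [hx]

lemma HR.mul {f g : ℕ → ℚ} (hf : HR f) (hg : HR g) : HR (fun n => f n * g n) := by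
  classical
  obtain ⟨σ, _, S, hS, N, hN⟩ := hf
  obtain ⟨τ, _, T, hT, M, hM⟩ := hg
  let e := Fintype.equivFin (σ × τ)
  let key : (σ × τ → ℕ) → Lex (Fin (Fintype.card (σ × τ)) → ℕ) := fun A => toLex (A ∘ e.symm)
  have key_inj : Function.Injective key := by
    intro A B h
    have h' : A ∘ e.symm = B ∘ e.symm := h
    exact e.symm.surjective.injective_comp_right h'
  have key_add : ∀ A B, key (A + B) = key A + key B := fun A B => rfl
  let row : (σ × τ → ℕ) → σ → ℕ := fun A i => ∑ j, A (i, j)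
  let col : (σ × τ → ℕ) → τ → ℕ := fun A j => ∑ i, A (i, j)
  have row_add : ∀ A B, row (A + B) = row A + row B := fun A B => by
    funext i; simp [row, Finset.sum_add_distrib]
  have col_add : ∀ A B, col (A + B) = col A + col B := fun A B => by
    funext i; simp [col, Finset.sum_add_distrib]
  have row_sum : ∀ A, ∑ i, row A i = ∑ x, A x := fun A => by
    simp [row, Fintype.sum_prod_type]
  have col_sum : ∀ A, ∑ i, col A i = ∑ x, A x := fun A => by
    simp [col, Fintype.sum_prod_type_right]
  let U : Set (σ × τ → ℕ) := {A | row A ∈ S ∧ col A ∈ T ∧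
    ∀ B, row B = row A → col B = col A → key A ≤ key B}
  refine ⟨σ × τ, inferInstance, U, ?_, N + M, ?_⟩
  · rintro A B hBA ⟨h1, h2, h3⟩
    refine ⟨hS (fun i => Finset.sum_le_sum fun j _ => hBA _) h1,
      hT (fun i => Finset.sum_le_sum fun j _ => hBA _) h2, ?_⟩
    intro C hr hc
    obtain ⟨D, rfl⟩ : ∃ D, A = B + D := ⟨A - B, by
      funext x; have : B x ≤ A x := hBA x; simp only [Pi.add_apply, Pi.sub_apply]; omega⟩
    have := h3 (C + D) (by rw [row_add, row_add, hr]) (by rw [col_add, col_add, hc])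
    rw [key_add, key_add] at this
    exact le_of_add_le_add_right this
  · intro n hn
    beta_reduce
    rw [← hN n (by omega), ← hM n (by omega), ← Nat.cast_mul]
    congr 1
    unfold cnt
    rw [← Set.ncard_prod]
    refine Set.ncard_congr (fun A _ => (row A, col A)) ?_ ?_ ?_
    · rintro A ⟨⟨h1, h2, h3⟩, h4⟩
      exact ⟨⟨h1, by rw [row_sum]; exact h4⟩, ⟨h2, by rw [col_sum]; exact h4⟩⟩
    · rintro A B ⟨⟨h1, h2, h3⟩, h4⟩ ⟨⟨h1', h2', h3'⟩, h4'⟩ h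
      obtain ⟨hr, hc⟩ := Prod.mk.inj h
      exact key_inj (le_antisymm (h3 B hr.symm hc.symm) (h3' A hr hc))
    · rintro ⟨p, q⟩ ⟨⟨hp, hp'⟩, ⟨hq, hq'⟩⟩
      obtain ⟨A, hA1, hA2⟩ := exists_matrix n p q hp' hq'
      have hfin : {A | row A = p ∧ col A = q}.Finite := by
        apply (finite_deg n).subset
        rintro A ⟨h1, h2⟩
        rw [Set.mem_ofPred_eq, ← row_sum, h1]; exact hp'
      obtain ⟨C, ⟨hC1, hC2⟩, hC⟩ := Set.exists_min_image _ key hfin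
        ⟨A, funext hA1, funext hA2⟩
      refine ⟨C, ⟨⟨by rw [hC1]; exact hp, by rw [hC2]; exact hq, ?_⟩, ?_⟩, by rw [hC1, hC2]⟩
      · intro B h1 h2
        exact hC B ⟨h1.trans hC1, h2.trans hC2⟩
      · rw [← row_sum, hC1]; exact hp'

end SP

namespace SP

/-- The lex step. -/
def lexS {d : ℕ} (S : Set (Fin (d+1) → ℕ)) : Set (Fin (d+1) → ℕ) :=
  {a | a 0 = 0 ∨ a - Pi.single 0 1 ∈ S}

lemma lexS_lower {d : ℕ} {S : Set (Fin (d+1) → ℕ)} (hS : IsLowerSet S) :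
    IsLowerSet (lexS S) := by
  intro a b hba h
  rcases h with h | h
  · left
    exact Nat.le_zero.mp ((hba 0).trans h.le)
  · right
    exact hS (fun i => Nat.sub_le_sub_right (hba i) _) h

lemma cnt_lexS {d : ℕ} (S : Set (Fin (d+1) → ℕ)) (n : ℕ) :
    cnt (lexS S) (n+1) = cnt (Set.univ : Set (Fin d → ℕ)) (n+1) + cnt S n := by
  unfold cnt
  have e1 : Function.Injective (fun a : Fin d → ℕ => (Fin.cons 0 a : Fin (d+1) → ℕ)) :=
    fun a b h => Fin.cons_right_injective 0 h
  have e2 : Function.Injective (fun a : Fin (d+1) → ℕ => a + Pi.single 0 1) :=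
    add_left_injective _
  rw [← Set.ncard_image_of_injective _ e1, ← Set.ncard_image_of_injective {a | a ∈ S ∧ _} e2,
    ← Set.ncard_union_eq ?_ ((finite_cnt _ _).image _) ((finite_cnt _ _).image _)]
  · congr 1
    ext a
    simp only [Set.mem_ofPred_eq, Set.mem_union, Set.mem_image, Set.mem_univ, true_and]
    constructor
    · rintro ⟨h1, h2⟩
      by_cases h0 : a 0 = 0
      · left
        refine ⟨Fin.tail a, ?_, ?_⟩
        · rw [Fin.sum_univ_succ, h0, zero_add] at h2
          exact h2
        · rw [← h0]; exact Fin.cons_self_tail a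
      · right
        have ha : a - Pi.single 0 1 + Pi.single 0 1 = a := by
          funext x
          by_cases hx : x = 0
          · subst hx; simp; omega
          · simp [hx]
        refine ⟨a - Pi.single 0 1, ⟨h1.resolve_left h0, ?_⟩, ha⟩
        rw [← ha] at h2
        simp only [Pi.add_apply, Finset.sum_add_distrib] at h2
        simpa using h2
    · rintro (⟨b, h1, rfl⟩ | ⟨b, ⟨h1, h2⟩, rfl⟩)
      · refine ⟨Or.inl (by simp), ?_⟩
        rw [Fin.sum_univ_succ]; simpa using h1
      · refine ⟨Or.inr (by simpa using h1), ?_⟩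
        simp only [Pi.add_apply, Finset.sum_add_distrib]
        simpa using h2
  · rw [Set.disjoint_left]
    rintro _ ⟨b, h1, rfl⟩ ⟨c, h2, h3⟩
    have := congrFun h3 0
    simp at this

/-- The binomial polynomial. -/
def Bn (d : ℕ) (x : ℚ) : ℚ := (∏ i ∈ Finset.range d, (x + i + 1)) / d.factorial

lemma Bn_pascal (d : ℕ) (x : ℚ) : Bn (d+1) x = Bn d x + Bn (d+1) (x - 1) := by
  unfold Bn
  rw [Finset.prod_range_succ]
  conv_rhs => rw [Finset.prod_range_succ']
  have h : ∀ i : ℕ, x - 1 + ((i + 1 : ℕ) : ℚ) + 1 = x + i + 1 := by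
    intro i; push_cast; ring
  simp only [h]
  have h1 : (d.factorial : ℚ) ≠ 0 := by exact_mod_cast d.factorial_ne_zero
  have h2 : (d : ℚ) + 1 ≠ 0 := by positivity
  rw [Nat.factorial_succ]
  push_cast
  field_simp
  ring

lemma Bn_zero (d : ℕ) : Bn d 0 = 1 := by
  unfold Bn
  have : ∏ i ∈ Finset.range d, ((0:ℚ) + i + 1) = d.factorial := by
    rw [← Finset.prod_range_add_one_eq_factorial]
    push_cast
    simp
  rw [this]
  have h1 : (d.factorial : ℚ) ≠ 0 := by exact_mod_cast d.factorial_ne_zero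
  field_simp

lemma cnt_univ (d : ℕ) : ∀ n : ℕ, (cnt (Set.univ : Set (Fin (d+1) → ℕ)) n : ℚ) = Bn d n := by
  have hz : ∀ r : ℕ, cnt (Set.univ : Set (Fin r → ℕ)) 0 = 1 := by
    intro r
    unfold cnt
    rw [Set.ncard_eq_one]
    refine ⟨0, ?_⟩
    ext a
    simp [funext_iff]
  have hl : ∀ r : ℕ, lexS (Set.univ : Set (Fin (r+1) → ℕ)) = Set.univ := by
    intro r; ext a; simp [lexS]
  induction d with
  | zero =>
    intro n
    simp only [Bn, Finset.range_zero, Finset.prod_empty, Nat.factorial_zero, Nat.cast_one, div_one]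
    induction n with
    | zero => rw [hz]; simp
    | succ n ih =>
      have := cnt_lexS (Set.univ : Set (Fin (0+1) → ℕ)) n
      rw [hl] at this
      rw [this]
      push_cast
      rw [ih]
      simp [cnt]
  | succ d ihd =>
    intro n
    induction n with
    | zero => rw [hz]; simp [Bn_zero]
    | succ n ih =>
      have := cnt_lexS (Set.univ : Set (Fin (d+1+1) → ℕ)) n
      rw [hl] at this
      rw [this]
      push_cast
      rw [ih, Bn_pascal d ((n:ℚ)+1)]
      congr 1
      · have := ihd (n+1)
        rw [this]; push_cast; rfl
      · congr 1; ring

/-- realizability in a given number of variables. -/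
def RD (D : ℕ) (f : ℚ → ℚ) : Prop :=
  ∃ S : Set (Fin D → ℕ), IsLowerSet S ∧ ∃ N : ℕ, ∀ n : ℕ, N ≤ n → (cnt S n : ℚ) = f n

lemma RD.step {d : ℕ} {f : ℚ → ℚ} (h : RD (d+2) f) : RD (d+2) (fun x => Bn d x + f (x - 1)) := by
  obtain ⟨S, hS, N, hN⟩ := h
  refine ⟨lexS S, lexS_lower hS, N + 1, ?_⟩
  intro n hn
  obtain ⟨m, rfl⟩ : ∃ m, n = m + 1 := ⟨n - 1, by omega⟩
  rw [cnt_lexS]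
  push_cast
  have h1 := cnt_univ d (m+1)
  rw [h1, hN m (by omega)]
  push_cast
  congr 2
  ring

lemma RD.lift {d : ℕ} {f : ℚ → ℚ} (h : RD d f) : RD (d+1) f := by
  obtain ⟨S, hS, N, hN⟩ := h
  refine ⟨{a | a 0 = 0 ∧ Fin.tail a ∈ S}, ?_, N, ?_⟩
  · rintro a b hba ⟨h1, h2⟩
    exact ⟨Nat.le_zero.mp ((hba 0).trans h1.le), hS (fun i => hba _) h2⟩
  · intro n hn
    rw [← hN n hn]
    congr 1
    unfold cnt
    have e1 : Function.Injective (fun a : Fin d → ℕ => (Fin.cons 0 a : Fin (d+1) → ℕ)) :=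
      fun a b h => Fin.cons_right_injective 0 h
    rw [← Set.ncard_image_of_injective {a | a ∈ S ∧ _} e1]
    congr 1
    ext a
    simp only [Set.mem_ofPred_eq, Set.mem_image]
    constructor
    · rintro ⟨⟨h0, h1⟩, h2⟩
      refine ⟨Fin.tail a, ⟨h1, ?_⟩, ?_⟩
      · rw [Fin.sum_univ_succ, h0, zero_add] at h2
        exact h2
      · rw [← h0]; exact Fin.cons_self_tail a
    · rintro ⟨b, ⟨h1, h2⟩, rfl⟩
      refine ⟨⟨by simp, by simpa using h1⟩, ?_⟩
      rw [Fin.sum_univ_succ]; simpa using h2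

lemma RD.chain {d : ℕ} {f : ℚ → ℚ} (h : RD (d+1) f) (m : ℕ) :
    RD (d+2) (fun x => Bn (d+1) x - Bn (d+1) (x - m) + f (x - m)) := by
  induction m with
  | zero => simpa using h.lift
  | succ m ih =>
    have := ih.step
    convert this using 2 with x
    rw [Bn_pascal d x]
    push_cast
    rw [show x - (m + 1) = x - 1 - m by ring]
    ring

lemma RD.HR {D : ℕ} {f : ℚ → ℚ} (h : RD D f) : HR (fun n => f n) := by
  obtain ⟨S, hS, N, hN⟩ := h
  exact ⟨Fin D, inferInstance, S, hS, N, hN⟩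

lemma RD_zero : RD 1 (fun _ => 0) := ⟨∅, isLowerSet_empty, 0, by simp [cnt]⟩

lemma hr_const (t : ℕ) : HR (fun _ => (t : ℚ)) := by
  have := (RD_zero.chain t).HR
  convert this using 2
  simp [Bn]

lemma base1 (a b : ℕ) (t : ℚ) (h : ∀ x : ℚ, Bn 2 x - Bn 2 (x - b) + (Bn 1 (x - b) - Bn 1 (x - b - a)) = t * x ^ 1) :
    HR (fun n => t * (n:ℚ)^1) := by
  have := ((RD_zero.chain a).chain b).HR
  convert this using 2 with n
  rw [← h]
  simp

lemma base2 (a b c : ℕ) (t : ℚ) (h : ∀ x : ℚ, Bn 3 x - Bn 3 (x - c) + (Bn 2 (x - c) - Bn 2 (x - c - b) +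
    (Bn 1 (x - c - b) - Bn 1 (x - c - b - a))) = t * x ^ 2) :
    HR (fun n => t * (n:ℚ)^2) := by
  have := (((RD_zero.chain a).chain b).chain c).HR
  convert this using 2 with n
  rw [← h]
  simp

lemma hr3 : HR (fun n => (n:ℚ)^3) := by
  have := ((((RD_zero.chain 50).chain 8).chain 3).chain 6).HR
  convert this using 2 with n
  simp only [Bn, Finset.prod_range_succ, Finset.prod_range_zero, Nat.factorial]
  push_cast
  ring

lemma hr4 : HR (fun n => (n:ℚ)^4) := by
  have := (((((RD_zero.chain 62430765807659006).chain 353339790).chain 26430).chain 216).chain 24).HR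
  convert this using 2 with n
  simp only [Bn, Finset.prod_range_succ, Finset.prod_range_zero, Nat.factorial]
  push_cast
  ring

lemma hr5 : HR (fun n => (n:ℚ)^5) := by
  have := ((((((RD_zero.chain 731259975844000893012336498626162930739291667456651069219).chain
    38242907207585404542511767817).chain 276560672805750).chain 23513960).chain 6780).chain 120).HR
  convert this using 2 with n
  simp only [Bn, Finset.prod_range_succ, Finset.prod_range_zero, Nat.factorial]
  push_cast
  ring

lemma hr_pow (d : ℕ) (hd : 3 ≤ d) : HR (fun n => (n:ℚ)^d) := by
  induction d using Nat.strong_induction_on with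
  | _ d ih =>
    rcases (by omega : d = 3 ∨ d = 4 ∨ d = 5 ∨ 6 ≤ d) with rfl | rfl | rfl | h
    · exact hr3
    · exact hr4
    · exact hr5
    · have := (ih (d - 3) (by omega) (by omega)).mul hr3
      convert this using 2 with n
      rw [← pow_add]
      congr 1
      omega

lemma hr_lin3 (e : ℕ) (h3 : HR (fun n => (3:ℚ) * (n:ℚ)^e)) (h4 : HR (fun n => (4:ℚ) * (n:ℚ)^e))
    (h5 : HR (fun n => (5:ℚ) * (n:ℚ)^e)) (t : ℕ) (ht : 3 ≤ t) :
    HR (fun n => (t:ℚ) * (n:ℚ)^e) := by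
  induction t using Nat.strong_induction_on with
  | _ t ih =>
    rcases (by omega : t = 3 ∨ t = 4 ∨ t = 5 ∨ 6 ≤ t) with rfl | rfl | rfl | h
    · exact h3
    · exact h4
    · exact h5
    · have := (ih (t - 3) (by omega) (by omega)).add h3
      convert this using 2 with n
      rw [Nat.cast_sub (by omega)]
      push_cast
      ring

lemma hr_one (t : ℕ) (ht : 3 ≤ t) : HR (fun n => (t:ℚ) * (n:ℚ)^1) := by
  apply hr_lin3 1 _ _ _ t ht
  · apply base1 0 3
    intro x; simp only [Bn, Finset.prod_range_succ, Finset.prod_range_zero, Nat.factorial]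
    push_cast; ring
  · apply base1 2 4
    intro x; simp only [Bn, Finset.prod_range_succ, Finset.prod_range_zero, Nat.factorial]
    push_cast; ring
  · apply base1 5 5
    intro x; simp only [Bn, Finset.prod_range_succ, Finset.prod_range_zero, Nat.factorial]
    push_cast; ring

lemma hr_two (t : ℕ) (ht : 3 ≤ t) : HR (fun n => (t:ℚ) * (n:ℚ)^2) := by
  apply hr_lin3 2 _ _ _ t ht
  · apply base2 34 6 6
    intro x; simp only [Bn, Finset.prod_range_succ, Finset.prod_range_zero, Nat.factorial]
    push_cast; ring
  · apply base2 196 16 8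
    intro x; simp only [Bn, Finset.prod_range_succ, Finset.prod_range_zero, Nat.factorial]
    push_cast; ring
  · apply base2 620 30 10
    intro x; simp only [Bn, Finset.prod_range_succ, Finset.prod_range_zero, Nat.factorial]
    push_cast; ring

lemma suff (d t : ℕ) (h : d = 0 ∨ (d = 1 ∧ 3 ≤ t) ∨ (d = 2 ∧ 3 ≤ t) ∨ 3 ≤ d) :
    IsHilbertPolynomial (Polynomial.C (t : ℚ) * Polynomial.X ^ d) := by
  apply hilb_of_HR
  simp only [Polynomial.eval_mul, Polynomial.eval_C, Polynomial.eval_pow, Polynomial.eval_X]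
  rcases h with rfl | ⟨rfl, h⟩ | ⟨rfl, h⟩ | h
  · simpa using hr_const t
  · exact hr_one t h
  · exact hr_two t h
  · exact (hr_const t).mul (hr_pow d h)

end SP

namespace SP

lemma rank_count {K V ι : Type} [Field K] [AddCommGroup V] [Module K V] [LinearOrder ι]
    (v : ι → V) (s : Finset ι) :
    Set.ncard {i | i ∈ s ∧ v i ∉ Submodule.span K (v '' {j | j ∈ s ∧ j < i})} =
      Module.finrank K (Submodule.span K (v '' (s : Set ι))) := by
  classical
  induction s using Finset.induction_on_max with
  | empty =>
    have : v '' ((∅ : Finset ι) : Set ι) = ∅ := by rw [Finset.coe_empty, Set.image_empty]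
    rw [this, Submodule.span_empty, finrank_bot]
    simp
  | insert a s hmax ih =>
    have ha : a ∉ s := fun h => lt_irrefl _ (hmax a h)
    have e1 : ∀ i ∈ s, {j | j ∈ insert a s ∧ j < i} = {j | j ∈ s ∧ j < i} := by
      intro i hi
      ext j
      simp only [Finset.mem_insert, Set.mem_ofPred_eq]
      constructor
      · rintro ⟨rfl | h, h'⟩
        · exact absurd h' (not_lt.mpr (hmax i hi).le)
        · exact ⟨h, h'⟩
      · rintro ⟨h, h'⟩
        exact ⟨Or.inr h, h'⟩
    have e2 : {j | j ∈ insert a s ∧ j < a} = (s : Set ι) := by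
      ext j
      simp only [Finset.mem_insert, Set.mem_ofPred_eq, Finset.mem_coe]
      constructor
      · rintro ⟨rfl | h, h'⟩
        · exact absurd h' (lt_irrefl _)
        · exact h
      · intro h
        exact ⟨Or.inr h, hmax j h⟩
    have hfin : {i | i ∈ s ∧ v i ∉ Submodule.span K (v '' {j | j ∈ s ∧ j < i})}.Finite :=
      s.finite_toSet.subset fun i h => h.1
    by_cases hv : v a ∈ Submodule.span K (v '' (s : Set ι))
    · have : {i | i ∈ insert a s ∧ v i ∉ Submodule.span K (v '' {j | j ∈ insert a s ∧ j < i})} =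
          {i | i ∈ s ∧ v i ∉ Submodule.span K (v '' {j | j ∈ s ∧ j < i})} := by
        ext i
        simp only [Set.mem_ofPred_eq]
        constructor
        · rintro ⟨h1, h2⟩
          rcases Finset.mem_insert.mp h1 with rfl | h
          · rw [e2] at h2; exact absurd hv h2
          · rw [e1 i h] at h2; exact ⟨h, h2⟩
        · rintro ⟨h1, h2⟩
          exact ⟨Finset.mem_insert_of_mem h1, by rw [e1 i h1]; exact h2⟩
      rw [this, ih, Finset.coe_insert, Set.image_insert_eq, Submodule.span_insert_eq_span hv]
    · have : {i | i ∈ insert a s ∧ v i ∉ Submodule.span K (v '' {j | j ∈ insert a s ∧ j < i})} =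
          insert a {i | i ∈ s ∧ v i ∉ Submodule.span K (v '' {j | j ∈ s ∧ j < i})} := by
        ext i
        simp only [Set.mem_ofPred_eq, Set.mem_insert_iff]
        constructor
        · rintro ⟨h1, h2⟩
          rcases Finset.mem_insert.mp h1 with rfl | h
          · exact Or.inl rfl
          · rw [e1 i h] at h2; exact Or.inr ⟨h, h2⟩
        · rintro (rfl | ⟨h1, h2⟩)
          · exact ⟨Finset.mem_insert_self _ _, by rw [e2]; exact hv⟩
          · exact ⟨Finset.mem_insert_of_mem h1, by rw [e1 i h1]; exact h2⟩
      rw [this, Set.ncard_insert_of_notMem (fun h => ha h.1) hfin, ih, Finset.coe_insert,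
        Set.image_insert_eq, Submodule.span_insert, sup_comm]
      have : FiniteDimensional K (Submodule.span K (v '' (s : Set ι))) :=
        FiniteDimensional.span_of_finite K (s.finite_toSet.image v)
      have hne : v a ≠ 0 := fun h => hv (by rw [h]; exact Submodule.zero_mem _)
      have h1 := Submodule.finrank_sup_add_finrank_inf_eq
        (Submodule.span K (v '' (s : Set ι))) (Submodule.span K {v a})
      have h2 : Submodule.span K (v '' (s : Set ι)) ⊓ Submodule.span K {v a} = ⊥ := by
        rw [← disjoint_iff, Submodule.disjoint_span_singleton' hne]
        exact hv
      rw [h2, finrank_bot, finrank_span_singleton hne] at h1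
      omega

section Std
variable {k R : Type} [Field k] [CommRing R] [Algebra k R] (𝒜 : ℕ → Submodule k R)
  [GradedAlgebra 𝒜] {r : ℕ} (v : Fin r → R)

/-- monomials in the generators -/
def mono (v : Fin r → R) (a : Fin r → ℕ) : R := ∏ i, v i ^ a i

lemma mono_add (a b : Fin r → ℕ) : mono v (a + b) = mono v a * mono v b := by
  simp [mono, pow_add, Finset.prod_mul_distrib]

lemma mono_mem (hv : ∀ i, v i ∈ 𝒜 1) (a : Fin r → ℕ) : mono v a ∈ 𝒜 (∑ i, a i) := by
  unfold mono
  have := SetLike.prod_mem_graded 𝒜 a (fun i => v i ^ a i) (F := Finset.univ)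
    (fun i _ => by simpa using SetLike.pow_mem_graded (a i) (hv i))
  exact this

lemma gr_span (hv : ∀ i, v i ∈ 𝒜 1) (hadj : Algebra.adjoin k (Set.range v) = ⊤) (n : ℕ) :
    𝒜 n = Submodule.span k (mono v '' {a | ∑ i, a i = n}) := by
  apply le_antisymm
  · intro x hx
    have hxt : x ∈ Algebra.adjoin k (Set.range v) := by rw [hadj]; trivial
    rw [Algebra.adjoin_range_eq_range_aeval] at hxt
    obtain ⟨p, hp⟩ := hxt
    have hp : MvPolynomial.aeval v p = x := hp
    subst hp
    have h1 : GradedAlgebra.proj 𝒜 n (MvPolynomial.aeval v p) = MvPolynomial.aeval v p := by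
      rw [GradedAlgebra.proj_apply, DirectSum.decompose_of_mem_same 𝒜 hx]
    change MvPolynomial.aeval v p ∈ _
    rw [← h1, MvPolynomial.aeval_def, MvPolynomial.eval₂_eq', map_sum]
    apply Submodule.sum_mem
    intro a _
    rw [← Algebra.smul_def, map_smul]
    apply Submodule.smul_mem
    have hm := mono_mem 𝒜 v hv a
    change GradedAlgebra.proj 𝒜 n (mono v a) ∈ _
    rw [GradedAlgebra.proj_apply]
    by_cases ha : ∑ i, a i = n
    · rw [ha] at hm
      rw [DirectSum.decompose_of_mem_same 𝒜 hm]
      exact Submodule.subset_span ⟨a, ha, rfl⟩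
    · rw [DirectSum.decompose_of_mem_ne 𝒜 hm ha]
      exact Submodule.zero_mem _
  · rw [Submodule.span_le]
    rintro _ ⟨a, rfl, rfl⟩
    exact mono_mem 𝒜 v hv a

/-- standard monomials -/
def stdS (k : Type) {R : Type} [Field k] [CommRing R] [Algebra k R] {r : ℕ} (v : Fin r → R) :
    Set (Fin r → ℕ) :=
  {a | mono v a ∉ Submodule.span k (mono v '' {b | ∑ i, b i = ∑ i, a i ∧ toLex b < toLex a})}

lemma stdS_lower : IsLowerSet (stdS k v) := by
  intro a b hba ha hb
  obtain ⟨c, rfl⟩ : ∃ c, a = b + c := ⟨a - b, by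
    funext x
    have : b x ≤ a x := hba x
    simp only [Pi.add_apply, Pi.sub_apply]; omega⟩
  apply ha
  have h := Submodule.mem_map_of_mem (f := LinearMap.mulRight k (mono v c)) hb
  rw [Submodule.map_span] at h
  rw [mono_add]
  refine Submodule.span_mono ?_ h
  rintro _ ⟨_, ⟨d, ⟨h1, h2⟩, rfl⟩, rfl⟩
  refine ⟨d + c, ⟨?_, ?_⟩, ?_⟩
  · simp only [Pi.add_apply, Finset.sum_add_distrib, h1]
  · rw [toLex_add, toLex_add]
    exact (add_lt_add_iff_right _).mpr h2
  · rw [mono_add]; rfl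

lemma stdS_cnt (hv : ∀ i, v i ∈ 𝒜 1) (hadj : Algebra.adjoin k (Set.range v) = ⊤) (n : ℕ) :
    cnt (stdS k v) n = Module.finrank k (𝒜 n) := by
  classical
  have hfin : {a : Lex (Fin r → ℕ) | ∑ i, ofLex a i = n}.Finite := finite_deg n
  have h := rank_count (K := k) (fun a : Lex (Fin r → ℕ) => mono v (ofLex a)) hfin.toFinset
  have h2 : (fun a : Lex (Fin r → ℕ) => mono v (ofLex a)) '' (hfin.toFinset : Set _) =
      mono v '' {a | ∑ i, a i = n} := by
    rw [hfin.coe_toFinset]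
    rfl
  rw [h2, ← gr_span 𝒜 v hv hadj] at h
  rw [← h, cnt]
  refine Set.ncard_congr (fun a _ => toLex a) ?_ (fun a b _ _ h => h) ?_
  · rintro a ⟨h1, rfl⟩
    refine ⟨by simp, ?_⟩
    simp only [hfin.mem_toFinset]
    exact h1
  · rintro a ⟨h1, h2⟩
    simp only [hfin.mem_toFinset] at h1 h2
    refine ⟨ofLex a, ⟨?_, h1⟩, rfl⟩
    have h1' : ∑ i, ofLex a i = n := h1
    subst h1'
    exact h2

end Std

lemma hilb_lower (f : Polynomial ℚ) (h : IsHilbertPolynomial f) :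
    ∃ (r : ℕ) (S : Set (Fin (r+1+1) → ℕ)), IsLowerSet S ∧
      ∃ N : ℕ, ∀ n, N ≤ n → (cnt S n : ℚ) = f.eval (n : ℚ) := by
  obtain ⟨k, R, _, _, _, 𝒜, _, hfd, hadj, N, hN⟩ := h
  have := hfd 1
  obtain ⟨r, s, hs⟩ := Module.Finite.exists_fin (R := k) (M := 𝒜 1)
  let v : Fin (r+1+1) → R := Fin.cons 0 (Fin.cons 0 (fun i => (s i : R)))
  have hv : ∀ i, v i ∈ 𝒜 1 := by
    intro i
    refine Fin.cases ?_ (fun i => ?_) i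
    · simp [v]
    · refine Fin.cases ?_ (fun i => ?_) i
      · simp [v]
      · simp [v]
  have hadj' : Algebra.adjoin k (Set.range v) = ⊤ := by
    rw [eq_top_iff, ← hadj]
    apply Algebra.adjoin_le
    intro x hx
    have h1 : (⟨x, hx⟩ : 𝒜 1) ∈ Submodule.span k (Set.range s) := by rw [hs]; trivial
    have h2 := Submodule.mem_map_of_mem (f := (𝒜 1).subtype) h1
    rw [Submodule.map_span] at h2
    refine Algebra.span_le_adjoin k _ (Submodule.span_mono ?_ h2)
    rintro _ ⟨_, ⟨i, rfl⟩, rfl⟩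
    exact ⟨i.succ.succ, by simp [v]⟩
  refine ⟨r, stdS k v, stdS_lower v, N, fun n hn => ?_⟩
  rw [stdS_cnt 𝒜 v hv hadj', hN n hn]

end SP

namespace SP

/-- move along the line in directions `i`, `j` to the point with `j`-coordinate `s`. -/
def pt {r : ℕ} (i j : Fin r) (a : Fin r → ℕ) (s : ℕ) : Fin r → ℕ :=
  Function.update (Function.update a i (a i + a j - s)) j s

section pt
variable {r : ℕ} {i j : Fin r}

lemma pt_j (a : Fin r → ℕ) (s : ℕ) : pt i j a s j = s := by simp [pt]

lemma pt_i (hij : i ≠ j) (a : Fin r → ℕ) (s : ℕ) : pt i j a s i = a i + a j - s := by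
  simp [pt, hij]

lemma pt_ne (a : Fin r → ℕ) (s : ℕ) {l : Fin r} (hi : l ≠ i) (hj : l ≠ j) :
    pt i j a s l = a l := by simp [pt, hi, hj]

lemma pt_ext (a b : Fin r → ℕ) (h1 : a i = b i) (h2 : a j = b j)
    (h : ∀ l, l ≠ i → l ≠ j → a l = b l) : a = b := by
  funext l
  by_cases hi : l = i
  · rw [hi, h1]
  · by_cases hj : l = j
    · rw [hj, h2]
    · exact h l hi hj

lemma pt_self (hij : i ≠ j) (a : Fin r → ℕ) : pt i j a (a j) = a := by
  apply pt_ext (i := i) (j := j)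
  · rw [pt_i hij]; omega
  · rw [pt_j]
  · intro l hi hj; exact pt_ne _ _ hi hj

lemma pt_pt (hij : i ≠ j) (a : Fin r → ℕ) {s : ℕ} (hs : s ≤ a i + a j) (s' : ℕ) :
    pt i j (pt i j a s) s' = pt i j a s' := by
  apply pt_ext (i := i) (j := j)
  · rw [pt_i hij, pt_i hij, pt_i hij, pt_j]; omega
  · rw [pt_j, pt_j]
  · intro l hi hj; rw [pt_ne _ _ hi hj, pt_ne _ _ hi hj, pt_ne _ _ hi hj]

lemma pt_identity (hij : i ≠ j) (a : Fin r → ℕ) {s : ℕ} (hs : s ≤ a j) :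
    pt i j a s + Pi.single j (a j - s) = a + Pi.single i (a j - s) := by
  apply pt_ext (i := i) (j := j)
  · simp only [Pi.add_apply, pt_i hij, Pi.single_eq_same, Pi.single_eq_of_ne hij]; omega
  · simp only [Pi.add_apply, pt_j, Pi.single_eq_same, Pi.single_eq_of_ne hij.symm]; omega
  · intro l hi hj
    simp [pt_ne _ _ hi hj, hi, hj]

lemma pt_sum (hij : i ≠ j) (a : Fin r → ℕ) {s : ℕ} (hs : s ≤ a j) :
    ∑ l, pt i j a s l = ∑ l, a l := by
  have := congrArg (fun b : Fin r → ℕ => ∑ l, b l) (pt_identity hij a hs)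
  simp only [Pi.add_apply, Finset.sum_add_distrib] at this
  simpa using this

/-- weight -/
def wt {r : ℕ} (a : Fin r → ℕ) : ℕ := ∑ l : Fin r, (l : ℕ) * a l

lemma wt_pt (hij : i < j) (a : Fin r → ℕ) {s : ℕ} (hs : s ≤ a j) :
    wt (pt i j a s) + (j : ℕ) * (a j - s) = wt a + (i : ℕ) * (a j - s) := by
  have := congrArg wt (pt_identity hij.ne a hs)
  simp only [wt, Pi.add_apply, mul_add, Finset.sum_add_distrib] at this
  simpa [wt, Pi.single_apply] using this

/-- trace on the line -/
def lin (T : Finset (Fin r → ℕ)) (i j : Fin r) (a : Fin r → ℕ) : Finset ℕ :=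
  (Finset.range (a i + a j + 1)).filter (fun s => pt i j a s ∈ T)

lemma lin_pt (hij : i ≠ j) (T : Finset (Fin r → ℕ)) (a : Fin r → ℕ) {s : ℕ}
    (hs : s ≤ a i + a j) : lin T i j (pt i j a s) = lin T i j a := by
  unfold lin
  simp only [pt_pt hij a hs, pt_i hij, pt_j]
  rw [Nat.sub_add_cancel hs]

/-- rank -/
def rk (A : Finset ℕ) (s : ℕ) : ℕ := (A.filter (· < s)).card

lemma rk_le (A : Finset ℕ) (s : ℕ) : rk A s ≤ s := by
  have : A.filter (· < s) ⊆ Finset.range s := by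
    intro x hx
    simpa using (Finset.mem_filter.mp hx).2
  unfold rk
  simpa using Finset.card_le_card this

lemma rk_lt (A : Finset ℕ) {s x : ℕ} (hx : x < s) (hA : x ∉ A) : rk A s < s := by
  have : A.filter (· < s) ⊆ (Finset.range s).erase x := by
    intro y hy
    have h := Finset.mem_filter.mp hy
    rw [Finset.mem_erase, Finset.mem_range]
    refine ⟨?_, h.2⟩
    rintro rfl
    exact hA h.1
  have h2 := Finset.card_le_card this
  rw [Finset.card_erase_of_mem (Finset.mem_range.mpr hx), Finset.card_range] at h2
  unfold rk
  omega

lemma rk_lt_card {A : Finset ℕ} {s : ℕ} (h : s ∈ A) : rk A s < A.card := by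
  apply Finset.card_lt_card
  rw [Finset.filter_ssubset]
  exact ⟨s, h, lt_irrefl _⟩

lemma rk_lt_rk {A : Finset ℕ} {s s' : ℕ} (h : s ∈ A) (hs : s < s') : rk A s < rk A s' := by
  apply Finset.card_lt_card
  rw [Finset.ssubset_iff_of_subset]
  · exact ⟨s, by simp [h, hs], by simp⟩
  · intro x hx
    have h := Finset.mem_filter.mp hx
    exact Finset.mem_filter.mpr ⟨h.1, h.2.trans hs⟩

lemma rk_inj {A : Finset ℕ} {s s' : ℕ} (h : s ∈ A) (h' : s' ∈ A) (e : rk A s = rk A s') :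
    s = s' := by
  rcases lt_trichotomy s s' with hs | hs | hs
  · exact absurd e (rk_lt_rk h hs).ne
  · exact hs
  · exact absurd e (rk_lt_rk h' hs).ne'

lemma rk_surj {A : Finset ℕ} {m : ℕ} (hm : m < A.card) : ∃ s ∈ A, rk A s = m := by
  have h1 : A.image (rk A) ⊆ Finset.range A.card := by
    intro x hx
    obtain ⟨s, hs, rfl⟩ := Finset.mem_image.mp hx
    exact Finset.mem_range.mpr (rk_lt_card hs)
  have h2 : A.image (rk A) = Finset.range A.card := by
    apply Finset.eq_of_subset_of_card_le h1
    rw [Finset.card_image_of_injOn (fun a ha b hb e => rk_inj ha hb e), Finset.card_range]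
  have : m ∈ A.image (rk A) := by rw [h2]; exact Finset.mem_range.mpr hm
  obtain ⟨s, hs, e⟩ := Finset.mem_image.mp this
  exact ⟨s, hs, e⟩

/-- compression map -/
def psi (T : Finset (Fin r → ℕ)) (i j : Fin r) (a : Fin r → ℕ) : Fin r → ℕ :=
  pt i j a (rk (lin T i j a) (a j))

lemma self_mem_lin (hij : i ≠ j) {T : Finset (Fin r → ℕ)} {a : Fin r → ℕ} (ha : a ∈ T) :
    a j ∈ lin T i j a := by
  unfold lin
  rw [Finset.mem_filter, pt_self hij, Finset.mem_range]
  exact ⟨by omega, ha⟩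

lemma rk_le' (T : Finset (Fin r → ℕ)) (a : Fin r → ℕ) :
    rk (lin T i j a) (a j) ≤ a i + a j := (rk_le _ _).trans (by omega)

lemma psi_inj (hij : i ≠ j) (T : Finset (Fin r → ℕ)) : Set.InjOn (psi T i j) T := by
  intro a ha b hb h
  have h1 : lin T i j (psi T i j a) = lin T i j a := lin_pt hij T a (rk_le' T a)
  have h2 : lin T i j (psi T i j b) = lin T i j b := lin_pt hij T b (rk_le' T b)
  have h3 : lin T i j a = lin T i j b := by rw [← h1, ← h2, h]
  have h4 : rk (lin T i j a) (a j) = rk (lin T i j b) (b j) := by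
    have := congrFun h j
    simpa only [psi, pt_j] using this
  have h5 : a j = b j := by
    apply rk_inj (A := lin T i j a) (self_mem_lin hij ha)
    · rw [h3]; exact self_mem_lin hij hb
    · rw [h4, h3]
  have ea : pt i j (psi T i j a) (a j) = a := by
    rw [psi, pt_pt hij a (rk_le' T a), pt_self hij]
  have eb : pt i j (psi T i j b) (b j) = b := by
    rw [psi, pt_pt hij b (rk_le' T b), pt_self hij]
  rw [← ea, ← eb, h, h5]

lemma mem_comp (hij : i ≠ j) (T : Finset (Fin r → ℕ)) (b : Fin r → ℕ) :
    b ∈ T.image (psi T i j) ↔ b j < (lin T i j b).card := by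
  rw [Finset.mem_image]
  constructor
  · rintro ⟨a, ha, rfl⟩
    rw [psi, lin_pt hij T a (rk_le' T a), pt_j]
    exact rk_lt_card (self_mem_lin hij ha)
  · intro h
    obtain ⟨s, hs, e⟩ := rk_surj h
    have hs' := Finset.mem_filter.mp hs
    have hs1 : s ≤ b i + b j := by
      have := Finset.mem_range.mp hs'.1
      omega
    refine ⟨pt i j b s, hs'.2, ?_⟩
    rw [psi, lin_pt hij T b hs1, pt_j, e, pt_pt hij b hs1, pt_self hij]

lemma lower_of_step {C : Set (Fin r → ℕ)}
    (h : ∀ b ∈ C, ∀ l, b l ≠ 0 → Function.update b l (b l - 1) ∈ C) : IsLowerSet C := by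
  have key : ∀ n : ℕ, ∀ b c : Fin r → ℕ, c ≤ b → b ∈ C → ∑ l, b l = n → c ∈ C := by
    intro n
    induction n using Nat.strong_induction_on with
    | _ n ih =>
      intro b c hcb hb hn
      by_cases hbc : c = b
      · rwa [hbc]
      · obtain ⟨l, hl⟩ : ∃ l, c l < b l := by
          by_contra! h'
          exact hbc (le_antisymm hcb h')
        have h1 : b l ≠ 0 := by omega
        have h2 : ∑ x, Function.update b l (b l - 1) x < n := by
          rw [← hn]
          apply Finset.sum_lt_sum
          · intro x _
            by_cases hx : x = l
            · subst hx; simp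
            · simp [hx]
          · exact ⟨l, Finset.mem_univ _, by simp; omega⟩
        apply ih _ h2 _ c _ (h b hb l h1) rfl
        intro x
        by_cases hx : x = l
        · subst hx; simp; omega
        · simp [hx]; exact hcb x
  intro b c hcb hb
  exact key _ b c hcb hb rfl

lemma lin_card (hij : i ≠ j) {T : Finset (Fin r → ℕ)} (hT : IsLowerSet (T : Set (Fin r → ℕ)))
    {b c : Fin r → ℕ} (hne : ∀ l, l ≠ i → l ≠ j → c l = b l)
    (he : c i + c j + 1 = b i + b j) :
    (lin T i j b).card ≤ (lin T i j c).card ∨ b i + b j ≤ (lin T i j c).card := by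
  have hle : ∀ s s', s' ≤ s → b i + b j - s ≥ c i + c j - s' → pt i j b s ∈ T →
      pt i j c s' ∈ T := by
    intro s s' h1 h2 h
    refine hT ?_ h
    intro l
    by_cases hi : l = i
    · subst hi; rw [pt_i hij, pt_i hij]; exact h2
    · by_cases hj : l = j
      · subst hj; rw [pt_j, pt_j]; exact h1
      · rw [pt_ne _ _ hi hj, pt_ne _ _ hi hj, hne l hi hj]
  have hA1 : ∀ s ∈ lin T i j b, s + 1 ≤ b i + b j → s ∈ lin T i j c := by
    intro s hs h
    have hs' := Finset.mem_filter.mp hs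
    refine Finset.mem_filter.mpr ⟨Finset.mem_range.mpr (by omega), hle s s le_rfl (by omega) hs'.2⟩
  have hA2 : ∀ s ∈ lin T i j b, 1 ≤ s → s - 1 ∈ lin T i j c := by
    intro s hs h
    have hs' := Finset.mem_filter.mp hs
    have := Finset.mem_range.mp hs'.1
    refine Finset.mem_filter.mpr ⟨Finset.mem_range.mpr (by omega),
      hle s (s-1) (by omega) (by omega) hs'.2⟩
  by_cases hfull : ∃ p ∈ Finset.range (b i + b j + 1), p ∉ lin T i j b
  · left
    obtain ⟨p, hp, hpA⟩ := hfull
    rw [Finset.mem_range] at hp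
    apply Finset.card_le_card_of_injOn (fun s => if s < p then s else s - 1)
    · intro s hs
      have hs0 : s ∈ lin T i j b := hs
      have hsp : s ≠ p := fun h => hpA (h ▸ hs0)
      by_cases h : s < p
      · simp only [h, if_true]
        exact hA1 s hs0 (by omega)
      · simp only [h, if_false]
        exact hA2 s hs0 (by omega)
    · intro s hs s' hs' h
      have hs0 : s ∈ lin T i j b := hs
      have hsp : s ≠ p := fun h => hpA (h ▸ hs0)
      have hs0' : s' ∈ lin T i j b := hs'
      have hsp' : s' ≠ p := fun h => hpA (h ▸ hs0')
      simp only at h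
      split_ifs at h <;> omega
  · right
    push Not at hfull
    have : Finset.range (b i + b j) ⊆ lin T i j c := by
      intro s hs
      have := Finset.mem_range.mp hs
      exact hA1 s (hfull s (Finset.mem_range.mpr (by omega))) (by omega)
    simpa using Finset.card_le_card this

lemma comp_lower (hij : i ≠ j) {T : Finset (Fin r → ℕ)}
    (hT : IsLowerSet (T : Set (Fin r → ℕ))) :
    IsLowerSet ((T.image (psi T i j) : Finset _) : Set (Fin r → ℕ)) := by
  apply lower_of_step
  intro b hb l hl
  rw [Finset.mem_coe, mem_comp hij] at hb ⊢
  by_cases hi : l = i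
  · subst hi
    have := lin_card hij hT (b := b) (c := Function.update b l (b l - 1))
      (fun x h1 h2 => by simp [h1]) (by simp [hij.symm]; omega)
    simp only [ne_eq, hij.symm, not_false_eq_true, Function.update_of_ne]
    omega
  · by_cases hj : l = j
    · subst hj
      have := lin_card hij hT (b := b) (c := Function.update b l (b l - 1))
        (fun x h1 h2 => by simp [h2]) (by simp [hij]; omega)
      simp only [Function.update_self]
      omega
    · have h1 : Function.update b l (b l - 1) i = b i := by simp [Ne.symm hi]
      have h2 : Function.update b l (b l - 1) j = b j := by simp [Ne.symm hj]
      rw [h2]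
      refine hb.trans_le (Finset.card_le_card ?_)
      intro s hs
      have hs' := Finset.mem_filter.mp hs
      refine Finset.mem_filter.mpr ⟨by rw [h1, h2]; exact hs'.1, ?_⟩
      refine hT ?_ hs'.2
      intro x
      by_cases hxi : x = i
      · subst hxi; rw [pt_i hij, pt_i hij, h1, h2]
      · by_cases hxj : x = j
        · subst hxj; rw [pt_j, pt_j]
        · rw [pt_ne _ _ hxi hxj, pt_ne _ _ hxi hxj]
          by_cases hx : x = l
          · subst hx; simp
          · simp [hx]

/-- stability -/
def Stab {r : ℕ} (T : Set (Fin r → ℕ)) : Prop :=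
  ∀ i j : Fin r, i < j → ∀ a ∈ T, ∀ s ≤ a j, pt i j a s ∈ T

lemma comp_cnt (hij : i ≠ j) (T : Finset (Fin r → ℕ)) (n : ℕ) :
    cnt ((T.image (psi T i j) : Finset _) : Set (Fin r → ℕ)) n = cnt (T : Set (Fin r → ℕ)) n := by
  symm
  unfold cnt
  refine Set.ncard_congr (fun a _ => psi T i j a) ?_ ?_ ?_
  · rintro a ⟨h1, h2⟩
    refine ⟨Finset.mem_coe.mpr (Finset.mem_image_of_mem _ h1), ?_⟩
    rw [psi, pt_sum hij a (rk_le _ _)]; exact h2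
  · rintro a b ⟨h1, h2⟩ ⟨h3, h4⟩ h
    exact psi_inj hij T h1 h3 h
  · rintro b ⟨h1, h2⟩
    obtain ⟨a, ha, rfl⟩ := Finset.mem_image.mp (Finset.mem_coe.mp h1)
    refine ⟨a, ⟨ha, ?_⟩, rfl⟩
    rw [psi, pt_sum hij a (rk_le _ _)] at h2; exact h2

lemma exists_stab (T : Finset (Fin r → ℕ)) (hT : IsLowerSet (T : Set (Fin r → ℕ))) :
    ∃ U : Set (Fin r → ℕ), IsLowerSet U ∧ Stab U ∧
      ∀ n, cnt U n = cnt (T : Set (Fin r → ℕ)) n := by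
  obtain ⟨p, hp⟩ : ∃ p, ∑ a ∈ T, wt a = p := ⟨_, rfl⟩
  induction p using Nat.strong_induction_on generalizing T with
  | _ p ih =>
    by_cases hst : Stab (T : Set (Fin r → ℕ))
    · exact ⟨T, hT, hst, fun _ => rfl⟩
    · unfold Stab at hst
      push Not at hst
      obtain ⟨i, j, hij, a, ha, s, hs, hns⟩ := hst
      have hlt : ∑ b ∈ T.image (psi T i j), wt b < p := by
        rw [Finset.sum_image (psi_inj hij.ne T), ← hp]
        have hij' : (i : ℕ) < (j : ℕ) := hij
        apply Finset.sum_lt_sum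
        · intro b _
          have := wt_pt hij b (rk_le (lin T i j b) (b j))
          have h2 : (i : ℕ) * (b j - rk (lin T i j b) (b j)) ≤
            (j : ℕ) * (b j - rk (lin T i j b) (b j)) := Nat.mul_le_mul_right _ hij'.le
          unfold psi
          omega
        · refine ⟨a, ha, ?_⟩
          have hsj : s < a j := by
            rcases hs.lt_or_eq with h | h
            · exact h
            · rw [h, pt_self hij.ne] at hns; exact absurd ha hns
          have hr : rk (lin T i j a) (a j) < a j := by
            apply rk_lt _ hsj
            intro h
            exact hns (Finset.mem_filter.mp h).2
          have := wt_pt hij a (rk_le (lin T i j a) (a j))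
          have h2 : (i : ℕ) * (a j - rk (lin T i j a) (a j)) <
            (j : ℕ) * (a j - rk (lin T i j a) (a j)) := Nat.mul_lt_mul_of_pos_right hij' (by omega)
          unfold psi
          omega
      obtain ⟨U, h1, h2, h3⟩ := ih _ hlt _ (comp_lower hij.ne hT) rfl
      exact ⟨U, h1, h2, fun n => (h3 n).trans (comp_cnt hij.ne T n)⟩

end pt
end SP

namespace SP

section sec
variable {r : ℕ}

/-- hyperplane section -/
def sec (T : Set (Fin (r+1) → ℕ)) : Set (Fin r → ℕ) := {b | (Fin.cons 0 b : Fin (r+1) → ℕ) ∈ T}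

lemma sec_lower {T : Set (Fin (r+1) → ℕ)} (hT : IsLowerSet T) : IsLowerSet (sec T) := by
  intro a b hba ha
  refine hT ?_ ha
  intro l
  refine Fin.cases ?_ (fun l => ?_) l
  · simp
  · simpa using hba l

lemma sec_stab {T : Set (Fin (r+1) → ℕ)} (hT : Stab T) : Stab (sec T) := by
  intro i j hij a ha s hs
  have h := hT i.succ j.succ (Fin.succ_lt_succ_iff.mpr hij) _ ha s (by simpa using hs)
  have : pt i.succ j.succ (Fin.cons 0 a : Fin (r+1) → ℕ) s = Fin.cons 0 (pt i j a s) := by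
    funext l
    refine Fin.cases ?_ (fun l => ?_) l
    · simp [pt, Function.update_apply, (Fin.succ_ne_zero j).symm, (Fin.succ_ne_zero i).symm]
    · simp [pt, Function.update_apply]
  rw [this] at h
  exact h

lemma cnt_step {T : Set (Fin (r+1) → ℕ)} (hT : IsLowerSet T) (n : ℕ) :
    cnt T (n+1) ≤ cnt T n + cnt (sec T) (n+1) := by
  have hsub : T ⊆ lexS T := by
    intro a ha
    right
    exact hT (fun i => Nat.sub_le _ _) ha
  unfold cnt
  have h : {a | a ∈ T ∧ ∑ i, a i = n + 1} ⊆
      (fun a => a + Pi.single 0 1) '' {a | a ∈ T ∧ ∑ i, a i = n} ∪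
      (fun a : Fin r → ℕ => (Fin.cons 0 a : Fin (r+1) → ℕ)) '' {a | a ∈ sec T ∧ ∑ i, a i = n+1} := by
    rintro a ⟨h1, h2⟩
    by_cases h0 : a 0 = 0
    · right
      have e : (Fin.cons 0 (Fin.tail a) : Fin (r+1) → ℕ) = a := by
        rw [← h0]; exact Fin.cons_self_tail a
      refine ⟨Fin.tail a, ⟨?_, ?_⟩, e⟩
      · change Fin.cons 0 (Fin.tail a) ∈ T
        rw [e]; exact h1
      · rw [Fin.sum_univ_succ, h0, zero_add] at h2
        exact h2
    · left
      have ha : a - Pi.single 0 1 + Pi.single 0 1 = a := by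
        funext x
        by_cases hx : x = 0
        · subst hx; simp; omega
        · simp [hx]
      refine ⟨a - Pi.single 0 1, ⟨hT (fun i => Nat.sub_le _ _) h1, ?_⟩, ha⟩
      rw [← ha] at h2
      simp only [Pi.add_apply, Finset.sum_add_distrib] at h2
      simpa using h2
  refine (Set.ncard_le_ncard h (((finite_cnt _ _).image _).union ((finite_cnt _ _).image _))).trans ?_
  refine (Set.ncard_union_le _ _).trans ?_
  exact add_le_add (Set.ncard_image_le (finite_cnt _ _)) (Set.ncard_image_le (finite_cnt _ _))

lemma cnt_sec_le (T : Set (Fin (r+1) → ℕ)) (n : ℕ) : cnt (sec T) n ≤ cnt T n := by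
  unfold cnt
  have e1 : Function.Injective (fun a : Fin r → ℕ => (Fin.cons 0 a : Fin (r+1) → ℕ)) :=
    fun a b h => Fin.cons_right_injective 0 h
  rw [← Set.ncard_image_of_injective _ e1]
  apply Set.ncard_le_ncard _ (finite_cnt _ _)
  rintro _ ⟨a, ⟨h1, h2⟩, rfl⟩
  refine ⟨h1, ?_⟩
  rw [Fin.sum_univ_succ]; simpa using h2

/-- down closure of level `M` -/
def pureT (T : Set (Fin r → ℕ)) (M : ℕ) : Set (Fin r → ℕ) :=
  {a | ∃ b ∈ T, a ≤ b ∧ ∑ i, b i = M}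

lemma pure_lower (T : Set (Fin r → ℕ)) (M : ℕ) : IsLowerSet (pureT T M) := by
  rintro a b hba ⟨c, h1, h2, h3⟩
  exact ⟨c, h1, hba.trans h2, h3⟩

lemma pure_stab {T : Set (Fin r → ℕ)} (hT : Stab T) (M : ℕ) : Stab (pureT T M) := by
  rintro i j hij a ⟨b, h1, h2, h3⟩ s hs
  have hi : a i ≤ b i := h2 i
  have hj : a j ≤ b j := h2 j
  have hle : s + (b j - a j) ≤ b j := by omega
  refine ⟨pt i j b (s + (b j - a j)), hT i j hij b h1 _ hle, ?_, ?_⟩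
  · intro l
    by_cases hli : l = i
    · subst hli; rw [pt_i hij.ne, pt_i hij.ne]; show a l + a j - s ≤ b l + b j - (s + (b j - a j)); omega
    · by_cases hlj : l = j
      · subst hlj; rw [pt_j, pt_j]; exact Nat.le_add_right _ _
      · rw [pt_ne _ _ hli hlj, pt_ne _ _ hli hlj]; exact h2 l
  · rw [pt_sum hij.ne b hle]; exact h3

lemma pure_level (T : Set (Fin r → ℕ)) (M : ℕ) {a : Fin r → ℕ} (ha : ∑ i, a i = M) :
    a ∈ pureT T M ↔ a ∈ T := by
  constructor
  · rintro ⟨b, h1, h2, h3⟩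
    have : a = b := by
      funext l
      have := (Finset.sum_eq_sum_iff_of_le (fun i _ => h2 i)).mp (ha.trans h3.symm)
      exact this l (Finset.mem_univ _)
    rwa [this]
  · intro h
    exact ⟨a, h, le_rfl, ha⟩

lemma cnt_pure (T : Set (Fin r → ℕ)) (M : ℕ) : cnt (pureT T M) M = cnt T M := by
  unfold cnt
  congr 1
  ext a
  simp only [Set.mem_ofPred_eq]
  constructor
  · rintro ⟨h1, h2⟩; exact ⟨(pure_level T M h2).mp h1, h2⟩
  · rintro ⟨h1, h2⟩; exact ⟨(pure_level T M h2).mpr h1, h2⟩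

lemma cnt_sec_pure (T : Set (Fin (r+1) → ℕ)) (M : ℕ) :
    cnt (sec (pureT T M)) M = cnt (sec T) M := by
  have hs : ∀ a : Fin r → ℕ, ∑ i, (Fin.cons 0 a : Fin (r+1) → ℕ) i = ∑ i, a i := by
    intro a; rw [Fin.sum_univ_succ]; simp
  unfold cnt
  congr 1
  ext a
  simp only [Set.mem_ofPred_eq]
  constructor
  · rintro ⟨h1, h2⟩; exact ⟨(pure_level T M ((hs a).trans h2)).mp h1, h2⟩
  · rintro ⟨h1, h2⟩; exact ⟨(pure_level T M ((hs a).trans h2)).mpr h1, h2⟩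

lemma cnt_cum (S : Set (Fin r → ℕ)) (n : ℕ) :
    Set.ncard {a | a ∈ S ∧ ∑ i, a i ≤ n} = ∑ j ∈ Finset.range (n+1), cnt S j ∧
      {a | a ∈ S ∧ ∑ i, a i ≤ n}.Finite := by
  induction n with
  | zero =>
    have : {a | a ∈ S ∧ ∑ i, a i ≤ 0} = {a | a ∈ S ∧ ∑ i, a i = 0} := by
      ext a; simp only [Set.mem_ofPred_eq, Nat.le_zero]
    rw [this]
    exact ⟨by simp [cnt], finite_cnt _ _⟩
  | succ n ih =>
    have : {a | a ∈ S ∧ ∑ i, a i ≤ n + 1} =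
        {a | a ∈ S ∧ ∑ i, a i ≤ n} ∪ {a | a ∈ S ∧ ∑ i, a i = n + 1} := by
      ext a
      simp only [Set.mem_ofPred_eq, Set.mem_union]
      rw [← and_or_left, Nat.le_succ_iff]
    rw [this]
    refine ⟨?_, ih.2.union (finite_cnt _ _)⟩
    rw [Set.ncard_union_eq ?_ ih.2 (finite_cnt _ _), ih.1, Finset.sum_range_succ _ (n+1)]
    · rfl
    · rw [Set.disjoint_left]
      rintro a ⟨_, h1⟩ ⟨_, h2⟩
      omega

lemma stab_shift {T : Set (Fin (r+1) → ℕ)} (hT : IsLowerSet T) (hs : Stab T)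
    (y : Fin (r+1) → ℕ) : ∀ (m : ℕ) (x : Fin (r+1) → ℕ), x ∈ T → (∀ l, l ≠ 0 → y l ≤ x l) →
    ∑ l, y l ≤ ∑ l, x l → y 0 - x 0 = m → y ∈ T := by
  intro m
  induction m with
  | zero =>
    intro x hx hle _ h0
    refine hT ?_ hx
    intro l
    by_cases hl : l = 0
    · subst hl; exact Nat.le_of_sub_eq_zero h0
    · exact hle l hl
  | succ m ih =>
    intro x hx hle hsum h0
    obtain ⟨l, hl, hlt⟩ : ∃ l, l ≠ 0 ∧ y l < x l := by
      by_contra! h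
      have h1 : ∑ l, x l < ∑ l, y l := by
        apply Finset.sum_lt_sum
        · intro l _
          by_cases hl : l = 0
          · subst hl; omega
          · exact h l hl
        · exact ⟨0, Finset.mem_univ _, by omega⟩
      omega
    have h0l : (0 : Fin (r+1)) < l := Fin.pos_of_ne_zero hl
    apply ih (pt 0 l x (x l - 1)) (hs 0 l h0l x hx _ (Nat.sub_le _ _))
    · intro l' hl'
      by_cases h : l' = l
      · subst h; rw [pt_j]; omega
      · rw [pt_ne _ _ hl' h]; exact hle l' hl'
    · rw [pt_sum h0l.ne x (Nat.sub_le _ _)]; exact hsum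
    · rw [pt_i h0l.ne]; omega

lemma claimA {T : Set (Fin (r+1) → ℕ)} (hT : IsLowerSet T) (hs : Stab T) {n M : ℕ}
    (hn : n ≤ M) : ∑ j ∈ Finset.range (n+1), cnt (pureT (sec T) M) j ≤ cnt T n := by
  rw [← (cnt_cum _ n).1]
  unfold cnt
  apply Set.ncard_le_ncard_of_injOn
    (fun a : Fin r → ℕ => (Fin.cons (n - ∑ i, a i) a : Fin (r+1) → ℕ)) _ _ (finite_cnt _ _)
  · rintro a ⟨⟨b, hb, hab, hbM⟩, han⟩
    refine ⟨?_, ?_⟩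
    · apply stab_shift hT hs _ _ _ hb _ _ rfl
      · intro l hl
        obtain ⟨l', rfl⟩ := Fin.exists_succ_eq.mpr hl
        simpa using hab l'
      · rw [Fin.sum_univ_succ, Fin.sum_univ_succ]
        simp only [Fin.cons_zero, Fin.cons_succ]
        omega
    · rw [Fin.sum_univ_succ]
      simp only [Fin.cons_zero, Fin.cons_succ]
      omega
  · intro a _ b _ h
    exact (Fin.cons_inj.mp h).2

lemma exists_le_sum (a : Fin r → ℕ) (j : ℕ) (hj : j ≤ ∑ i, a i) : ∃ b ≤ a, ∑ i, b i = j := by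
  induction j with
  | zero => exact ⟨0, fun i => Nat.zero_le _, by simp⟩
  | succ j ih =>
    obtain ⟨b, hb, hbs⟩ := ih (by omega)
    obtain ⟨l, hl⟩ : ∃ l, b l < a l := by
      by_contra! h
      have := Finset.sum_le_sum (fun i (_ : i ∈ Finset.univ) => h i)
      omega
    refine ⟨b + Pi.single l 1, ?_, ?_⟩
    · intro x
      by_cases hx : x = l
      · subst hx; simp; omega
      · simp [hx]; exact hb x
    · simp only [Pi.add_apply, Finset.sum_add_distrib]
      simp [hbs]

lemma lem0 {T : Set (Fin r → ℕ)} (hT : IsLowerSet T) {M j : ℕ} (h : 1 ≤ cnt T M) (hj : j ≤ M) :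
    1 ≤ cnt T j := by
  have h' : 0 < cnt T M := h
  unfold cnt at h'
  rw [Set.ncard_pos (finite_cnt _ _)] at h'
  obtain ⟨a, ha, hs⟩ := h'
  obtain ⟨b, hb, hbs⟩ := exists_le_sum a j (by omega)
  have : 0 < cnt T j := by
    unfold cnt
    rw [Set.ncard_pos (finite_cnt _ _)]
    exact ⟨b, hT hb ha, hbs⟩
  exact this

lemma lem1 : ∀ {r : ℕ} {T : Set (Fin r → ℕ)}, IsLowerSet T → Stab T → ∀ {c M j : ℕ},
    c ≤ cnt T M → j ≤ M → min c (j+1) ≤ cnt T j := by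
  intro r
  rcases r with _ | r
  · intro T hT hs c M j hc hj
    rcases Nat.eq_zero_or_pos M with rfl | hM
    · obtain rfl : j = 0 := by omega
      omega
    · have : cnt T M = 0 := by
        unfold cnt
        have : {a : Fin 0 → ℕ | a ∈ T ∧ ∑ i, a i = M} = ∅ := by
          ext a
          simp only [Finset.univ_eq_empty, Finset.sum_empty, Set.mem_ofPred_eq,
            Set.mem_empty_iff_false, iff_false, not_and]
          intro _; omega
        rw [this, Set.ncard_empty]
      omega
  · intro T hT hs c M j hc hj
    by_cases h : ∃ i, j < i ∧ 1 ≤ cnt (sec T) i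
    · obtain ⟨i, hi, h1⟩ := h
      have h2 := claimA hT hs hi.le
      have h3 : ∑ _l ∈ Finset.range (j+1), 1 ≤
          ∑ l ∈ Finset.range (j+1), cnt (pureT (sec T) i) l := by
        apply Finset.sum_le_sum
        intro l hl
        have := Finset.mem_range.mp hl
        apply lem0 (pure_lower _ _) (M := i) _ (by omega)
        rw [cnt_pure]; exact h1
      simp at h3
      omega
    · push Not at h
      have : ∀ i, j ≤ i → cnt T i ≤ cnt T j := by
        intro i hi
        induction i, hi using Nat.le_induction with
        | base => exact le_rfl
        | succ i hi ih =>
          have h1 := cnt_step hT i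
          have h2 := h (i+1) (by omega)
          omega
      have := this M hj
      omega

lemma lem2 {T : Set (Fin (r+1) → ℕ)} (hT : IsLowerSet T) (hs : Stab T) {c M n : ℕ}
    (hc : c ≤ cnt (sec T) M) (hn : n ≤ M) :
    ∑ j ∈ Finset.range (n+1), min c (j+1) ≤ cnt T n := by
  refine le_trans (Finset.sum_le_sum ?_) (claimA hT hs hn)
  intro j hj
  have := Finset.mem_range.mp hj
  apply lem1 (pure_lower _ _) (pure_stab (sec_stab hs) M) (M := M) _ (by omega)
  rw [cnt_pure]; exact hc

lemma lem3 {T : Set (Fin (r+1+1) → ℕ)} (hT : IsLowerSet T) (hs : Stab T) {c M n : ℕ}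
    (hc : c ≤ cnt (sec (sec T)) M) (hn : n ≤ M) :
    ∑ j ∈ Finset.range (n+1), ∑ i ∈ Finset.range (j+1), min c (i+1) ≤ cnt T n := by
  refine le_trans (Finset.sum_le_sum ?_) (claimA hT hs hn)
  intro j hj
  have := Finset.mem_range.mp hj
  apply lem2 (pure_lower _ _) (pure_stab (sec_stab hs) M) (M := M) _ (by omega)
  rw [cnt_sec_pure]; exact hc

lemma trunc {S : Set (Fin r → ℕ)} (hS : IsLowerSet S) (L : ℕ) :
    ∃ U : Set (Fin r → ℕ), IsLowerSet U ∧ Stab U ∧ ∀ n ≤ L, cnt U n = cnt S n := by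
  have hfin := (cnt_cum S L).2
  obtain ⟨U, h1, h2, h3⟩ := exists_stab hfin.toFinset (by
    rw [hfin.coe_toFinset]
    rintro a b hba ⟨ha, hb⟩
    exact ⟨hS hba ha, (Finset.sum_le_sum fun i _ => hba i).trans hb⟩)
  refine ⟨U, h1, h2, fun n hn => ?_⟩
  rw [h3, hfin.coe_toFinset]
  unfold cnt
  congr 1
  ext a
  simp only [Set.mem_ofPred_eq]
  constructor
  · rintro ⟨⟨h, _⟩, h'⟩; exact ⟨h, h'⟩
  · rintro ⟨h, h'⟩; exact ⟨⟨h, by omega⟩, h'⟩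

lemma g1 (n : ℕ) : ∑ j ∈ Finset.range (n+1), min 1 (j+1) = n + 1 := by
  simp

lemma g2 (n : ℕ) : ∑ j ∈ Finset.range (n+1), min 2 (j+1) = 2 * n + 1 := by
  induction n with
  | zero => simp
  | succ n ih => rw [Finset.sum_range_succ, ih]; omega

lemma g4 (n : ℕ) : ∑ j ∈ Finset.range (n+2+1), min 4 (j+1) = 4 * n + 6 := by
  induction n with
  | zero => decide
  | succ n ih => rw [Finset.sum_range_succ, ih]; omega

lemma gg2 (n : ℕ) : ∑ j ∈ Finset.range (n+1), ∑ i ∈ Finset.range (j+1), min 2 (i+1) = (n+1)^2 := by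
  simp only [g2]
  induction n with
  | zero => simp
  | succ n ih => rw [Finset.sum_range_succ, ih]; ring

lemma gg4 (n : ℕ) : ∑ j ∈ Finset.range (n+1+1), ∑ i ∈ Finset.range (j+1), min 4 (i+1) =
    2 * (n+1)^2 + 2 := by
  induction n with
  | zero => decide
  | succ n ih => rw [Finset.sum_range_succ, ih, g4]; ring

lemma no_linear {S : Set (Fin (r+1+1) → ℕ)} (hS : IsLowerSet S) (t : ℕ) (ht : 0 < t) (ht3 : t < 3)
    (N : ℕ) (hN : ∀ n, N ≤ n → cnt S n = t * n) : False := by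
  obtain ⟨U, hU, hs, hc⟩ := trunc hS (N+1)
  have h1 := cnt_step hU N
  rw [hc _ le_rfl, hc _ (Nat.le_succ N), hN _ (Nat.le_succ N), hN _ le_rfl] at h1
  have h2 : t ≤ cnt (sec U) (N+1) := by
    rw [Nat.mul_succ] at h1
    omega
  have h3 := lem2 hU hs h2 le_rfl
  rw [hc _ le_rfl, hN _ (Nat.le_succ N)] at h3
  obtain rfl | rfl : t = 1 ∨ t = 2 := by omega
  · rw [g1] at h3; omega
  · rw [g2] at h3; omega

lemma no_quad {S : Set (Fin (r+1+1) → ℕ)} (hS : IsLowerSet S) (t : ℕ) (ht : 0 < t) (ht3 : t < 3)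
    (N : ℕ) (hN : ∀ n, N ≤ n → cnt S n = t * n^2) : False := by
  obtain ⟨M, hM⟩ : ∃ M, M = N + 3 := ⟨_, rfl⟩
  obtain ⟨s, hsdef⟩ : ∃ s, s = t * M^2 + t + 1 := ⟨_, rfl⟩
  obtain ⟨U, hU, hs, hc⟩ := trunc hS (M + s + 1)
  have key : 2 * t ≤ cnt (sec (sec U)) M := by
    by_contra hlt
    have hle : ∀ i, M ≤ i → cnt (sec (sec U)) i + 1 ≤ 2 * t := by
      intro i hi
      by_contra hge
      have := lem1 (sec_lower (sec_lower hU)) (sec_stab (sec_stab hs)) (c := 2 * t) (M := i) (j := M)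
        (by omega) hi
      omega
    have hgrow : ∀ m, cnt (sec U) (M + m) + m ≤ cnt (sec U) M + m * (2 * t) := by
      intro m
      induction m with
      | zero => simp
      | succ m ih =>
        have h1 := cnt_step (sec_lower hU) (M + m)
        have h2 := hle (M + m + 1) (by omega)
        rw [show M + (m+1) = M + m + 1 by omega, Nat.succ_mul]
        omega
    have h1 := hgrow (s+1)
    have h2 := cnt_sec_le U M
    rw [hc M (by omega), hN M (by omega)] at h2
    have h3 := cnt_step hU (M + s)
    rw [hc _ le_rfl, hc _ (by omega), hN _ (by omega), hN _ (by omega)] at h3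
    have h4 : t * (M + s + 1)^2 = t * (M + s)^2 + (2 * t * (M + s) + t) := by ring
    have h5 : 2 * t * (M + s) = 2 * t * M + s * (2 * t) := by ring
    have h6 : (s + 1) * (2 * t) = s * (2 * t) + 2 * t := by ring
    rw [show M + (s+1) = M + s + 1 by omega] at h1
    omega
  have h := lem3 hU hs key le_rfl
  rw [hc M (by omega), hN M (by omega)] at h
  obtain rfl | rfl : t = 1 ∨ t = 2 := by omega
  · rw [gg2] at h
    nlinarith
  · rw [hM] at h
    have := gg4 (N+2)
    rw [show N + 2 + 1 = N + 3 by ring] at this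
    rw [this] at h
    omega

end sec

lemma nec (d t : ℕ) (ht : 0 < t)
    (h : IsHilbertPolynomial (Polynomial.C (t : ℚ) * Polynomial.X ^ d)) :
    d = 0 ∨ (d = 1 ∧ 3 ≤ t) ∨ (d = 2 ∧ 3 ≤ t) ∨ 3 ≤ d := by
  obtain ⟨r, S, hS, N, hN⟩ := hilb_lower _ h
  simp only [Polynomial.eval_mul, Polynomial.eval_C, Polynomial.eval_pow, Polynomial.eval_X] at hN
  by_contra hcon
  obtain rfl | rfl : d = 1 ∨ d = 2 := by omega
  · refine no_linear hS t ht (by omega) N (fun n hn => ?_)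
    have := hN n hn
    rw [pow_one] at this
    exact_mod_cast this
  · refine no_quad hS t ht (by omega) N (fun n hn => ?_)
    exact_mod_cast hN n hn

end SP

theorem sign_patterns_stmt3 (d : ℕ) (t : ℕ) (ht : 0 < t) :
    IsHilbertPolynomial (Polynomial.C (t : ℚ) * Polynomial.X ^ d) ↔
      d = 0 ∨ (d = 1 ∧ 3 ≤ t) ∨ (d = 2 ∧ 3 ≤ t) ∨ 3 ≤ d := by
  exact ⟨SP.nec d t ht, SP.suff d t⟩
end

section
/- For every integer d with d = 0 or d ≥ 3, the polynomial x^d is a Hilbert polynomial. -/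
open Polynomial

open scoped Pointwise

/-- `f` is the growth polynomial of a finite subset of a commutative monoid. -/
def IsGrowth (f : Polynomial ℚ) : Prop :=
  ∃ (M : Type) (_ : CommMonoid M) (P : Set M), P.Finite ∧
    ∃ N : ℕ, ∀ i : ℕ, N ≤ i → ((P ^ i).ncard : ℚ) = f.eval (i : ℚ)

theorem prod_set_pow {M N : Type} [CommMonoid M] [CommMonoid N] (P : Set M) (Q : Set N) (i : ℕ) :
    (P ×ˢ Q) ^ i = (P ^ i) ×ˢ (Q ^ i) := by
  induction i with
  | zero => ext ⟨a, b⟩; simp [Prod.ext_iff]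
  | succ i ih => rw [pow_succ, pow_succ, pow_succ, ih, Set.prod_mul_prod_comm]

theorem IsGrowth.mul {f g : Polynomial ℚ} (hf : IsGrowth f) (hg : IsGrowth g) :
    IsGrowth (f * g) := by
  obtain ⟨M, _, P, hP, N, h⟩ := hf
  obtain ⟨M', _, P', hP', N', h'⟩ := hg
  refine ⟨M × M', inferInstance, P ×ˢ P', hP.prod hP', max N N', fun i hi => ?_⟩
  rw [prod_set_pow, Set.ncard_prod, Polynomial.eval_mul, ← h i (le_trans (le_max_left _ _) hi),
    ← h' i (le_trans (le_max_right _ _) hi)]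
  push_cast; rfl

theorem IsGrowth.one : IsGrowth 1 :=
  ⟨Unit, inferInstance, {1}, Set.finite_singleton _, 0, fun i _ => by simp⟩

/-- The submonoid of pairs `(m, i)` with `m ∈ P ^ i`. -/
def reesMonoid {M : Type} [CommMonoid M] (P : Set M) : AddSubmonoid (Additive M × ℕ) where
  carrier := {x | x.1.toMul ∈ P ^ x.2}
  zero_mem' := by simp
  add_mem' {a b} ha hb := by
    simp only [Set.mem_ofPred_eq, Prod.fst_add, Prod.snd_add, toMul_add, pow_add] at *
    exact Set.mul_mem_mul ha hb

def reesDeg {M : Type} [CommMonoid M] (P : Set M) : reesMonoid P →+ ℕ :=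
  (AddMonoidHom.snd _ _).comp (reesMonoid P).subtype

noncomputable def reesFiberEquiv {M : Type} [CommMonoid M] (P : Set M) (i : ℕ) :
    (reesDeg P ⁻¹' {i} : Set (reesMonoid P)) ≃ (P ^ i : Set M) where
  toFun x := ⟨x.1.1.1.toMul, by
    have h1 := x.1.2
    have h2 : x.1.1.2 = i := x.2
    have h3 : x.1.1.1.toMul ∈ P ^ x.1.1.2 := h1
    rwa [h2] at h3⟩
  invFun m := ⟨⟨(Additive.ofMul m.1, i), m.2⟩, rfl⟩
  left_inv x := by
    have h2 : x.1.1.2 = i := x.2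
    apply Subtype.ext; apply Subtype.ext
    exact Prod.ext rfl h2.symm
  right_inv m := rfl

theorem single_mem_adjoin {M : Type} [CommMonoid M] (P : Set M) (i : ℕ) :
    ∀ x : reesMonoid P, reesDeg P x = i →
    AddMonoidAlgebra.single x (1 : ℚ) ∈ Algebra.adjoin ℚ
      ((AddMonoidAlgebra.gradeBy ℚ (reesDeg P) 1 : Submodule ℚ _) : Set _) := by
  induction i with
  | zero =>
    rintro ⟨⟨m, j⟩, hm⟩ (rfl : j = 0)
    have hm' : m.toMul ∈ P ^ 0 := hm
    rw [pow_zero] at hm'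
    have : (⟨⟨m, 0⟩, hm⟩ : reesMonoid P) = 0 := by
      apply Subtype.ext
      exact Prod.ext (show m = 0 from hm') rfl
    rw [this, ← AddMonoidAlgebra.one_def]
    exact one_mem _
  | succ i ih =>
    rintro ⟨⟨m, j⟩, hm⟩ (rfl : j = i + 1)
    have hm' : m.toMul ∈ P ^ (i + 1) := hm
    rw [pow_succ] at hm'
    obtain ⟨a, ha, b, hb, hab⟩ := hm'
    have : (⟨⟨m, i + 1⟩, hm⟩ : reesMonoid P) = ⟨(Additive.ofMul a, i), ha⟩ +
        ⟨(Additive.ofMul b, 1), by show b ∈ P ^ 1; rwa [pow_one]⟩ := by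
      apply Subtype.ext
      exact Prod.ext (show m = _ from hab.symm) rfl
    rw [this, ← mul_one (1 : ℚ), ← AddMonoidAlgebra.single_mul_single]
    refine mul_mem (ih _ rfl) (Algebra.subset_adjoin ?_)
    exact AddMonoidAlgebra.single_mem_gradeBy (reesDeg P) _ _

theorem IsGrowth.isHilbertPolynomial {f : Polynomial ℚ} (hf : IsGrowth f) :
    IsHilbertPolynomial f := by
  obtain ⟨M, _, P, hP, N, h⟩ := hf
  have hPi : ∀ i, (P ^ i).Finite := fun i => by
    induction i with
    | zero => simp
    | succ i ih => rw [pow_succ]; exact ih.mul hP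
  have key : ∀ i, Nonempty (AddMonoidAlgebra.gradeBy ℚ (reesDeg P) i ≃ₗ[ℚ] ((P ^ i : Set M) →₀ ℚ)) := by
    intro i
    have e : AddMonoidAlgebra.gradeBy ℚ (reesDeg P) i =
        AddMonoidAlgebra.supported ℚ ℚ (reesDeg P ⁻¹' {i}) := by
      ext a
      rw [AddMonoidAlgebra.mem_gradeBy_iff, AddMonoidAlgebra.mem_supported]
    exact ⟨(LinearEquiv.ofEq _ _ e).trans ((AddMonoidAlgebra.supportedEquivFinsupp _).trans
      (Finsupp.domLCongr (reesFiberEquiv P i)))⟩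
  refine ⟨ℚ, AddMonoidAlgebra ℚ (reesMonoid P), inferInstance, inferInstance, inferInstance,
    AddMonoidAlgebra.gradeBy ℚ (reesDeg P), inferInstance, ?_, ?_, N, ?_⟩
  · intro i
    obtain ⟨e⟩ := key i
    have := (hPi i).to_subtype
    exact Module.Finite.equiv e.symm
  · rw [eq_top_iff]
    rintro a -
    induction a using AddMonoidAlgebra.induction_linear with
    | zero => exact zero_mem _
    | add a b ha hb => exact add_mem ha hb
    | single x r =>
      have : AddMonoidAlgebra.single x r = r • AddMonoidAlgebra.single x (1 : ℚ) := by
        rw [AddMonoidAlgebra.smul_single, smul_eq_mul, mul_one]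
      rw [this]
      exact Subalgebra.smul_mem _ (single_mem_adjoin P _ x rfl) r
  · intro i hi
    obtain ⟨e⟩ := key i
    have := (hPi i).fintype
    rw [← h i hi, e.finrank_eq, Module.finrank_finsupp_self, Set.ncard_eq_toFinset_card',
      Set.toFinset_card]

/-- `binomPoly n x = (x+1)⋯(x+n)/n!`. -/
def binomPoly : ℕ → ℚ → ℚ
  | 0, _ => 1
  | n + 1, x => binomPoly n x * (x + (n + 1)) / (n + 1)

theorem binomPoly_nat (n i : ℕ) : binomPoly n i = ((i + n).choose n : ℚ) := by
  induction n with
  | zero => simp [binomPoly]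
  | succ n ih =>
    rw [binomPoly, ih]
    have h := Nat.add_one_mul_choose_eq (i + n) n
    have h' : ((i + n + 1 : ℕ) : ℚ) * ((i + n).choose n : ℚ) =
      ((i + n + 1).choose (n + 1) : ℚ) * ((n + 1 : ℕ) : ℚ) := by exact_mod_cast h
    rw [div_eq_iff (by positivity)]
    push_cast at h'
    rw [show i + (n + 1) = i + n + 1 from rfl]
    linear_combination h'

/-- Monomial data: a free graded monoid on `n + 1` generators with the complement `D` of a
monomial ideal whose Hilbert function is eventually `p`. -/
def MonData (n : ℕ) (p : ℚ → ℚ) : Prop :=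
  ∃ (T : Type) (_ : AddCommMonoid T) (deg : T →+ ℕ) (D : Set T),
    (∀ i, {t | deg t = i}.ncard = (i + n).choose n) ∧
    (∀ t, deg t = 0 → t = 0) ∧
    (∀ i t, deg t = i + 1 → ∃ s u, deg s = i ∧ deg u = 1 ∧ t = s + u) ∧
    (∀ s t, s ∉ D → s + t ∉ D) ∧
    ∃ N, ∀ i, N ≤ i → (∃ t, t ∉ D ∧ deg t = i) ∧ ({t | t ∈ D ∧ deg t = i}.ncard : ℚ) = p i

theorem MonData.zero : MonData 0 (fun _ => 0) := by
  refine ⟨ℕ, inferInstance, AddMonoidHom.id ℕ, ∅, ?_, ?_, ?_, ?_, 0, ?_⟩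
  · intro i; simp
  · intro t h; exact h
  · intro i t h; exact ⟨i, 1, rfl, rfl, h⟩
  · simp
  · intro i _; simp

theorem MonData.step {n : ℕ} {p : ℚ → ℚ} (h : MonData n p) (e : ℕ) :
    MonData (n + 1) (fun x => binomPoly (n + 1) x - binomPoly (n + 1) (x - e) + p (x - e)) := by
  obtain ⟨T, _, deg, D, h1, h2, h3, h4, N, h5⟩ := h
  have hfin : ∀ i, {t | deg t = i}.Finite := fun i => Set.finite_of_ncard_pos (by
    rw [h1]; exact Nat.choose_pos (by omega))
  let deg' : ℕ × T →+ ℕ := AddMonoidHom.coprod (AddMonoidHom.id ℕ) deg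
  have hdeg' : ∀ a t, deg' (a, t) = a + deg t := fun a t => rfl
  let D' : ℕ → Set (ℕ × T) := fun e => {x | x.1 < e ∨ x.1 = e ∧ x.2 ∈ D}
  have hinj0 : Function.Injective (fun t : T => ((0, t) : ℕ × T)) := fun a b h => by
    simpa using h
  have hinj1 : Function.Injective (fun t : ℕ × T => ((t.1 + 1, t.2) : ℕ × T)) := fun a b h => by
    simpa [Prod.ext_iff] using h
  -- general recursion
  have recStep : ∀ (A B : Set (ℕ × T)), B.Finite → ∀ i, A = (fun t : T => ((0, t) : ℕ × T)) '' {t | deg t = i} ∪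
      (fun t : ℕ × T => ((t.1 + 1, t.2) : ℕ × T)) '' B →
      A.ncard = (i + n).choose n + B.ncard ∧ A.Finite := by
    intro A B hB i hA
    constructor
    · rw [hA, Set.ncard_union_eq _ ((hfin i).image _) (hB.image _), Set.ncard_image_of_injective _ hinj0,
        Set.ncard_image_of_injective _ hinj1, h1]
      rw [Set.disjoint_left]
      rintro _ ⟨t, _, rfl⟩ ⟨u, _, hu⟩
      simp at hu
    · rw [hA]; exact ((hfin i).image _).union (hB.image _)
  have cnt : ∀ i, {x | deg' x = i}.ncard = (i + (n + 1)).choose (n + 1) ∧ {x | deg' x = i}.Finite := by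
    intro i
    induction i with
    | zero =>
      have := recStep {x | deg' x = 0} ∅ Set.finite_empty 0 (by
        ext ⟨a, t⟩
        simp only [Set.mem_ofPred_eq, hdeg', Set.image_empty, Set.union_empty, Set.mem_image,
          Prod.mk.injEq]
        constructor
        · intro h; exact ⟨t, by omega, by omega, rfl⟩
        · rintro ⟨u, hu, rfl, rfl⟩; omega)
      simpa using this
    | succ i ih =>
      have := recStep {x | deg' x = i + 1} _ ih.2 (i + 1) (by
        ext ⟨a, t⟩
        simp only [Set.mem_ofPred_eq, hdeg', Set.mem_union, Set.mem_image,
          Prod.mk.injEq, Prod.exists]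
        constructor
        · intro h
          rcases a with _ | a
          · left; exact ⟨t, by omega, rfl, rfl⟩
          · right; exact ⟨a, t, by omega, rfl, rfl⟩
        · rintro (⟨u, hu, rfl, rfl⟩ | ⟨b, u, hu, rfl, rfl⟩) <;> omega)
      refine ⟨?_, this.2⟩
      rw [this.1, ih.1]
      have := Nat.choose_succ_succ' (i + 1 + n) n
      rw [show i + 1 + (n + 1) = i + 1 + n + 1 by ring, this]
      congr 2; ring
  have cntD : ∀ e i, {x | x ∈ D' e ∧ deg' x = i + e}.ncard + (i + (n + 1)).choose (n + 1) =
      (i + e + (n + 1)).choose (n + 1) + {t | t ∈ D ∧ deg t = i}.ncard := by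
    intro e i
    induction e with
    | zero =>
      have : {x | x ∈ D' 0 ∧ deg' x = i + 0} = (fun t : T => ((0, t) : ℕ × T)) '' {t | t ∈ D ∧ deg t = i} := by
        ext ⟨a, t⟩
        simp only [Set.mem_ofPred_eq, hdeg', Set.mem_image, Prod.mk.injEq, D']
        constructor
        · rintro ⟨h | h, h'⟩
          · omega
          · exact ⟨t, ⟨h.2, by omega⟩, by omega, rfl⟩
        · rintro ⟨u, ⟨hu, hu'⟩, rfl, rfl⟩
          exact ⟨Or.inr ⟨rfl, hu⟩, by omega⟩
      rw [this, Set.ncard_image_of_injective _ hinj0, add_comm]; rfl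
    | succ e ih =>
      have := recStep {x | x ∈ D' (e + 1) ∧ deg' x = i + (e + 1)} {x | x ∈ D' e ∧ deg' x = i + e}
        ((cnt (i + e)).2.subset fun x hx => hx.2) (i + (e + 1)) (by
        ext ⟨a, t⟩
        simp only [Set.mem_ofPred_eq, hdeg', Set.mem_union, Set.mem_image,
          Prod.mk.injEq, Prod.exists, D']
        constructor
        · rintro ⟨h, h'⟩
          rcases a with _ | a
          · left; exact ⟨t, by omega, rfl, rfl⟩
          · right; exact ⟨a, t, ⟨by simpa using h, by omega⟩, rfl, rfl⟩
        · rintro (⟨u, hu, rfl, rfl⟩ | ⟨b, u, hu, rfl, rfl⟩)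
          · exact ⟨Or.inl (by omega), by omega⟩
          · exact ⟨by simpa using hu.1, by omega⟩)
      rw [this.1]
      have := Nat.choose_succ_succ' (i + (e + 1) + n) n
      rw [show i + (e + 1) + (n + 1) = i + (e + 1) + n + 1 by ring, this,
        show i + (e + 1) + n = i + e + (n + 1) by ring]
      omega
  refine ⟨ℕ × T, inferInstance, deg', D' e, fun i => (cnt i).1, ?_, ?_, ?_, N + e, ?_⟩
  · rintro ⟨a, t⟩ h
    rw [hdeg'] at h
    exact Prod.ext (by simp; omega) (h2 t (by omega))
  · rintro i ⟨a, t⟩ h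
    rw [hdeg'] at h
    rcases a with _ | a
    · obtain ⟨s, u, hs, hu, rfl⟩ := h3 i t (by omega)
      exact ⟨(0, s), (0, u), by rw [hdeg']; omega, by rw [hdeg']; omega, rfl⟩
    · refine ⟨(a, t), (1, 0), by rw [hdeg']; omega, by rw [hdeg', map_zero, add_zero], ?_⟩
      simp
  · rintro ⟨a, s⟩ ⟨b, t⟩ h
    simp only [D', Set.mem_ofPred_eq, Prod.mk_add_mk, not_or, not_and, not_lt] at h ⊢
    refine ⟨by omega, fun hb => ?_⟩
    exact h4 s t (h.2 (by omega))
  · intro i hi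
    obtain ⟨j, rfl⟩ : ∃ j, i = j + e := ⟨i - e, by omega⟩
    obtain ⟨⟨t, ht, htd⟩, hc⟩ := h5 j (by omega)
    refine ⟨⟨(e, t), ?_, ?_⟩, ?_⟩
    · simp [D', ht]
    · rw [hdeg', htd, add_comm]
    · have h := cntD e j
      have h' : (({x | x ∈ D' e ∧ deg' x = j + e}.ncard : ℕ) : ℚ) + ((j + (n + 1)).choose (n + 1) : ℚ) =
        ((j + e + (n + 1)).choose (n + 1) : ℚ) + ({t | t ∈ D ∧ deg t = j}.ncard : ℚ) := by
        exact_mod_cast h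
      rw [hc, ← binomPoly_nat, ← binomPoly_nat] at h'
      have hj : (((j + e : ℕ) : ℚ)) - e = j := by push_cast; ring
      simp only [hj]
      linear_combination h'

/-- The Rees congruence collapsing the complement of `D`. -/
def reesCon {T : Type} [AddCommMonoid T] (D : Set T) (h4 : ∀ s t, s ∉ D → s + t ∉ D) :
    Con (Multiplicative T) where
  r u v := u = v ∨ (u.toAdd ∉ D ∧ v.toAdd ∉ D)
  iseqv := ⟨fun _ => Or.inl rfl, by rintro u v (rfl | ⟨a, b⟩) <;> tauto, by
    rintro u v w (rfl | ⟨a, b⟩) (rfl | ⟨c, d⟩) <;> tauto⟩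
  mul' := by
    rintro u v w x (rfl | ⟨a, b⟩) (rfl | ⟨c, d⟩)
    · exact Or.inl rfl
    · right
      simp only [toAdd_mul]
      rw [add_comm, add_comm (u.toAdd)]
      exact ⟨h4 _ _ c, h4 _ _ d⟩
    · right
      exact ⟨h4 _ _ a, h4 _ _ b⟩
    · right
      exact ⟨h4 _ _ a, h4 _ _ b⟩

theorem MonData.isGrowth {n : ℕ} {p : ℚ → ℚ} (h : MonData n p) (f : Polynomial ℚ)
    (hf : ∀ x, f.eval x = p x + 1) : IsGrowth f := by
  obtain ⟨T, _, deg, D, h1, h2, h3, h4, N, h5⟩ := h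
  have hfin : ∀ i, {t | deg t = i}.Finite := fun i => Set.finite_of_ncard_pos (by
    rw [h1]; exact Nat.choose_pos (by omega))
  let c := reesCon D h4
  let q : T → c.Quotient := fun t => ((Multiplicative.ofAdd t : Multiplicative T) : c.Quotient)
  have hq : ∀ s t, q s = q t ↔ s = t ∨ (s ∉ D ∧ t ∉ D) := fun s t => c.eq
  have hqa : ∀ s t, q (s + t) = q s * q t := fun s t => rfl
  have hpow : ∀ i, (q '' {t | deg t = 1}) ^ i = q '' {t | deg t = i} := by
    intro i
    induction i with
    | zero =>
      rw [pow_zero]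
      ext x
      constructor
      · rintro rfl; exact ⟨0, map_zero deg, rfl⟩
      · rintro ⟨t, ht, rfl⟩
        rw [h2 t ht]; rfl
    | succ i ih =>
      rw [pow_succ, ih]
      ext x
      constructor
      · rintro ⟨_, ⟨s, hs, rfl⟩, _, ⟨t, ht, rfl⟩, rfl⟩
        refine ⟨s + t, ?_, rfl⟩
        simp only [Set.mem_ofPred_eq] at *
        rw [map_add, hs, ht]
      · rintro ⟨t, ht, rfl⟩
        obtain ⟨s, u, hs, hu, rfl⟩ := h3 i t ht
        exact ⟨_, ⟨s, hs, rfl⟩, _, ⟨u, hu, rfl⟩, rfl⟩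
  refine ⟨c.Quotient, inferInstance, q '' {t | deg t = 1}, (hfin 1).image _, N, fun i hi => ?_⟩
  obtain ⟨⟨z, hz, hzd⟩, hc⟩ := h5 i hi
  rw [hpow, hf, ← hc]
  have : q '' {t | deg t = i} = insert (q z) (q '' {t | t ∈ D ∧ deg t = i}) := by
    ext x
    constructor
    · rintro ⟨t, ht, rfl⟩
      by_cases htD : t ∈ D
      · exact Or.inr ⟨t, ⟨htD, ht⟩, rfl⟩
      · left; rw [hq]; exact Or.inr ⟨htD, hz⟩
    · rintro (rfl | ⟨t, ht, rfl⟩)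
      · exact ⟨z, hzd, rfl⟩
      · exact ⟨t, ht.2, rfl⟩
  rw [this, Set.ncard_insert_of_notMem _ (((hfin i).subset fun t ht => ht.2).image _),
    Set.ncard_image_of_injOn]
  · push_cast; rfl
  · intro s hs t ht hst
    rcases (hq s t).1 hst with h | h
    · exact h
    · exact absurd hs.1 h.1
  · rintro ⟨t, ht, htz⟩
    rcases (hq t z).1 htz with h | h
    · exact hz (h ▸ ht.1)
    · exact h.1 ht.1

theorem isGrowth_three : IsGrowth (X ^ 3) := by
  refine ((((MonData.zero.step 49).step 8).step 3).step 6).isGrowth _ fun x => ?_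
  simp only [binomPoly, eval_pow, eval_X]
  push_cast
  ring

theorem isGrowth_four : IsGrowth (X ^ 4) := by
  refine (((((MonData.zero.step 62430765807659005).step 353339790).step 26430).step 216).step
    24).isGrowth _ fun x => ?_
  simp only [binomPoly, eval_pow, eval_X]
  push_cast
  ring

theorem isGrowth_five : IsGrowth (X ^ 5) := by
  refine ((((((MonData.zero.step
    731259975844000893012336498626162930739291667456651069218).step
    38242907207585404542511767817).step 276560672805750).step 23513960).step 6780).step
    120).isGrowth _ fun x => ?_
  simp only [binomPoly, eval_pow, eval_X]
  push_cast
  ring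

theorem isGrowth_X_pow (d : ℕ) (hd : 3 ≤ d) : IsGrowth (X ^ d) := by
  induction d using Nat.strong_induction_on with
  | _ d ih =>
    rcases Nat.lt_or_ge d 6 with h | h
    · interval_cases d
      · exact isGrowth_three
      · exact isGrowth_four
      · exact isGrowth_five
    · have := (ih (d - 3) (by omega) (by omega)).mul isGrowth_three
      rwa [← pow_add, Nat.sub_add_cancel (by omega)] at this

theorem sign_patterns_stmt9 (d : ℕ) (hd : d = 0 ∨ 3 ≤ d) :
    IsHilbertPolynomial ((Polynomial.X : Polynomial ℚ) ^ d) := by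
  rcases hd with rfl | hd
  · rw [pow_zero]
    exact IsGrowth.one.isHilbertPolynomial
  · exact (isGrowth_X_pow d hd).isHilbertPolynomial
end
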